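/- arXiv:2604.20525 — 2 statements merged into one kernel-verified Lean document; each statement's English description precedes it below -/
import Mathlib

section
/- Let a₀ ∈ C_c^∞(ℝ²) be real-valued with supp a₀ ⊂ (−1/2, 1/2)², and for j ∈ ℤ² let a_j be the translate of a₀ by j. Let b₀ > 0. Then there exists a function r : (0,1) → [0,∞) with r(h) = O(h^∞) (i.e. for every N > 0 there is C_N with r(h) ≤ C_N h^N for all h ∈ (0,1)), depending only on a₀ and b₀ and not on Λ̃, such that for every finite set Λ̃ ⊂ ℤ², every μ₀ ≥ b₀, every δ with 0 < δ < b₀/2, and every h ∈ (0,1): if the spectrum of â_j does not meet the interval [μ₀ − (δ + r(h)), μ₀ + (δ + r(h))] for every j ∈ Λ̃, then the spectrum of A := Σ_{j ∈ Λ̃} â_j does not meet [μ₀ − δ, μ₀ + δ]. -/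
/-!
STATEMENT 4: With a₀ ∈ C_c^∞(ℝ²) real-valued, supp a₀ ⊂ (−1/2,1/2)², and
b₀ > 0, there exists r : (0,1) → [0,∞) with r(h) = O(h^∞), depending only on
a₀ and b₀ (not on Λ̃), such that for every finite Λ̃ ⊂ ℤ², μ₀ ≥ b₀,
0 < δ < b₀/2, h ∈ (0,1): if σ(â_j) ∩ [μ₀ ± (δ + r(h))] = ∅ for all j ∈ Λ̃,
then σ(Σ_{j∈Λ̃} â_j) ∩ [μ₀ ± δ] = ∅.
-/

open MeasureTheory Complex Real

noncomputable section

/-- The Hilbert space `L²(ℝ)` of complex-valued square-integrable functions. -/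
abbrev L2R := MeasureTheory.Lp ℂ 2 (MeasureTheory.volume : MeasureTheory.Measure ℝ)

/-- The semiclassical Weyl kernel of a symbol `a : ℝ² → ℝ` at parameter `h`. -/
def weylKernel (h : ℝ) (a : ℝ × ℝ → ℝ) (y y' : ℝ) : ℂ :=
  ((1 / (2 * Real.pi * h) : ℝ) : ℂ) *
    ∫ η : ℝ, Complex.exp (Complex.I * (((y - y') * η / h : ℝ) : ℂ)) *
      ((a ((y + y') / 2, η) : ℝ) : ℂ)

/-- `T` is the semiclassical Weyl quantization of the symbol `a` at parameter `h`. -/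
def IsWeylQuant (h : ℝ) (a : ℝ × ℝ → ℝ) (T : L2R →L[ℂ] L2R) : Prop :=
  ∀ u : L2R, (T u : ℝ → ℂ) =ᵐ[volume]
    fun y => ∫ y' : ℝ, weylKernel h a y y' * (u : ℝ → ℂ) y'

/-- The translate of a symbol by a lattice point `j ∈ ℤ²`. -/
def shiftSymbol (a : ℝ × ℝ → ℝ) (j : ℤ × ℤ) : ℝ × ℝ → ℝ :=
  fun p => a (p.1 - (j.1 : ℝ), p.2 - (j.2 : ℝ))

section AbstractPart

variable {H : Type*} [NormedAddCommGroup H] [InnerProductSpace ℂ H] [CompleteSpace H]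

lemma isUnit_of_selfAdjoint_below (S : H →L[ℂ] H) (hS : IsSelfAdjoint S) (c : ℝ) (hc : 0 < c)
    (hb : ∀ x, c * ‖x‖ ≤ ‖S x‖) : IsUnit S := by
  have h2 : IsUnit (S * S) := by
    have hc2 : (0 : NNReal) < ⟨c ^ 2, by positivity⟩ := by
      exact_mod_cast (by positivity : 0 < c ^ 2)
    refine ContinuousLinearMap.isUnit_of_forall_le_norm_inner_map _ hc2 ?_
    intro x
    have : inner ℂ ((S * S) x) x = inner ℂ (S x) (S x) := by
      have h := (ContinuousLinearMap.isSelfAdjoint_iff_isSymmetric.mp hS) (S x) x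
      simpa using h
    rw [this, inner_self_eq_norm_sq_to_K]
    have h3 := hb x
    have h4 : (c * ‖x‖) ^ 2 ≤ ‖S x‖ ^ 2 := by gcongr
    change ‖x‖ ^ 2 * c ^ 2 ≤ _
    simp only [norm_pow]
    simp
    nlinarith
  exact isUnit_mul_self_iff.mp h2

lemma below_of_gap (S : H →L[ℂ] H) (hS : IsSelfAdjoint S) (μ r : ℝ) (hr : 0 < r)
    (hgap : ∀ ν ∈ Set.Icc (μ - r) (μ + r), (ν : ℂ) ∉ spectrum ℂ S) (x : H) :
    r * ‖x‖ ≤ ‖S x - (μ : ℂ) • x‖ := by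
  have hsp : ∀ ν ∈ spectrum ℝ S, r ≤ |ν - μ| := by
    intro ν hν
    by_contra hlt
    push Not at hlt
    rw [abs_lt] at hlt
    refine hgap ν ⟨by linarith, by linarith⟩ ?_
    exact (spectrum.algebraMap_mem_iff ℂ).mpr hν
  have hne : ∀ ν ∈ spectrum ℝ S, ν - μ ≠ 0 := by
    intro ν hν h0
    have := hsp ν hν
    rw [h0] at this
    simp at this
    linarith
  have hc : ContinuousOn (fun ν : ℝ => (ν - μ)⁻¹) (spectrum ℝ S) :=
    ContinuousOn.inv₀ (by fun_prop) hne
  have hn : ‖cfc (fun ν : ℝ => (ν - μ)⁻¹) S‖ ≤ r⁻¹ := by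
    apply norm_cfc_le (by positivity)
    intro ν hν
    rw [norm_inv]
    exact inv_anti₀ hr (hsp ν hν)
  have hm : cfc (fun ν : ℝ => (ν - μ)⁻¹) S * cfc (fun ν : ℝ => ν - μ) S = 1 := by
    rw [← cfc_mul _ _ S hc (by fun_prop), ← cfc_one ℝ S]
    apply cfc_congr
    intro ν hν
    exact inv_mul_cancel₀ (hne ν hν)
  have hd : cfc (fun ν : ℝ => ν - μ) S = S - algebraMap ℝ _ μ := by
    rw [cfc_sub (fun ν : ℝ => ν) (fun _ => μ) S, cfc_id' ℝ S, cfc_const μ S]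
  have hx : cfc (fun ν : ℝ => (ν - μ)⁻¹) S (S x - (μ : ℂ) • x) = x := by
    have h1 := congrArg (fun L : H →L[ℂ] H => L x) hm
    rw [hd] at h1
    simpa [ContinuousLinearMap.algebraMap_apply] using h1
  have h5 : ‖x‖ ≤ r⁻¹ * ‖S x - (μ : ℂ) • x‖ := by
    calc ‖x‖ = ‖cfc (fun ν : ℝ => (ν - μ)⁻¹) S (S x - (μ : ℂ) • x)‖ := by rw [hx]
      _ ≤ _ := ContinuousLinearMap.le_of_opNorm_le _ hn _
  rw [inv_mul_eq_div, le_div_iff₀ hr] at h5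
  linarith

def sgnSqrt (x : ℝ) : ℝ := √(max x 0) - √(max (-x) 0)

lemma continuous_sgnSqrt : Continuous sgnSqrt := by
  unfold sgnSqrt
  fun_prop

lemma sgnSqrt_mul (x : ℝ) : sgnSqrt x * √|x| = x := by
  unfold sgnSqrt
  rcases le_total 0 x with h | h
  · rw [max_eq_left h, max_eq_right (by linarith), abs_of_nonneg h]
    simp [Real.mul_self_sqrt h]
  · rw [max_eq_right h, max_eq_left (by linarith), abs_of_nonpos h]
    simp [Real.mul_self_sqrt (neg_nonneg.mpr h)]

lemma sgnSqrt_sq (x : ℝ) : sgnSqrt x * sgnSqrt x = |x| := by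
  unfold sgnSqrt
  rcases le_total 0 x with h | h
  · rw [max_eq_left h, max_eq_right (by linarith), abs_of_nonneg h]
    simp [Real.mul_self_sqrt h]
  · rw [max_eq_right h, max_eq_left (by linarith), abs_of_nonpos h]
    simp [Real.mul_self_sqrt (neg_nonneg.mpr h)]

lemma norm_abs_mul (S X : H →L[ℂ] H) (hS : IsSelfAdjoint S) :
    ‖cfc (fun x : ℝ => |x|) S * X‖ = ‖S * X‖ := by
  have hP : IsSelfAdjoint (cfc (fun x : ℝ => |x|) S) := cfc_predicate _ S
  have h1 : cfc (fun x : ℝ => |x|) S * cfc (fun x : ℝ => |x|) S = S * S := by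
    rw [← cfc_mul (fun x : ℝ => |x|) (fun x : ℝ => |x|) S]
    conv_rhs => rw [← cfc_id' ℝ S]
    rw [← cfc_mul (fun x : ℝ => x) (fun x : ℝ => x) S]
    simp
  have h2 : star (cfc (fun x : ℝ => |x|) S * X) * (cfc (fun x : ℝ => |x|) S * X)
      = star (S * X) * (S * X) := by
    rw [star_mul, star_mul, hP.star_eq, hS.star_eq, mul_assoc, ← mul_assoc _ _ X, h1]
    simp only [mul_assoc]
  have h3 := congrArg norm h2
  rw [CStarRing.norm_star_mul_self, CStarRing.norm_star_mul_self] at h3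
  exact (mul_self_inj (norm_nonneg _) (norm_nonneg _)).mp h3

lemma norm_root_mul (S T : H →L[ℂ] H) (hS : IsSelfAdjoint S) (hT : IsSelfAdjoint T) :
    ‖cfc sgnSqrt S * cfc (fun x : ℝ => √|x|) T‖ ≤ √‖S * T‖ := by
  have cs := continuous_sgnSqrt
  rcases subsingleton_or_nontrivial H with hs | hn
  · have : cfc sgnSqrt S * cfc (fun x : ℝ => √|x|) T = 0 := Subsingleton.elim _ _
    rw [this]; simp
  set C := cfc sgnSqrt S with hC
  set B := cfc (fun x : ℝ => √|x|) T with hB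
  have hCs : IsSelfAdjoint C := cfc_predicate _ S
  have hBs : IsSelfAdjoint B := cfc_predicate _ T
  apply Real.le_sqrt_of_sq_le
  have e1 : star (C * B) * (C * B) = B * (cfc (fun x : ℝ => |x|) S * B) := by
    have : C * C = cfc (fun x : ℝ => |x|) S := by
      rw [hC, ← cfc_mul sgnSqrt sgnSqrt S cs.continuousOn cs.continuousOn]
      simp [sgnSqrt_sq]
    rw [star_mul, hCs.star_eq, hBs.star_eq, mul_assoc, ← mul_assoc C, this]
  have e2 : cfc (fun x : ℝ => |x|) S * B * B =
      cfc (fun x : ℝ => |x|) S * cfc (fun x : ℝ => |x|) T := by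
    rw [mul_assoc, hB, ← cfc_mul (fun x : ℝ => √|x|) (fun x : ℝ => √|x|) T]
    simp
  have e3 : ‖cfc (fun x : ℝ => |x|) S * cfc (fun x : ℝ => |x|) T‖ = ‖S * T‖ := by
    rw [norm_abs_mul S _ hS]
    have hP : IsSelfAdjoint (cfc (fun x : ℝ => |x|) T) := cfc_predicate _ T
    rw [← norm_star, star_mul, hP.star_eq, hS.star_eq, norm_abs_mul T _ hT, ← norm_star,
      star_mul, hS.star_eq, hT.star_eq]
  rw [sq, ← CStarRing.norm_star_mul_self]
  have hsa : IsSelfAdjoint (star (C * B) * (C * B)) := IsSelfAdjoint.star_mul_self _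
  have key : spectralRadius ℂ (star (C * B) * (C * B)) ≤ ‖S * T‖₊ := by
    rw [e1]
    refine iSup₂_le ?_
    intro k hk
    by_cases hk0 : k = 0
    · simp [hk0]
    have hk' : k ∈ spectrum ℂ (B * (cfc (fun x : ℝ => |x|) S * B)) \ {0} := ⟨hk, hk0⟩
    rw [spectrum.nonzero_mul_comm, e2] at hk'
    have := spectrum.norm_le_norm_of_mem hk'.1
    rw [e3] at this
    exact_mod_cast this
  rw [hsa.spectralRadius_eq_nnnorm] at key
  exact_mod_cast key

theorem abstract_gap {ι : Type*} [DecidableEq ι] (Λ : Finset ι) (T : ι → H →L[ℂ] H)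
    (hT : ∀ j, IsSelfAdjoint (T j)) (κ r μ : ℝ) (hκ0 : 0 ≤ κ) (hκ : κ < r) (hμ : 0 < μ)
    (hS : ∀ j ∈ Λ, ∑ k ∈ Λ.erase j, √‖T j * T k‖ ≤ κ)
    (hgap : ∀ j ∈ Λ, ∀ ν ∈ Set.Icc (μ - r) (μ + r), (ν : ℂ) ∉ spectrum ℂ (T j)) :
    (μ : ℂ) ∉ spectrum ℂ (∑ j ∈ Λ, T j) := by
  have cs := continuous_sgnSqrt
  set A := ∑ j ∈ Λ, T j with hA
  set C : ι → H →L[ℂ] H := fun j => cfc sgnSqrt (T j) with hC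
  set B : ι → H →L[ℂ] H := fun j => cfc (fun x : ℝ => √|x|) (T j) with hB
  have hCB : ∀ j, C j * B j = T j := by
    intro j
    have hj := hT j
    simp only [hC, hB]
    rw [← cfc_mul sgnSqrt (fun x : ℝ => √|x|) (T j) cs.continuousOn (by fun_prop)]
    simp only [sgnSqrt_mul]
    exact cfc_id' ℝ (T j)
  have hBC : ∀ j, B j * C j = T j := by
    intro j
    have hj := hT j
    simp only [hC, hB]
    rw [← cfc_mul (fun x : ℝ => √|x|) sgnSqrt (T j) (by fun_prop) cs.continuousOn]
    simp only [mul_comm (√|_|), sgnSqrt_mul]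
    exact cfc_id' ℝ (T j)
  have hAsa : IsSelfAdjoint A := by
    rw [hA]
    exact isSelfAdjoint_sum Λ (fun j _ => hT j)
  set c := ∑ j ∈ Λ, ‖C j‖ with hc
  set b := ∑ j ∈ Λ, ‖B j‖ with hb
  have hc0 : 0 ≤ c := Finset.sum_nonneg fun _ _ => norm_nonneg _
  have hb0 : 0 ≤ b := Finset.sum_nonneg fun _ _ => norm_nonneg _
  -- the bound on components
  have hw : ∀ u : H, ∀ j ∈ Λ, ‖C j u‖ ≤ c / (r - κ) * ‖A u - (μ : ℂ) • u‖ := by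
    intro u j hj
    obtain ⟨m, hm, hmax⟩ := Finset.exists_max_image Λ (fun j => ‖C j u‖) ⟨j, hj⟩
    refine (hmax j hj).trans ?_
    have h1 := below_of_gap (T m) (hT m) μ r (by linarith) (hgap m hm) (C m u)
    have h2 : T m (C m u) - (μ : ℂ) • C m u =
        C m (A u - (μ : ℂ) • u) - ∑ k ∈ Λ.erase m, (C m * B k) (C k u) := by
      have : A u = B m (C m u) + ∑ k ∈ Λ.erase m, B k (C k u) := by
        rw [Finset.add_sum_erase Λ (fun k => B k (C k u)) hm, hA]
        rw [sum_apply]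
        refine Finset.sum_congr rfl fun k _ => ?_
        rw [← hBC k]; rfl
      rw [this, ← hCB m]
      simp only [map_sub, map_add, map_sum, map_smul, mul_apply_eq_comp]
      abel
    have h3 : ‖∑ k ∈ Λ.erase m, (C m * B k) (C k u)‖ ≤ κ * ‖C m u‖ := by
      calc _ ≤ ∑ k ∈ Λ.erase m, ‖(C m * B k) (C k u)‖ := norm_sum_le _ _
        _ ≤ ∑ k ∈ Λ.erase m, √‖T m * T k‖ * ‖C m u‖ := by
            refine Finset.sum_le_sum fun k hk => ?_
            refine (ContinuousLinearMap.le_of_opNorm_le _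
              (norm_root_mul (T m) (T k) (hT m) (hT k)) _).trans ?_
            gcongr
            exact hmax k (Finset.mem_of_mem_erase hk)
        _ = (∑ k ∈ Λ.erase m, √‖T m * T k‖) * ‖C m u‖ := by rw [Finset.sum_mul]
        _ ≤ _ := by gcongr; exact hS m hm
    have h4 : ‖C m (A u - (μ : ℂ) • u)‖ ≤ c * ‖A u - (μ : ℂ) • u‖ := by
      refine ContinuousLinearMap.le_of_opNorm_le _ ?_ _
      exact Finset.single_le_sum (f := fun j => ‖C j‖) (fun _ _ => norm_nonneg _) hm
    rw [h2] at h1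
    have h5 := norm_sub_le (C m (A u - (μ : ℂ) • u)) (∑ k ∈ Λ.erase m, (C m * B k) (C k u))
    rw [div_mul_eq_mul_div, le_div_iff₀ (by linarith)]
    nlinarith
  have hu : ∀ u : H, μ * ‖u‖ ≤ (1 + b * (c / (r - κ))) * ‖A u - (μ : ℂ) • u‖ := by
    intro u
    have h1 : A u = ∑ k ∈ Λ, B k (C k u) := by
      rw [hA, sum_apply]
      refine Finset.sum_congr rfl fun k _ => ?_
      rw [← hBC k]; rfl
    have h2 : ‖A u‖ ≤ b * (c / (r - κ) * ‖A u - (μ : ℂ) • u‖) := by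
      calc ‖A u‖ = ‖∑ k ∈ Λ, B k (C k u)‖ := by rw [h1]
        _ ≤ ∑ k ∈ Λ, ‖B k (C k u)‖ := norm_sum_le _ _
        _ ≤ ∑ k ∈ Λ, ‖B k‖ * (c / (r - κ) * ‖A u - (μ : ℂ) • u‖) := by
            refine Finset.sum_le_sum fun k hk => ?_
            exact ((B k).le_opNorm _).trans (by gcongr; exact hw u k hk)
        _ = _ := by rw [hb, Finset.sum_mul]
    have h3 : ‖(μ : ℂ) • u‖ = μ * ‖u‖ := by
      rw [norm_smul, Complex.norm_real, Real.norm_of_nonneg hμ.le]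
    have h4 : ‖(μ : ℂ) • u‖ ≤ ‖A u‖ + ‖A u - (μ : ℂ) • u‖ := by
      have := norm_sub_le (A u) (A u - (μ : ℂ) • u)
      simpa using this
    rw [h3] at h4
    nlinarith
  set K := 1 + b * (c / (r - κ)) with hK
  have hKpos : 0 < K := by
    have : 0 ≤ c / (r - κ) := div_nonneg hc0 (by linarith)
    positivity
  rw [spectrum.notMem_iff]
  have hsub : algebraMap ℂ (H →L[ℂ] H) (μ : ℂ) - A = -(A - algebraMap ℂ (H →L[ℂ] H) (μ : ℂ)) := by
    abel
  rw [hsub, IsUnit.neg_iff]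
  refine isUnit_of_selfAdjoint_below _ ?_ (μ / K) (by positivity) ?_
  · refine hAsa.sub ?_
    rw [isSelfAdjoint_iff, ← algebraMap_star_comm]
    simp
  · intro u
    have := hu u
    simp only [sub_apply, ContinuousLinearMap.algebraMap_apply]
    rw [div_mul_eq_mul_div, div_le_iff₀ hKpos]
    linarith

end AbstractPart

lemma osc_bound {E : Type*} [NormedAddCommGroup E] [NormedSpace ℝ E] (M : ℕ) :
    ∀ Φ : ℝ × E → ℝ, ContDiff ℝ (⊤ : ℕ∞) Φ → HasCompactSupport Φ →
    ∃ C : ℝ, ∀ (e : E) (ω : ℝ),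
      |ω| ^ M * ‖∫ s : ℝ, Complex.exp (Complex.I * ((ω * s : ℝ) : ℂ)) * ((Φ (s, e) : ℝ) : ℂ)‖ ≤ C := by
  induction M with
  | zero =>
    intro Φ hΦ hc
    obtain ⟨D, hD⟩ := hc.exists_bound_of_continuous hΦ.continuous
    obtain ⟨R, hR⟩ := hc.isCompact.isBounded.subset_closedBall 0
    have h0 : ∀ s e, ‖Φ (s, e)‖ ≤ (Set.Icc (-R) R).indicator (fun _ => D) s := by
      intro s e
      by_cases hs : s ∈ Set.Icc (-R) R
      · rw [Set.indicator_of_mem hs]; exact hD _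
      · rw [Set.indicator_of_notMem hs]
        have : Φ (s, e) = 0 := by
          by_contra hne
          have := hR (subset_tsupport Φ hne)
          rw [mem_closedBall_zero_iff, Prod.norm_def] at this
          have h1 : |s| ≤ R := (le_max_left _ _).trans this
          exact hs (abs_le.mp h1)
        simp [this]
    refine ⟨∫ s, (Set.Icc (-R) R).indicator (fun _ => D) s, fun e ω => ?_⟩
    rw [pow_zero, one_mul]
    apply norm_integral_le_of_norm_le
    · exact (integrable_indicator_iff measurableSet_Icc).mpr (by simp)
    · refine Filter.Eventually.of_forall fun s => ?_
      rw [norm_mul, mul_comm Complex.I, Complex.norm_exp_ofReal_mul_I, one_mul, Complex.norm_real]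
      exact h0 s e
  | succ M ih =>
    intro Φ hΦ hc
    have hΦ' : ContDiff ℝ (⊤ : ℕ∞) (fun p => fderiv ℝ Φ p (1, 0)) :=
      (hΦ.fderiv_right (by simp)).clm_apply contDiff_const
    obtain ⟨C, hC⟩ := ih (fun p => fderiv ℝ Φ p (1, 0)) hΦ' (hc.fderiv_apply ℝ (1, 0))
    refine ⟨C, fun e ω => ?_⟩
    refine le_trans (le_of_eq ?_) (hC e ω)
    rw [pow_succ, mul_assoc]
    congr 1
    have hcs : ∀ Ψ : ℝ × E → ℝ, Continuous Ψ → HasCompactSupport Ψ →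
        Integrable (fun s : ℝ => Complex.exp (Complex.I * ((ω * s : ℝ) : ℂ)) * ((Ψ (s, e) : ℝ) : ℂ)) := by
      intro Ψ hΨ hΨc
      apply Continuous.integrable_of_hasCompactSupport
      · fun_prop
      · obtain ⟨R, hR⟩ := hΨc.isCompact.isBounded.subset_closedBall 0
        refine HasCompactSupport.intro (isCompact_Icc (a := -R) (b := R)) ?_
        intro s hs
        have : Ψ (s, e) = 0 := by
          by_contra hne
          have := hR (subset_tsupport Ψ hne)
          rw [mem_closedBall_zero_iff, Prod.norm_def] at this
          have h1 : |s| ≤ R := (le_max_left _ _).trans this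
          exact hs (abs_le.mp h1)
        simp [this]
    have hd : ∀ s, HasDerivAt (fun s : ℝ => ((Φ (s, e) : ℝ) : ℂ)) ((fderiv ℝ Φ (s, e) (1, 0) : ℝ) : ℂ) s := by
      intro s
      have h1 : HasFDerivAt Φ (fderiv ℝ Φ (s, e)) (s, e) :=
        (hΦ.differentiable (by simp) _).hasFDerivAt
      have h2 : HasDerivAt (fun s : ℝ => (s, e)) ((1 : ℝ), (0 : E)) s :=
        (hasDerivAt_id s).prodMk (hasDerivAt_const s e)
      exact (h1.comp_hasDerivAt s h2).ofReal_comp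
    have hexp : ∀ s, HasDerivAt (fun s : ℝ => Complex.exp (Complex.I * ((ω * s : ℝ) : ℂ)))
        (Complex.exp (Complex.I * ((ω * s : ℝ) : ℂ)) * (Complex.I * ω)) s := by
      intro s
      have h1 : HasDerivAt (fun s : ℝ => ω * s) ω s := by
        simpa using (hasDerivAt_id s).const_mul ω
      exact (h1.ofReal_comp.const_mul Complex.I).cexp
    have hint := integral_mul_deriv_eq_deriv_mul_of_integrable (A := ℂ)
      (u := fun s : ℝ => Complex.exp (Complex.I * ((ω * s : ℝ) : ℂ)))
      (v := fun s : ℝ => ((Φ (s, e) : ℝ) : ℂ))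
      (u' := fun s => Complex.exp (Complex.I * ((ω * s : ℝ) : ℂ)) * (Complex.I * ω))
      (v' := fun s => ((fderiv ℝ Φ (s, e) (1, 0) : ℝ) : ℂ))
      (fun s _ => hexp s) (fun s _ => hd s) ?_ ?_ ?_
    · rw [hint, norm_neg]
      have : (fun s : ℝ => Complex.exp (Complex.I * ((ω * s : ℝ) : ℂ)) * (Complex.I * ω) * ((Φ (s, e) : ℝ) : ℂ))
          = fun s : ℝ => (Complex.I * ω) * (Complex.exp (Complex.I * ((ω * s : ℝ) : ℂ)) * ((Φ (s, e) : ℝ) : ℂ)) := by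
        ext s; ring
      rw [this, integral_const_mul, norm_mul, norm_mul]
      simp
    · exact hcs _ hΦ'.continuous (hc.fderiv_apply ℝ (1, 0))
    · have := (hcs _ hΦ.continuous hc).const_mul (Complex.I * ω)
      refine this.congr (Filter.Eventually.of_forall fun s => ?_)
      simp; ring
    · exact hcs _ hΦ.continuous hc

def vv (s : ℝ) : ℝ := (1 + |s|)⁻¹

lemma vv_pos (s : ℝ) : 0 < vv s := by unfold vv; positivity

lemma vv_le_one (s : ℝ) : vv s ≤ 1 := by
  unfold vv
  exact inv_le_one_of_one_le₀ (by linarith [abs_nonneg s])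

lemma continuous_vv : Continuous vv := by
  unfold vv
  exact Continuous.inv₀ (by fun_prop) (fun s => by positivity)

lemma integrable_vv_sq : Integrable (fun s => vv s ^ 2) := by
  refine integrable_inv_one_add_sq.mono' (continuous_vv.pow 2).aestronglyMeasurable ?_
  refine Filter.Eventually.of_forall fun s => ?_
  rw [Real.norm_of_nonneg (by positivity)]
  unfold vv
  rw [inv_pow]
  apply inv_anti₀ (by positivity)
  nlinarith [abs_nonneg s, sq_abs s]

lemma integrable_vv_sq_shift (c : ℝ) : Integrable (fun s => vv (s - c) ^ 2) :=
  integrable_vv_sq.comp_sub_right c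

def VV : ℝ := ∫ s, vv s ^ 2

lemma VV_nonneg : 0 ≤ VV := integral_nonneg fun s => by positivity

lemma integral_vv_shift (c : ℝ) : ∫ s, vv (s - c) ^ 2 = VV :=
  integral_sub_right_eq_self (fun s => vv s ^ 2) c

lemma memLp_vv (c : ℝ) : MemLp (fun s => vv (s - c)) 2 volume := by
  have hc : Continuous (fun s => vv (s - c)) := continuous_vv.comp (by fun_prop)
  exact (memLp_two_iff_integrable_sq hc.aestronglyMeasurable).mpr (integrable_vv_sq_shift c)

lemma norm_vv (c : ℝ) : ‖(memLp_vv c).toLp‖ = √VV := by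
  have h : ‖(memLp_vv c).toLp‖ ^ 2 = VV := by
    rw [← real_inner_self_eq_norm_sq, L2.inner_def, ← integral_vv_shift c]
    apply integral_congr_ae
    filter_upwards [(memLp_vv c).coeFn_toLp] with s hs
    rw [hs]
    simp
  rw [← h, Real.sqrt_sq (norm_nonneg _)]

lemma integrable_vv_mul (c : ℝ) (u : L2R) : Integrable (fun s => vv (s - c) * ‖u s‖) :=
  (memLp_vv c).integrable_mul (Lp.memLp u).norm

lemma integral_vv_mul_le (c : ℝ) (u : L2R) : ∫ s, vv (s - c) * ‖u s‖ ≤ √VV * ‖u‖ := by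
  have h1 := real_inner_le_norm (memLp_vv c).toLp (Lp.memLp u).norm.toLp
  rw [norm_vv] at h1
  have h2 : ‖(Lp.memLp u).norm.toLp‖ = ‖u‖ := by
    rw [Lp.norm_toLp, eLpNorm_norm, Lp.norm_def]
  rw [h2] at h1
  refine le_trans (le_of_eq ?_) h1
  rw [L2.inner_def]
  apply integral_congr_ae
  filter_upwards [(memLp_vv c).coeFn_toLp, (Lp.memLp u).norm.coeFn_toLp] with s hs hs2
  rw [hs, hs2]
  simp [mul_comm]

/-- An operator with a rank-one dominated kernel is bounded. -/
lemma opNorm_le_of_kernel (S : L2R →L[ℂ] L2R) (K : ℝ → ℝ → ℂ) (c d D : ℝ) (hD : 0 ≤ D)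
    (hK : ∀ y z, ‖K y z‖ ≤ D * (vv (y - c) * vv (z - d)))
    (hS : ∀ u : L2R, (S u : ℝ → ℂ) =ᵐ[volume] fun y => ∫ z, K y z * (u : ℝ → ℂ) z) :
    ‖S‖ ≤ D * VV := by
  refine ContinuousLinearMap.opNorm_le_bound _ (mul_nonneg hD VV_nonneg) fun u => ?_
  have h1 : ‖S u‖ ≤ (D * (√VV * ‖u‖)) * ‖(memLp_vv c).toLp‖ := by
    apply Lp.norm_le_mul_norm_of_ae_le_mul
    filter_upwards [hS u, (memLp_vv c).coeFn_toLp] with y hy hv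
    rw [hy, hv, Real.norm_of_nonneg (vv_pos _).le]
    calc ‖∫ z, K y z * (u : ℝ → ℂ) z‖ ≤ ∫ z, (D * vv (y - c)) * (vv (z - d) * ‖u z‖) := by
          apply norm_integral_le_of_norm_le
          · exact (integrable_vv_mul d u).const_mul _
          · refine Filter.Eventually.of_forall fun z => ?_
            rw [norm_mul]
            calc _ ≤ D * (vv (y - c) * vv (z - d)) * ‖u z‖ := by gcongr; exact hK y z
              _ = _ := by ring
      _ = (D * vv (y - c)) * ∫ z, (vv (z - d) * ‖u z‖) := integral_const_mul _ _
      _ ≤ (D * vv (y - c)) * (√VV * ‖u‖) := by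
          have := vv_pos (y - c)
          gcongr
          exact integral_vv_mul_le d u
      _ = _ := by ring
  rw [norm_vv] at h1
  calc _ ≤ _ := h1
    _ = D * (√VV * √VV) * ‖u‖ := by ring
    _ = _ := by rw [Real.mul_self_sqrt VV_nonneg]

lemma stronglyMeasurable_weylKernel (h : ℝ) (a : ℝ × ℝ → ℝ) (ha : Continuous a) :
    StronglyMeasurable (fun p : ℝ × ℝ => weylKernel h a p.1 p.2) := by
  unfold weylKernel
  apply StronglyMeasurable.const_mul
  apply StronglyMeasurable.integral_prod_right
    (f := fun (p : ℝ × ℝ) (η : ℝ) => Complex.exp (Complex.I * (((p.1 - p.2) * η / h : ℝ) : ℂ)) *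
      ((a ((p.1 + p.2) / 2, η) : ℝ) : ℂ))
  apply Continuous.stronglyMeasurable
  simp only [Function.uncurry_def]
  fun_prop

lemma weylKernel_conj (h : ℝ) (a : ℝ × ℝ → ℝ) (y y' : ℝ) :
    starRingEnd ℂ (weylKernel h a y y') = weylKernel h a y' y := by
  unfold weylKernel
  rw [map_mul, Complex.conj_ofReal, ← integral_conj]
  congr 2
  ext η
  rw [map_mul, Complex.conj_ofReal, ← Complex.exp_conj, map_mul, Complex.conj_I,
    Complex.conj_ofReal, add_comm y' y]
  congr 2
  push_cast
  ring

lemma selfAdjoint_of_kernel (h : ℝ) (a : ℝ × ℝ → ℝ) (ha : Continuous a) (T : L2R →L[ℂ] L2R)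
    (hT : IsWeylQuant h a T) (c D : ℝ)
    (hK : ∀ y z, ‖weylKernel h a y z‖ ≤ D * (vv (y - c) * vv (z - c))) :
    IsSelfAdjoint T := by
  rw [ContinuousLinearMap.isSelfAdjoint_iff_isSymmetric]
  intro u w
  change inner ℂ (T u) w = inner ℂ u (T w)
  rw [L2.inner_def, L2.inner_def]
  have e1 : ∫ y, inner ℂ ((T u : ℝ → ℂ) y) ((w : ℝ → ℂ) y) =
      ∫ y, ∫ z, weylKernel h a z y * starRingEnd ℂ ((u : ℝ → ℂ) z) * (w : ℝ → ℂ) y := by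
    apply integral_congr_ae
    filter_upwards [hT u] with y hy
    rw [hy, RCLike.inner_apply, ← integral_conj, mul_comm, ← integral_mul_const]
    congr 1
    ext z
    rw [map_mul, weylKernel_conj]
  have e2 : ∫ y, inner ℂ ((u : ℝ → ℂ) y) ((T w : ℝ → ℂ) y) =
      ∫ z, ∫ y, weylKernel h a z y * starRingEnd ℂ ((u : ℝ → ℂ) z) * (w : ℝ → ℂ) y := by
    apply integral_congr_ae
    filter_upwards [hT w] with z hz
    rw [hz, RCLike.inner_apply, ← integral_mul_const]
    congr 1
    ext y
    ring
  rw [e1, e2]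
  apply integral_integral_swap
  have hu := Lp.stronglyMeasurable u
  have hw := Lp.stronglyMeasurable w
  have hm := stronglyMeasurable_weylKernel h a ha
  have hdom : Integrable (fun p : ℝ × ℝ => D * ((vv (p.1 - c) * ‖w p.1‖) * (vv (p.2 - c) * ‖u p.2‖)))
      (volume.prod volume) :=
    ((integrable_vv_mul c w).mul_prod (integrable_vv_mul c u)).const_mul D
  refine hdom.mono' ?_ ?_
  · apply StronglyMeasurable.aestronglyMeasurable
    have s1 : StronglyMeasurable (fun p : ℝ × ℝ => weylKernel h a p.2 p.1) :=
      hm.comp_measurable (g := fun p : ℝ × ℝ => (p.2, p.1)) (by fun_prop)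
    have s2 : StronglyMeasurable (fun p : ℝ × ℝ => starRingEnd ℂ ((u : ℝ → ℂ) p.2)) :=
      Complex.continuous_conj.comp_stronglyMeasurable
        (hu.comp_measurable (g := fun p : ℝ × ℝ => p.2) (by fun_prop))
    have s3 : StronglyMeasurable (fun p : ℝ × ℝ => (w : ℝ → ℂ) p.1) :=
      hw.comp_measurable (g := fun p : ℝ × ℝ => p.1) (by fun_prop)
    exact (s1.mul s2).mul s3
  · refine Filter.Eventually.of_forall fun p => ?_
    simp only [Function.uncurry_def]
    rw [norm_mul, norm_mul, RCLike.norm_conj]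
    calc _ ≤ D * (vv (p.2 - c) * vv (p.1 - c)) * ‖u p.2‖ * ‖w p.1‖ := by
          gcongr; exact hK _ _
      _ = _ := by ring

/-- Composition of kernels. -/
lemma comp_kernel (h : ℝ) (a b : ℝ × ℝ → ℝ) (ha : Continuous a) (hb : Continuous b)
    (S T : L2R →L[ℂ] L2R)
    (hS : IsWeylQuant h a S) (hT : IsWeylQuant h b T) (c d D : ℝ)
    (hKa : ∀ y z, ‖weylKernel h a y z‖ ≤ D * (vv (y - c) * vv (z - c)))
    (hKb : ∀ y z, ‖weylKernel h b y z‖ ≤ D * (vv (y - d) * vv (z - d))) (u : L2R) :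
    ((S * T) u : ℝ → ℂ) =ᵐ[volume]
      fun y => ∫ z, (∫ x, weylKernel h a y x * weylKernel h b x z) * (u : ℝ → ℂ) z := by
  have hma := stronglyMeasurable_weylKernel h a ha
  have hmb := stronglyMeasurable_weylKernel h b hb
  have hu := Lp.stronglyMeasurable u
  have hD : 0 ≤ D := by
    have h1 := (norm_nonneg _).trans (hKa 0 0)
    exact nonneg_of_mul_nonneg_left h1 (mul_pos (vv_pos _) (vv_pos _))
  filter_upwards [hS (T u)] with y hy
  change (S (T u) : ℝ → ℂ) y = _
  rw [hy]
  have e1 : ∫ x, weylKernel h a y x * (T u : ℝ → ℂ) x =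
      ∫ x, ∫ z, weylKernel h a y x * weylKernel h b x z * (u : ℝ → ℂ) z := by
    apply integral_congr_ae
    filter_upwards [hT u] with x hx
    rw [hx, ← integral_const_mul]
    congr 1
    ext z
    ring
  rw [e1, integral_integral_swap]
  · congr 1
    ext z
    rw [integral_mul_const]
  have hvv : Integrable (fun x => vv (x - c) * vv (x - d)) :=
    (memLp_vv c).integrable_mul (memLp_vv d)
  have hdom : Integrable (fun p : ℝ × ℝ => D * D * ((vv (p.1 - c) * vv (p.1 - d)) * (vv (p.2 - d) * ‖u p.2‖)))
      (volume.prod volume) :=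
    (hvv.mul_prod (integrable_vv_mul d u)).const_mul (D * D)
  refine hdom.mono' ?_ ?_
  · apply StronglyMeasurable.aestronglyMeasurable
    have s1 : StronglyMeasurable (fun p : ℝ × ℝ => weylKernel h a y p.1) :=
      hma.comp_measurable (g := fun p : ℝ × ℝ => (y, p.1)) (by fun_prop)
    have s3 : StronglyMeasurable (fun p : ℝ × ℝ => (u : ℝ → ℂ) p.2) :=
      hu.comp_measurable (g := fun p : ℝ × ℝ => p.2) (by fun_prop)
    exact (s1.mul hmb).mul s3
  · refine Filter.Eventually.of_forall fun p => ?_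
    simp only [Function.uncurry_def]
    rw [norm_mul, norm_mul]
    have h1 : ‖weylKernel h a y p.1‖ ≤ D * (1 * vv (p.1 - c)) := by
      refine (hKa _ _).trans ?_
      have := vv_pos (p.1 - c)
      gcongr
      exact vv_le_one _
    calc _ ≤ (D * (1 * vv (p.1 - c))) * (D * (vv (p.1 - d) * vv (p.2 - d))) * ‖u p.2‖ := by
          have := vv_pos (p.1 - c)
          gcongr
          exact hKb _ _
      _ = _ := by ring

lemma supp_eps (a₀ : ℝ × ℝ → ℝ) (ha_supp : HasCompactSupport a₀)
    (ha_supp' : tsupport a₀ ⊆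
      Set.Ioo (-(1/2) : ℝ) (1/2) ×ˢ Set.Ioo (-(1/2) : ℝ) (1/2)) :
    ∃ ε : ℝ, 0 < ε ∧ ε ≤ 1 / 2 ∧ ∀ x η, a₀ (x, η) ≠ 0 → |x| ≤ 1 / 2 - ε ∧ |η| ≤ 1 / 2 - ε := by
  rcases (tsupport a₀).eq_empty_or_nonempty with he | hne
  · refine ⟨1 / 2, by norm_num, le_refl _, fun x η h => ?_⟩
    have : (x, η) ∈ tsupport a₀ := subset_tsupport a₀ h
    rw [he] at this
    exact absurd this (Set.notMem_empty _)
  · obtain ⟨p, hp, hmax⟩ := ha_supp.isCompact.exists_isMaxOn hne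
      (f := fun p : ℝ × ℝ => max |p.1| |p.2|) (by fun_prop)
    have h1 := ha_supp' hp
    simp only [Set.mem_prod, Set.mem_Ioo] at h1
    have h2 : max |p.1| |p.2| < 1 / 2 := by
      rw [max_lt_iff, abs_lt, abs_lt]
      exact ⟨⟨by linarith [h1.1.1], h1.1.2⟩, ⟨by linarith [h1.2.1], h1.2.2⟩⟩
    have h3 : 0 ≤ max |p.1| |p.2| := (abs_nonneg _).trans (le_max_left _ _)
    refine ⟨1 / 2 - max |p.1| |p.2|, by linarith, by linarith, fun x η h => ?_⟩
    have h4 : max |x| |η| ≤ max |p.1| |p.2| := hmax (subset_tsupport a₀ h)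
    rw [max_le_iff] at h4
    exact ⟨by linarith [h4.1], by linarith [h4.2]⟩

lemma continuous_shift (a₀ : ℝ × ℝ → ℝ) (ha : Continuous a₀) (j : ℤ × ℤ) :
    Continuous (shiftSymbol a₀ j) := by
  unfold shiftSymbol
  fun_prop

lemma kernel_supp (a₀ : ℝ × ℝ → ℝ) (ε : ℝ)
    (hε : ∀ x η, a₀ (x, η) ≠ 0 → |x| ≤ 1 / 2 - ε ∧ |η| ≤ 1 / 2 - ε) (h : ℝ) (j : ℤ × ℤ)
    (y z : ℝ) (hne : weylKernel h (shiftSymbol a₀ j) y z ≠ 0) :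
    |(y + z) / 2 - j.1| ≤ 1 / 2 - ε := by
  by_contra hlt
  apply hne
  have : ∀ η, a₀ ((y + z) / 2 - j.1, η) = 0 := by
    intro η
    by_contra h0
    exact hlt (hε _ _ h0).1
  simp [weylKernel, shiftSymbol, this]

lemma norm_weylKernel (a₀ : ℝ × ℝ → ℝ) (h : ℝ) (hh : 0 < h) (j : ℤ × ℤ) (y z : ℝ) :
    ‖weylKernel h (shiftSymbol a₀ j) y z‖ = 1 / (2 * Real.pi * h) *
      ‖∫ s : ℝ, Complex.exp (Complex.I * (((y - z) / h * s : ℝ) : ℂ)) *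
        ((a₀ ((y + z) / 2 - j.1, s) : ℝ) : ℂ)‖ := by
  unfold weylKernel shiftSymbol
  rw [norm_mul, Complex.norm_real, Real.norm_of_nonneg (by positivity)]
  congr 1
  rw [← integral_add_right_eq_self _ (j.2 : ℝ)]
  have : ∀ s : ℝ, Complex.exp (Complex.I * (((y - z) * (s + j.2) / h : ℝ) : ℂ)) *
        ((a₀ ((y + z) / 2 - j.1, s + j.2 - j.2) : ℝ) : ℂ) =
      Complex.exp (Complex.I * (((y - z) * j.2 / h : ℝ) : ℂ)) *
        (Complex.exp (Complex.I * (((y - z) / h * s : ℝ) : ℂ)) *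
        ((a₀ ((y + z) / 2 - j.1, s) : ℝ) : ℂ)) := by
    intro s
    rw [← mul_assoc, ← Complex.exp_add, add_sub_cancel_right]
    congr 2
    push_cast
    ring
  simp only [this]
  rw [integral_const_mul, norm_mul, mul_comm Complex.I, Complex.norm_exp_ofReal_mul_I, one_mul]

lemma kernel_bound (a₀ : ℝ × ℝ → ℝ) (ha_smooth : ContDiff ℝ (⊤ : ℕ∞) a₀)
    (ε : ℝ) (hε0 : 0 < ε)
    (hε : ∀ x η, a₀ (x, η) ≠ 0 → |x| ≤ 1 / 2 - ε ∧ |η| ≤ 1 / 2 - ε) (M : ℕ) :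
    ∃ C : ℝ, 0 ≤ C ∧ ∀ h : ℝ, 0 < h → h < 1 → ∀ (j : ℤ × ℤ) (y z : ℝ),
      (1 + |y - z| / h) ^ M * ‖weylKernel h (shiftSymbol a₀ j) y z‖ ≤
        C / h * (vv (y - j.1) * vv (z - j.1)) ^ 2 := by
  have hsm : ContDiff ℝ (⊤ : ℕ∞) (fun p : ℝ × ℝ => a₀ (p.2, p.1)) :=
    ha_smooth.comp (contDiff_snd.prodMk contDiff_fst)
  have hcs : HasCompactSupport (fun p : ℝ × ℝ => a₀ (p.2, p.1)) := by
    refine HasCompactSupport.intro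
      ((isCompact_Icc (a := (-(1:ℝ))) (b := 1)).prod (isCompact_Icc (a := (-(1:ℝ))) (b := 1))) ?_
    intro p hp
    by_contra hne
    have := hε _ _ hne
    apply hp
    exact ⟨abs_le.mp (by linarith [this.2]), abs_le.mp (by linarith [this.1])⟩
  obtain ⟨C0, hC0⟩ := osc_bound 0 _ hsm hcs
  obtain ⟨C1, hC1⟩ := osc_bound (M + 4) _ hsm hcs
  have hC0' : 0 ≤ C0 := le_trans (by positivity) (hC0 0 0)
  have hC1' : 0 ≤ C1 := le_trans (by positivity) (hC1 0 0)
  refine ⟨16 * (2 ^ (M + 4) * (C0 + C1)), by positivity, ?_⟩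
  intro h hh hh1 j y z
  by_cases hne : weylKernel h (shiftSymbol a₀ j) y z = 0
  · rw [hne]; simp; positivity
  have hs := kernel_supp a₀ ε hε h j y z hne
  set τ := |y - z| / h with hτ
  have hτ0 : 0 ≤ τ := by positivity
  have hτ1 : |y - z| ≤ τ := by
    rw [hτ, le_div_iff₀ hh]
    nlinarith [abs_nonneg (y - z)]
  have hy : (1 + |y - j.1|) ≤ 2 * (1 + τ) := by
    have : |y - j.1| ≤ |(y + z) / 2 - j.1| + |y - z| / 2 := by
      have h1 : y - j.1 = ((y + z) / 2 - j.1) + (y - z) / 2 := by ring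
      rw [h1]
      refine (abs_add_le _ _).trans ?_
      rw [abs_div]; simp
    linarith
  have hz : (1 + |z - j.1|) ≤ 2 * (1 + τ) := by
    have : |z - j.1| ≤ |(y + z) / 2 - j.1| + |y - z| / 2 := by
      have h1 : z - j.1 = ((y + z) / 2 - j.1) - (y - z) / 2 := by ring
      rw [h1]
      refine (abs_sub _ _).trans ?_
      rw [abs_div]; simp
    linarith
  set J := ‖∫ s : ℝ, Complex.exp (Complex.I * (((y - z) / h * s : ℝ) : ℂ)) *
        ((a₀ ((y + z) / 2 - j.1, s) : ℝ) : ℂ)‖ with hJ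
  have hJ0 : 0 ≤ J := norm_nonneg _
  have b0 : J ≤ C0 := by
    have := hC0 ((y + z) / 2 - j.1) ((y - z) / h)
    rwa [pow_zero, one_mul] at this
  have b1 : τ ^ (M + 4) * J ≤ C1 := by
    have := hC1 ((y + z) / 2 - j.1) ((y - z) / h)
    rwa [abs_div, abs_of_pos hh] at this
  have b2 : (1 + τ) ^ (M + 4) * J ≤ 2 ^ (M + 4) * (C0 + C1) := by
    have h1 : (1 + τ) ^ (M + 4) ≤ 2 ^ (M + 4) * (1 + τ ^ (M + 4)) := by
      have := add_pow_le zero_le_one hτ0 (M + 4)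
      rw [one_pow] at this
      refine this.trans ?_
      gcongr
      · norm_num
      · omega
    calc _ ≤ 2 ^ (M + 4) * (1 + τ ^ (M + 4)) * J := by gcongr
      _ = 2 ^ (M + 4) * (J + τ ^ (M + 4) * J) := by ring
      _ ≤ _ := by gcongr
  have b3 : 1 ≤ 16 * (1 + τ) ^ 4 * (vv (y - j.1) * vv (z - j.1)) ^ 2 := by
    unfold vv
    rw [← mul_inv, inv_pow, ← div_eq_mul_inv, one_le_div₀ (by positivity)]
    calc ((1 + |y - j.1|) * (1 + |z - j.1|)) ^ 2 ≤ ((2 * (1 + τ)) * (2 * (1 + τ))) ^ 2 := by gcongr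
      _ = _ := by ring
  have hn : ‖weylKernel h (shiftSymbol a₀ j) y z‖ ≤ J / h := by
    rw [norm_weylKernel a₀ h hh, ← hJ, div_eq_mul_inv J h, mul_comm J]
    gcongr
    rw [one_div]
    apply inv_anti₀ hh
    nlinarith [Real.pi_gt_three]
  set v2 := (vv (y - j.1) * vv (z - j.1)) ^ 2 with hv2
  have hv20 : 0 ≤ v2 := by positivity
  calc (1 + τ) ^ M * ‖weylKernel h (shiftSymbol a₀ j) y z‖
      ≤ (1 + τ) ^ M * (J / h) * 1 := by rw [mul_one]; gcongr
    _ ≤ (1 + τ) ^ M * (J / h) * (16 * (1 + τ) ^ 4 * v2) := by gcongr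
    _ = 16 * ((1 + τ) ^ (M + 4) * J) / h * v2 := by rw [pow_add]; ring
    _ ≤ _ := by gcongr

lemma comp_A1 (a₀ : ℝ × ℝ → ℝ) (ha_smooth : ContDiff ℝ (⊤ : ℕ∞) a₀)
    (ε : ℝ) (hε0 : 0 < ε) (hε1 : ε ≤ 1 / 2)
    (hε : ∀ x η, a₀ (x, η) ≠ 0 → |x| ≤ 1 / 2 - ε ∧ |η| ≤ 1 / 2 - ε) (M : ℕ) :
    ∃ C : ℝ, 0 ≤ C ∧ ∀ h : ℝ, 0 < h → h < 1 → ∀ (j k : ℤ × ℤ) (y z q : ℝ),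
      q = |(j.1 : ℝ) - k.1| → 1 ≤ q →
      (q / h) ^ M * ‖∫ x, weylKernel h (shiftSymbol a₀ j) y x *
        weylKernel h (shiftSymbol a₀ k) x z‖ ≤ C / h ^ 2 := by
  obtain ⟨C, hC0, hC⟩ := kernel_bound a₀ ha_smooth ε hε0 hε M
  refine ⟨C ^ 2 * VV / (4 * ε) ^ M, by have := VV_nonneg; positivity, ?_⟩
  intro h hh hh1 j k y z q hq hq1
  have hpt : ∀ x, ‖weylKernel h (shiftSymbol a₀ j) y x * weylKernel h (shiftSymbol a₀ k) x z‖ ≤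
      C ^ 2 / h ^ 2 / (4 * ε * q / h) ^ M * vv (x - j.1) ^ 2 := by
    intro x
    by_cases h1 : weylKernel h (shiftSymbol a₀ j) y x = 0
    · rw [h1]; simp; positivity
    by_cases h2 : weylKernel h (shiftSymbol a₀ k) x z = 0
    · rw [h2]; simp; positivity
    have s1 := kernel_supp a₀ ε hε h j y x h1
    have s2 := kernel_supp a₀ ε hε h k x z h2
    have b1 := hC h hh hh1 j y x
    have b2 := hC h hh hh1 k x z
    set N1 := ‖weylKernel h (shiftSymbol a₀ j) y x‖ with hN1
    set N2 := ‖weylKernel h (shiftSymbol a₀ k) x z‖ with hN2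
    have hd : 4 * ε * q ≤ |y - x| + |x - z| := by
      have e : (j.1 : ℝ) - k.1 = ((x + z) / 2 - k.1) - ((y + x) / 2 - j.1) + ((y - x) + (x - z)) / 2 := by
        ring
      have h3 : q ≤ (1 / 2 - ε) + (1 / 2 - ε) + (|y - x| + |x - z|) / 2 := by
        rw [hq, e]
        refine (abs_add_le _ _).trans ?_
        gcongr
        · exact (abs_sub _ _).trans (by linarith)
        · rw [abs_div, abs_two]
          gcongr
          exact abs_add_le _ _
      nlinarith
    have hL : 4 * ε * q / h ≤ (1 + |y - x| / h) * (1 + |x - z| / h) := by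
      have h4 : 4 * ε * q / h ≤ |y - x| / h + |x - z| / h := by
        rw [← add_div]; gcongr
      have : 0 ≤ |y - x| / h * (|x - z| / h) := by positivity
      nlinarith
    have w1 : (vv (y - j.1) * vv (x - j.1)) ^ 2 ≤ vv (x - j.1) ^ 2 := by
      rw [mul_pow]
      have := pow_le_one₀ (n := 2) (vv_pos (y - j.1)).le (vv_le_one _)
      nlinarith [sq_nonneg (vv (x - j.1))]
    have w2 : (vv (x - k.1) * vv (z - k.1)) ^ 2 ≤ 1 := by
      apply pow_le_one₀ (mul_pos (vv_pos _) (vv_pos _)).le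
      exact mul_le_one₀ (vv_le_one _) (vv_pos _).le (vv_le_one _)
    rw [norm_mul, ← hN1, ← hN2]
    have hp : 0 < (4 * ε * q / h) ^ M := by positivity
    rw [div_mul_eq_mul_div, le_div_iff₀ hp]
    calc N1 * N2 * (4 * ε * q / h) ^ M
        ≤ N1 * N2 * ((1 + |y - x| / h) * (1 + |x - z| / h)) ^ M := by gcongr
      _ = ((1 + |y - x| / h) ^ M * N1) * ((1 + |x - z| / h) ^ M * N2) := by rw [mul_pow]; ring
      _ ≤ (C / h * (vv (y - j.1) * vv (x - j.1)) ^ 2) * (C / h * (vv (x - k.1) * vv (z - k.1)) ^ 2) := by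
          gcongr
      _ ≤ (C / h * vv (x - j.1) ^ 2) * (C / h * 1) := by gcongr
      _ = _ := by ring
  have hint := norm_integral_le_of_norm_le
    ((integrable_vv_sq_shift j.1).const_mul (C ^ 2 / h ^ 2 / (4 * ε * q / h) ^ M))
    (Filter.Eventually.of_forall hpt)
  rw [integral_const_mul, integral_vv_shift] at hint
  calc _ ≤ (q / h) ^ M * (C ^ 2 / h ^ 2 / (4 * ε * q / h) ^ M * VV) := by gcongr
    _ = _ := by
      rw [show 4 * ε * q / h = 4 * ε * (q / h) by ring, mul_pow]
      have : (q / h) ^ M ≠ 0 := by positivity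
      field_simp

lemma comp_A2 (a₀ : ℝ × ℝ → ℝ) (ha_smooth : ContDiff ℝ (⊤ : ℕ∞) a₀)
    (ε : ℝ) (hε0 : 0 < ε) (hε1 : ε ≤ 1 / 2)
    (hε : ∀ x η, a₀ (x, η) ≠ 0 → |x| ≤ 1 / 2 - ε ∧ |η| ≤ 1 / 2 - ε) (M : ℕ) :
    ∃ C : ℝ, 0 ≤ C ∧ ∀ h : ℝ, 0 < h → h < 1 → ∀ (j k : ℤ × ℤ) (y z q : ℝ),
      q = |(j.2 : ℝ) - k.2| → 1 ≤ q →
      (q / h) ^ M * ‖∫ x, weylKernel h (shiftSymbol a₀ j) y x *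
        weylKernel h (shiftSymbol a₀ k) x z‖ ≤ C / h ^ 2 := by
  have hac : Continuous a₀ := ha_smooth.continuous
  have hsm : ContDiff ℝ (⊤ : ℕ∞) (fun p : ℝ × (ℝ × ℝ × ℝ) =>
      a₀ (p.1 / 2, p.2.2.1) * a₀ (p.1 / 2 + p.2.1, p.2.2.2)) := by
    apply ContDiff.mul
    · exact ha_smooth.comp (by fun_prop)
    · exact ha_smooth.comp (by fun_prop)
  have hcs : HasCompactSupport (fun p : ℝ × (ℝ × ℝ × ℝ) =>
      a₀ (p.1 / 2, p.2.2.1) * a₀ (p.1 / 2 + p.2.1, p.2.2.2)) := by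
    have I1 := isCompact_Icc (a := (-(1:ℝ))) (b := 1)
    refine HasCompactSupport.intro (I1.prod (I1.prod (I1.prod I1))) ?_
    intro p hp
    by_contra hne
    have h1 := hε _ _ (left_ne_zero_of_mul hne)
    have h2 := hε _ _ (right_ne_zero_of_mul hne)
    apply hp
    have t1 := abs_le.mp h1.1
    have t2 := abs_le.mp h1.2
    have t3 := abs_le.mp h2.1
    have t4 := abs_le.mp h2.2
    refine ⟨⟨?_, ?_⟩, ⟨?_, ?_⟩, ⟨?_, ?_⟩, ?_, ?_⟩ <;> linarith
  obtain ⟨C, hC⟩ := osc_bound M _ hsm hcs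
  have hC0 : 0 ≤ C := le_trans (by positivity) (hC 0 0)
  refine ⟨C / (2 * ε) ^ M, by positivity, ?_⟩
  intro h hh hh1 j k y z q hq hq1
  -- the phase function and amplitude
  set F : ℝ → ℝ × ℝ → ℂ := fun x p =>
    (Complex.exp (Complex.I * (((y - x) * p.1 / h : ℝ) : ℂ)) *
      ((a₀ ((y + x) / 2 - j.1, p.1 - j.2) : ℝ) : ℂ)) *
    (Complex.exp (Complex.I * (((x - z) * p.2 / h : ℝ) : ℂ)) *
      ((a₀ ((x + z) / 2 - k.1, p.2 - k.2) : ℝ) : ℂ)) with hF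
  have hFc : Continuous (Function.uncurry F) := by
    simp only [hF, Function.uncurry_def]
    fun_prop
  have hFs : HasCompactSupport (Function.uncurry F) := by
    refine HasCompactSupport.intro
      ((isCompact_Icc (a := (2 * j.1 - y - 1 : ℝ)) (b := 2 * j.1 - y + 1)).prod
        ((isCompact_Icc (a := (j.2 - 1 : ℝ)) (b := j.2 + 1)).prod
        (isCompact_Icc (a := (k.2 - 1 : ℝ)) (b := k.2 + 1)))) ?_
    intro p hp
    by_contra hne
    simp only [hF, Function.uncurry_def] at hne
    have h1 := right_ne_zero_of_mul (left_ne_zero_of_mul hne)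
    have h2 := right_ne_zero_of_mul (right_ne_zero_of_mul hne)
    have g1 := hε _ _ (Complex.ofReal_ne_zero.mp h1)
    have g2 := hε _ _ (Complex.ofReal_ne_zero.mp h2)
    apply hp
    have t1 := abs_le.mp g1.1
    have t2 := abs_le.mp g1.2
    have t4 := abs_le.mp g2.2
    refine ⟨⟨?_, ?_⟩, ⟨?_, ?_⟩, ?_, ?_⟩ <;> linarith
  have hFi : Integrable (Function.uncurry F) (volume.prod volume) :=
    hFc.integrable_of_hasCompactSupport hFs
  have e1 : ∫ x, weylKernel h (shiftSymbol a₀ j) y x * weylKernel h (shiftSymbol a₀ k) x z =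
      (((1 / (2 * Real.pi * h)) ^ 2 : ℝ) : ℂ) * ∫ p : ℝ × ℝ, ∫ x, F x p := by
    rw [← integral_integral_swap hFi, ← integral_const_mul]
    congr 1
    ext x
    unfold weylKernel shiftSymbol
    simp only [hF]
    rw [Measure.volume_eq_prod, integral_prod_mul
      (fun η : ℝ => Complex.exp (Complex.I * (((y - x) * η / h : ℝ) : ℂ)) *
        ((a₀ ((y + x) / 2 - j.1, η - j.2) : ℝ) : ℂ))
      (fun η : ℝ => Complex.exp (Complex.I * (((x - z) * η / h : ℝ) : ℂ)) *
        ((a₀ ((x + z) / 2 - k.1, η - k.2) : ℝ) : ℂ))]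
    push_cast
    ring
  -- the box
  set Q : Set (ℝ × ℝ) := Set.Icc ((j.2 : ℝ) - 1 / 2) (j.2 + 1 / 2) ×ˢ
    Set.Icc ((k.2 : ℝ) - 1 / 2) (k.2 + 1 / 2) with hQ
  have hQm : MeasurableSet Q := measurableSet_Icc.prod measurableSet_Icc
  have hQv : volume.real Q = 1 := by
    rw [hQ, Measure.volume_eq_prod, measureReal_prod_prod, Real.volume_real_Icc, Real.volume_real_Icc]
    norm_num
  have hQf : volume Q ≠ ⊤ := by
    intro h
    rw [measureReal_def, h] at hQv
    simp at hQv
  have hin : ∀ p : ℝ × ℝ, ‖∫ x, F x p‖ ≤ Q.indicator (fun _ => C / (2 * ε * q / h) ^ M) p := by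
    intro p
    by_cases hp : |p.1 - j.2| ≤ 1 / 2 - ε ∧ |p.2 - k.2| ≤ 1 / 2 - ε
    · have t1 := abs_le.mp hp.1
      have t2 := abs_le.mp hp.2
      have hpQ : p ∈ Q := by
        refine ⟨⟨?_, ?_⟩, ?_, ?_⟩ <;> linarith
      rw [Set.indicator_of_mem hpQ, le_div_iff₀ (by positivity)]
      have hx : ‖∫ x, F x p‖ = ‖∫ s : ℝ, Complex.exp (Complex.I * (((p.2 - p.1) / h * s : ℝ) : ℂ)) *
          (((a₀ (s / 2, p.1 - j.2) * a₀ (s / 2 + ((z - y) / 2 + j.1 - k.1), p.2 - k.2)) : ℝ) : ℂ)‖ := by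
        rw [← integral_add_right_eq_self _ (2 * (j.1 : ℝ) - y)]
        have : ∀ s : ℝ, F (s + (2 * (j.1 : ℝ) - y)) p =
            Complex.exp (Complex.I * ((((y - (2 * j.1 - y)) * p.1 + ((2 * j.1 - y) - z) * p.2) / h : ℝ) : ℂ)) *
            (Complex.exp (Complex.I * (((p.2 - p.1) / h * s : ℝ) : ℂ)) *
          (((a₀ (s / 2, p.1 - j.2) * a₀ (s / 2 + ((z - y) / 2 + j.1 - k.1), p.2 - k.2)) : ℝ) : ℂ)) := by
          intro s
          simp only [hF]
          have r1 : (y + (s + (2 * (j.1 : ℝ) - y))) / 2 - j.1 = s / 2 := by ring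
          have r2 : ((s + (2 * (j.1 : ℝ) - y)) + z) / 2 - k.1 = s / 2 + ((z - y) / 2 + j.1 - k.1) := by
            ring
          have hx : Complex.exp (Complex.I * (((y - (s + (2 * (j.1 : ℝ) - y))) * p.1 / h : ℝ) : ℂ)) *
              Complex.exp (Complex.I * ((((s + (2 * (j.1 : ℝ) - y)) - z) * p.2 / h : ℝ) : ℂ)) =
              Complex.exp (Complex.I * ((((y - (2 * j.1 - y)) * p.1 +
                ((2 * j.1 - y) - z) * p.2) / h : ℝ) : ℂ)) *
              Complex.exp (Complex.I * (((p.2 - p.1) / h * s : ℝ) : ℂ)) := by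
            rw [← Complex.exp_add, ← Complex.exp_add]
            congr 1
            push_cast
            ring
          rw [r1, r2, Complex.ofReal_mul (a₀ _) (a₀ _)]
          rw [mul_mul_mul_comm, hx, mul_assoc]
        simp only [this]
        rw [integral_const_mul, norm_mul, mul_comm Complex.I, Complex.norm_exp_ofReal_mul_I, one_mul]
      have hω : 2 * ε * q / h ≤ |(p.2 - p.1) / h| := by
        rw [abs_div, abs_of_pos hh]
        gcongr
        have e : (j.2 : ℝ) - k.2 = (p.2 - k.2) - (p.1 - j.2) - (p.2 - p.1) := by ring
        have h3 : q ≤ (1 / 2 - ε) + (1 / 2 - ε) + |p.2 - p.1| := by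
          rw [hq, e]
          refine (abs_sub _ _).trans ?_
          gcongr
          exact (abs_sub _ _).trans (by linarith [hp.1, hp.2])
        nlinarith
      have := hC ((z - y) / 2 + j.1 - k.1, p.1 - j.2, p.2 - k.2) ((p.2 - p.1) / h)
      rw [hx, mul_comm]
      refine le_trans ?_ this
      gcongr
    · have : ∀ x, F x p = 0 := by
        intro x
        by_contra hne
        simp only [hF] at hne
        have h1 := right_ne_zero_of_mul (left_ne_zero_of_mul hne)
        have h2 := right_ne_zero_of_mul (right_ne_zero_of_mul hne)
        have g1 := hε _ _ (Complex.ofReal_ne_zero.mp h1)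
        have g2 := hε _ _ (Complex.ofReal_ne_zero.mp h2)
        exact hp ⟨g1.2, g2.2⟩
      simp only [this, integral_zero, norm_zero]
      exact Set.indicator_nonneg (fun _ _ => by positivity) _
  have hint := norm_integral_le_of_norm_le (μ := (volume : Measure (ℝ × ℝ)))
    ((integrable_indicator_iff hQm).mpr (integrableOn_const hQf))
    (Filter.Eventually.of_forall hin)
  rw [integral_indicator_const _ hQm, hQv, one_smul] at hint
  rw [e1, norm_mul, Complex.norm_real, Real.norm_of_nonneg (by positivity)]
  have hpi : (1 / (2 * Real.pi * h)) ^ 2 ≤ 1 / h ^ 2 := by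
    rw [div_pow, one_pow]
    apply one_div_le_one_div_of_le (by positivity)
    gcongr
    nlinarith [Real.pi_gt_three]
  calc _ ≤ (q / h) ^ M * (1 / h ^ 2 * (C / (2 * ε * q / h) ^ M)) := by gcongr
    _ = _ := by
      rw [show 2 * ε * q / h = 2 * ε * (q / h) by ring, mul_pow]
      have : (q / h) ^ M ≠ 0 := by positivity
      field_simp

lemma comp_opNorm (a₀ : ℝ × ℝ → ℝ) (ha_smooth : ContDiff ℝ (⊤ : ℕ∞) a₀)
    (ε : ℝ) (hε0 : 0 < ε) (hε1 : ε ≤ 1 / 2)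
    (hε : ∀ x η, a₀ (x, η) ≠ 0 → |x| ≤ 1 / 2 - ε ∧ |η| ≤ 1 / 2 - ε) (n : ℕ) :
    ∃ C : ℝ, 0 ≤ C ∧ ∀ h : ℝ, 0 < h → h < 1 → ∀ (j k : ℤ × ℤ) (S T : L2R →L[ℂ] L2R) (q : ℝ),
      IsWeylQuant h (shiftSymbol a₀ j) S → IsWeylQuant h (shiftSymbol a₀ k) T →
      q = max |(j.1 : ℝ) - k.1| |(j.2 : ℝ) - k.2| → 1 ≤ q →
      ‖S * T‖ ≤ C / h ^ 2 * (h / q) ^ n := by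
  have hac : Continuous a₀ := ha_smooth.continuous
  obtain ⟨C0, hC00, hC0⟩ := kernel_bound a₀ ha_smooth ε hε0 hε 0
  obtain ⟨C1, hC10, hC1⟩ := comp_A1 a₀ ha_smooth ε hε0 hε1 hε (2 * n)
  obtain ⟨C2, hC20, hC2⟩ := comp_A2 a₀ ha_smooth ε hε0 hε1 hε (2 * n)
  have hVV := VV_nonneg
  refine ⟨√((C1 + C2) * (C0 ^ 2 * VV)) * VV, by positivity, ?_⟩
  intro h hh hh1 j k S T q hS hT hq hq1
  have kb : ∀ (i : ℤ × ℤ) y z, ‖weylKernel h (shiftSymbol a₀ i) y z‖ ≤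
      C0 / h * (vv (y - i.1) * vv (z - i.1)) ^ 2 := by
    intro i y z
    simpa using hC0 h hh hh1 i y z
  have vle : ∀ s t, (vv s * vv t) ^ 2 ≤ vv s * vv t := by
    intro s t
    have h1 : 0 < vv s * vv t := mul_pos (vv_pos _) (vv_pos _)
    have h2 : vv s * vv t ≤ 1 := mul_le_one₀ (vv_le_one _) (vv_pos _).le (vv_le_one _)
    nlinarith
  have kb' : ∀ (i : ℤ × ℤ) y z, ‖weylKernel h (shiftSymbol a₀ i) y z‖ ≤
      C0 / h * (vv (y - i.1) * vv (z - i.1)) := by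
    intro i y z
    refine (kb i y z).trans ?_
    gcongr
    exact vle _ _
  have hcomp := comp_kernel h _ _ (continuous_shift a₀ hac j) (continuous_shift a₀ hac k) S T hS hT
    j.1 k.1 (C0 / h) (kb' j) (kb' k)
  set KK : ℝ → ℝ → ℂ := fun y z => ∫ x, weylKernel h (shiftSymbol a₀ j) y x *
        weylKernel h (shiftSymbol a₀ k) x z with hKK
  have bA : ∀ y z, (q / h) ^ (2 * n) * ‖KK y z‖ ≤ (C1 + C2) / h ^ 2 := by
    intro y z
    rcases le_total |(j.1 : ℝ) - k.1| |(j.2 : ℝ) - k.2| with hle | hle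
    · rw [max_eq_right hle] at hq
      refine (hC2 h hh hh1 j k y z q hq hq1).trans ?_
      gcongr
      linarith
    · rw [max_eq_left hle] at hq
      refine (hC1 h hh hh1 j k y z q hq hq1).trans ?_
      gcongr
      linarith
  have bB : ∀ y z, ‖KK y z‖ ≤ C0 ^ 2 * VV / h ^ 2 * (vv (y - j.1) * vv (z - k.1)) ^ 2 := by
    intro y z
    have hpt : ∀ x, ‖weylKernel h (shiftSymbol a₀ j) y x * weylKernel h (shiftSymbol a₀ k) x z‖ ≤
        (C0 ^ 2 / h ^ 2 * (vv (y - j.1) * vv (z - k.1)) ^ 2) * vv (x - j.1) ^ 2 := by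
      intro x
      rw [norm_mul]
      have h1 : vv (x - k.1) ^ 2 ≤ 1 := pow_le_one₀ (vv_pos _).le (vv_le_one _)
      calc _ ≤ (C0 / h * (vv (y - j.1) * vv (x - j.1)) ^ 2) *
            (C0 / h * (vv (x - k.1) * vv (z - k.1)) ^ 2) := by
            gcongr
            · exact kb j y x
            · exact kb k x z
        _ = (C0 ^ 2 / h ^ 2 * (vv (y - j.1) * vv (z - k.1)) ^ 2) * vv (x - j.1) ^ 2 *
            vv (x - k.1) ^ 2 := by ring
        _ ≤ (C0 ^ 2 / h ^ 2 * (vv (y - j.1) * vv (z - k.1)) ^ 2) * vv (x - j.1) ^ 2 * 1 := by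
            gcongr
        _ = _ := by ring
    have hint := norm_integral_le_of_norm_le
      ((integrable_vv_sq_shift j.1).const_mul (C0 ^ 2 / h ^ 2 * (vv (y - j.1) * vv (z - k.1)) ^ 2))
      (Filter.Eventually.of_forall hpt)
    rw [integral_const_mul, integral_vv_shift] at hint
    refine hint.trans (le_of_eq ?_)
    ring
  have hqh : 0 < q / h := by positivity
  have bC : ∀ y z, ‖KK y z‖ ≤ √((C1 + C2) * (C0 ^ 2 * VV)) / h ^ 2 * (h / q) ^ n *
      (vv (y - j.1) * vv (z - k.1)) := by
    intro y z
    have h1 := mul_le_mul (bA y z) (bB y z) (norm_nonneg _) (by positivity)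
    have hv : 0 < vv (y - j.1) * vv (z - k.1) := mul_pos (vv_pos _) (vv_pos _)
    have h2 : (q / h) ^ n * ‖KK y z‖ ≤ √((C1 + C2) * (C0 ^ 2 * VV)) / h ^ 2 *
        (vv (y - j.1) * vv (z - k.1)) := by
      have hsq : √((C1 + C2) * (C0 ^ 2 * VV)) ^ 2 = (C1 + C2) * (C0 ^ 2 * VV) :=
        Real.sq_sqrt (by positivity)
      refine le_of_sq_le_sq ?_ (by positivity)
      calc ((q / h) ^ n * ‖KK y z‖) ^ 2 = (q / h) ^ (2 * n) * ‖KK y z‖ * ‖KK y z‖ := by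
            rw [mul_pow, ← pow_mul, mul_comm n 2]; ring
        _ ≤ _ := h1
        _ = ((C1 + C2) * (C0 ^ 2 * VV)) / (h ^ 2) ^ 2 * (vv (y - j.1) * vv (z - k.1)) ^ 2 := by
            ring
        _ = _ := by rw [mul_pow (√_ / h ^ 2), div_pow (√_), hsq]
    have h3 : h / q = (q / h)⁻¹ := by rw [inv_div]
    rw [h3, inv_pow]
    rw [mul_comm, ← le_div_iff₀ (by positivity)] at h2
    refine h2.trans (le_of_eq ?_)
    ring
  have := opNorm_le_of_kernel (S * T) KK j.1 k.1 (√((C1 + C2) * (C0 ^ 2 * VV)) / h ^ 2 * (h / q) ^ n)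
    (by positivity) bC hcomp
  refine this.trans (le_of_eq ?_)
  ring

def gg (d : ℤ × ℤ) : ℝ := (1 + (d.1 : ℝ) ^ 2)⁻¹ * (1 + (d.2 : ℝ) ^ 2)⁻¹

lemma gg_nonneg (d : ℤ × ℤ) : 0 ≤ gg d := by unfold gg; positivity

lemma summable_gg : Summable gg := by
  have h1 : Summable (fun n : ℤ => (1 + (n : ℝ) ^ 2)⁻¹) := by
    have h2 : Summable (fun n : ℤ => 1 / (n : ℝ) ^ 2) :=
      Real.summable_one_div_int_pow.mpr (by norm_num)
    have h3 : Summable (fun n : ℤ => if n = 0 then (1 : ℝ) else 0) :=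
      (hasSum_ite_eq (0 : ℤ) (1 : ℝ)).summable
    refine Summable.of_nonneg_of_le (fun n => by positivity) (fun n => ?_) (h2.add h3)
    by_cases hn : n = 0
    · simp [hn]
    · have : (n : ℝ) ≠ 0 := by exact_mod_cast hn
      simp only [hn, if_false, add_zero, one_div]
      apply inv_anti₀ (by positivity)
      linarith
  exact h1.mul_of_nonneg h1 (fun n => by positivity) (fun n => by positivity)

lemma sum_gg_le (Λ : Finset (ℤ × ℤ)) (j : ℤ × ℤ) : ∑ k ∈ Λ, gg (j - k) ≤ ∑' d, gg d := by
  have h1 : Summable (fun k => gg (j - k)) := (Equiv.subLeft j).summable_iff.mpr summable_gg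
  rw [← (Equiv.subLeft j).tsum_eq gg]
  exact h1.sum_le_tsum Λ (fun k _ => gg_nonneg _)

lemma max_ge_one (j k : ℤ × ℤ) (hjk : j ≠ k) :
    (1 : ℝ) ≤ max |(j.1 : ℝ) - k.1| |(j.2 : ℝ) - k.2| := by
  have key : ∀ a b : ℤ, a ≠ b → (1 : ℝ) ≤ |(a : ℝ) - b| := by
    intro a b hab
    have : 1 ≤ |a - b| := Int.one_le_abs (sub_ne_zero.mpr hab)
    exact_mod_cast this
  by_cases h1 : j.1 = k.1
  · have h2 : j.2 ≠ k.2 := fun h2 => hjk (Prod.ext h1 h2)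
    exact (key _ _ h2).trans (le_max_right _ _)
  · exact (key _ _ h1).trans (le_max_left _ _)

lemma sqrt_comp (a₀ : ℝ × ℝ → ℝ) (ha_smooth : ContDiff ℝ (⊤ : ℕ∞) a₀)
    (ε : ℝ) (hε0 : 0 < ε) (hε1 : ε ≤ 1 / 2)
    (hε : ∀ x η, a₀ (x, η) ≠ 0 → |x| ≤ 1 / 2 - ε ∧ |η| ≤ 1 / 2 - ε) (m : ℕ) :
    ∃ C : ℝ, 0 ≤ C ∧ ∀ h : ℝ, 0 < h → h < 1 → ∀ (j k : ℤ × ℤ) (S T : L2R →L[ℂ] L2R),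
      IsWeylQuant h (shiftSymbol a₀ j) S → IsWeylQuant h (shiftSymbol a₀ k) T → j ≠ k →
      √‖S * T‖ ≤ C * h ^ m * gg (j - k) := by
  obtain ⟨C, hC0, hC⟩ := comp_opNorm a₀ ha_smooth ε hε0 hε1 hε (2 * (m + 5))
  refine ⟨√C * 4, by positivity, ?_⟩
  intro h hh hh1 j k S T hS hT hjk
  set q := max |(j.1 : ℝ) - k.1| |(j.2 : ℝ) - k.2| with hq
  have hq1 : 1 ≤ q := max_ge_one j k hjk
  have h1 := hC h hh hh1 j k S T q hS hT hq hq1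
  have hg : (q ^ 4)⁻¹ ≤ 4 * gg (j - k) := by
    have a1 : ((j.1 : ℝ) - k.1) ^ 2 ≤ q ^ 2 := by
      rw [← sq_abs]; gcongr; exact le_max_left _ _
    have a2 : ((j.2 : ℝ) - k.2) ^ 2 ≤ q ^ 2 := by
      rw [← sq_abs]; gcongr; exact le_max_right _ _
    have a3 : 1 ≤ q ^ 2 := one_le_pow₀ hq1
    unfold gg
    simp only [Prod.fst_sub, Prod.snd_sub, Int.cast_sub]
    rw [← mul_inv, ← div_eq_mul_inv, le_div_iff₀ (by positivity), inv_mul_le_iff₀ (by positivity)]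
    calc (1 + ((j.1 : ℝ) - k.1) ^ 2) * (1 + ((j.2 : ℝ) - k.2) ^ 2)
        ≤ (q ^ 2 + q ^ 2) * (q ^ 2 + q ^ 2) := by gcongr
      _ = _ := by ring
  have h2 : √‖S * T‖ ≤ √C / h * (h / q) ^ (m + 5) := by
    apply Real.sqrt_le_iff.mpr
    refine ⟨by positivity, h1.trans (le_of_eq ?_)⟩
    rw [mul_pow, div_pow (√C), Real.sq_sqrt hC0]
    ring
  have h3 : (h / q) ^ (m + 5) ≤ h ^ (m + 1) * (q ^ 4)⁻¹ := by
    rw [div_pow, div_eq_mul_inv]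
    have : h ^ (m + 5) ≤ h ^ (m + 1) := pow_le_pow_of_le_one hh.le hh1.le (by omega)
    have : q ^ 4 ≤ q ^ (m + 5) := pow_le_pow_right₀ hq1 (by omega)
    gcongr
  calc _ ≤ _ := h2
    _ ≤ √C / h * (h ^ (m + 1) * (4 * gg (j - k))) := by
        gcongr
        exact h3.trans (by gcongr)
    _ = _ := by
        rw [pow_succ]
        field_simp

lemma exp_decay (N : ℕ) (h : ℝ) (hh : 0 < h) : Real.exp (-(1 / h)) ≤ (N.factorial : ℝ) * h ^ N := by
  have h1 := Real.pow_div_factorial_le_exp (1 / h) (by positivity) N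
  rw [Real.exp_neg, inv_le_comm₀ (Real.exp_pos _) (by positivity)]
  refine le_trans (le_of_eq ?_) h1
  rw [div_pow, one_pow, mul_inv, one_div, div_eq_mul_inv, mul_comm]

theorem weyl_sum_spectral_gap
    (a₀ : ℝ × ℝ → ℝ)
    (ha_smooth : ContDiff ℝ (⊤ : ℕ∞) a₀) (ha_supp : HasCompactSupport a₀)
    (ha_supp' : tsupport a₀ ⊆
      Set.Ioo (-(1/2) : ℝ) (1/2) ×ˢ Set.Ioo (-(1/2) : ℝ) (1/2))
    (b₀ : ℝ) (hb₀ : 0 < b₀) :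
    ∃ r : ℝ → ℝ,
      (∀ h : ℝ, 0 < h → h < 1 → 0 ≤ r h) ∧
      (∀ N : ℝ, 0 < N → ∃ C : ℝ, ∀ h : ℝ, 0 < h → h < 1 → r h ≤ C * h ^ N) ∧
      ∀ (Λ : Finset (ℤ × ℤ)) (μ₀ δ h : ℝ),
        b₀ ≤ μ₀ → 0 < δ → δ < b₀ / 2 → 0 < h → h < 1 →
        ∀ T : ℤ × ℤ → (L2R →L[ℂ] L2R),
          (∀ j : ℤ × ℤ, IsWeylQuant h (shiftSymbol a₀ j) (T j)) →
          (∀ j ∈ Λ, ∀ μ ∈ Set.Icc (μ₀ - (δ + r h)) (μ₀ + (δ + r h)),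
            (μ : ℂ) ∉ spectrum ℂ (T j)) →
          ∀ μ ∈ Set.Icc (μ₀ - δ) (μ₀ + δ),
            (μ : ℂ) ∉ spectrum ℂ (∑ j ∈ Λ, T j) := by
  have hac : Continuous a₀ := ha_smooth.continuous
  obtain ⟨ε, hε0, hε1, hε⟩ := supp_eps a₀ ha_supp ha_supp'
  choose C hC0 hC using sqrt_comp a₀ ha_smooth ε hε0 hε1 hε
  set G := ∑' d, gg d with hG
  have hG0 : 0 ≤ G := tsum_nonneg gg_nonneg
  have hbdd : ∀ h : ℝ, 0 < h → BddBelow (Set.range fun m : ℕ => C m * h ^ m * G) := by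
    intro h hh
    refine ⟨0, ?_⟩
    rintro _ ⟨m, rfl⟩
    have := hC0 m
    positivity
  have hinf : ∀ h : ℝ, 0 < h → 0 ≤ ⨅ m : ℕ, C m * h ^ m * G := by
    intro h hh
    apply Real.iInf_nonneg
    intro m
    have := hC0 m
    positivity
  refine ⟨fun h => (⨅ m : ℕ, C m * h ^ m * G) + Real.exp (-(1 / h)), ?_, ?_, ?_⟩
  · intro h hh _
    have := hinf h hh
    positivity
  · intro N hN
    obtain ⟨m, hm⟩ := exists_nat_ge N
    refine ⟨C m * G + m.factorial, fun h hh hh1 => ?_⟩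
    have h1 : h ^ m ≤ h ^ N := by
      rw [← Real.rpow_natCast]
      exact Real.rpow_le_rpow_of_exponent_ge hh hh1.le hm
    have h2 := ciInf_le (hbdd h hh) m
    have h3 := exp_decay m h hh
    have h4 : 0 ≤ C m * G + m.factorial := by
      have := hC0 m
      positivity
    calc _ ≤ C m * h ^ m * G + m.factorial * h ^ m := add_le_add h2 h3
      _ = (C m * G + m.factorial) * h ^ m := by ring
      _ ≤ _ := by gcongr
  · intro Λ μ₀ δ h hμ₀ hδ hδb hh hh1 T hT hgap μ hμ
    simp only at hgap
    have hexp := Real.exp_pos (-(1 / h))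
    refine abstract_gap Λ T ?_ (⨅ m : ℕ, C m * h ^ m * G)
      ((⨅ m : ℕ, C m * h ^ m * G) + Real.exp (-(1 / h))) μ (hinf h hh) (by linarith)
      (by linarith [hμ.1]) ?_ ?_
    · intro j
      obtain ⟨D, hD0, hD⟩ := kernel_bound a₀ ha_smooth ε hε0 hε 0
      refine selfAdjoint_of_kernel h _ (continuous_shift a₀ hac j) (T j) (hT j) j.1 (D / h) ?_
      intro y z
      have h1 := hD h hh hh1 j y z
      rw [pow_zero, one_mul] at h1
      refine h1.trans ?_
      have h2 : 0 < vv (y - j.1) * vv (z - j.1) := mul_pos (vv_pos _) (vv_pos _)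
      have h3 : vv (y - j.1) * vv (z - j.1) ≤ 1 :=
        mul_le_one₀ (vv_le_one _) (vv_pos _).le (vv_le_one _)
      gcongr
      nlinarith
    · intro j hj
      apply le_ciInf
      intro m
      calc ∑ k ∈ Λ.erase j, √‖T j * T k‖ ≤ ∑ k ∈ Λ.erase j, C m * h ^ m * gg (j - k) := by
            refine Finset.sum_le_sum fun k hk => ?_
            exact hC m h hh hh1 j k (T j) (T k) (hT j) (hT k) (Finset.ne_of_mem_erase hk).symm
        _ = C m * h ^ m * ∑ k ∈ Λ.erase j, gg (j - k) := by rw [Finset.mul_sum]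
        _ ≤ _ := by
            have := hC0 m
            gcongr
            exact sum_gg_le _ _
    · intro j hj ν hν
      refine hgap j hj ν ⟨?_, ?_⟩
      · linarith [hμ.1, hν.1]
      · linarith [hμ.2, hν.2]
end
end

section
/- Let b₀ > 0 and let (M_N)_{N ∈ ℕ} be a sequence of positive constants. Let Λ̃ ⊂ ℤ² be finite, and for each j = (j₁,j₂) ∈ Λ̃ let a_j(x,y) := f_j(x − j₁, y − j₂), where f_j ∈ C_c^∞(ℝ²) is real-valued with supp f_j ⊂ (−1/2,1/2)² and sup |∂^α f_j| ≤ M_{|α|} for every multi-index α. Then there exists r : (0,1) → [0,∞) with r(h) = O(h^∞) (for every N there is C_N with r(h) ≤ C_N h^N for all h ∈ (0,1)), depending only on b₀ and (M_N) and not on Λ̃ or the f_j, such that for every μ₀ ≥ b₀, every 0 < δ < b₀/2, and every h ∈ (0,1): if there is j* ∈ Λ̃ such that the spectrum of â_j does not meet [μ₀ − (δ + r(h)), μ₀ + (δ + r(h))] for every j ∈ Λ̃ with j ≠ j*, while the spectrum of â_{j*} in [μ₀ − (δ + r(h)), μ₀ + (δ + r(h))] consists of at most one eigenvalue whose eigenspace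 is one-dimensional, then for A := Σ_{j ∈ Λ̃} â_j the sum over eigenvalues λ ∈ [μ₀ − δ, μ₀ + δ] of A of the dimension of the eigenspace ker(A − λ) is at most 1. -/
open MeasureTheory Complex Real
open scoped InnerProductSpace

noncomputable section

section AbstractPart
set_option linter.unusedSectionVars false
variable {H : Type*} [NormedAddCommGroup H] [InnerProductSpace ℂ H] [CompleteSpace H]
variable {ι : Type*} [DecidableEq ι]

/-- Weighted sums of words in the operators `T` beginning with the letter `T i`. -/
inductive WG (T : ι → H →L[ℂ] H) (i : ι) : ℝ → (H →L[ℂ] H) → Prop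
  | zero : WG T i 0 0
  | base (X : H →L[ℂ] H) (w : ℝ) (hw0 : 0 ≤ w) (hw : ‖T i * X‖ * ‖X‖ ≤ w ^ 2) : WG T i w (T i * X)
  | add (w w' : ℝ) (Y Y' : H →L[ℂ] H) (h : WG T i w Y) (h' : WG T i w' Y') :
      WG T i (w + w') (Y + Y')

theorem WG.norm_le {T : ι → H →L[ℂ] H} {i : ι} {m : ℝ} (hm : 0 ≤ m) (hT : ‖T i‖ ≤ m ^ 2) {w : ℝ}
    {Y : H →L[ℂ] H} (h : WG T i w Y) : ‖Y‖ ≤ m * w := by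
  induction h with
  | zero => simp
  | base X w hw0 hw =>
    have h1 : ‖T i * X‖ ≤ m ^ 2 * ‖X‖ := (norm_mul_le _ _).trans (by gcongr)
    refine abs_le_of_sq_le_sq' ?_ (by positivity) |>.2
    calc ‖T i * X‖ ^ 2 = ‖T i * X‖ * ‖T i * X‖ := by ring
      _ ≤ ‖T i * X‖ * (m ^ 2 * ‖X‖) := by gcongr
      _ = m ^ 2 * (‖T i * X‖ * ‖X‖) := by ring
      _ ≤ m ^ 2 * w ^ 2 := by gcongr
      _ = _ := by ring
  | add w w' Y Y' h h' ih ih' =>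
    calc _ ≤ ‖Y‖ + ‖Y'‖ := norm_add_le _ _
      _ ≤ _ := by linarith

theorem WG.step {T : ι → H →L[ℂ] H} {i a b : ι} {x y : ℝ} (hx : 0 ≤ x) (hy : 0 ≤ y)
    (h1 : ‖T a * T b‖ ≤ x ^ 2) (h2 : ‖T b * T i‖ ≤ y ^ 2) {w : ℝ}
    {Y : H →L[ℂ] H} (h : WG T i w Y) : WG T a (x * y * w) (T a * T b * Y) := by
  induction h with
  | zero => simpa using WG.zero
  | base X w hw0 hw =>
    rw [mul_assoc (T a)]
    refine WG.base _ _ (by positivity) ?_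
    have e1 : ‖T a * (T b * (T i * X))‖ ≤ x ^ 2 * ‖T i * X‖ := by
      rw [← mul_assoc]; exact (norm_mul_le _ _).trans (by gcongr)
    have e2 : ‖T b * (T i * X)‖ ≤ y ^ 2 * ‖X‖ := by
      rw [← mul_assoc]; exact (norm_mul_le _ _).trans (by gcongr)
    calc _ ≤ (x ^ 2 * ‖T i * X‖) * (y ^ 2 * ‖X‖) := by gcongr
      _ = x ^ 2 * y ^ 2 * (‖T i * X‖ * ‖X‖) := by ring
      _ ≤ x ^ 2 * y ^ 2 * w ^ 2 := by gcongr
      _ = _ := by ring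
  | add w w' Y Y' h h' ih ih' =>
    rw [mul_add, mul_add]
    exact WG.add _ _ _ _ ih ih'

theorem WG.sum {T : ι → H →L[ℂ] H} {i : ι} {κ : Type*} (s : Finset κ) (w : κ → ℝ)
    (Y : κ → H →L[ℂ] H) (h : ∀ k ∈ s, WG T i (w k) (Y k)) :
    WG T i (∑ k ∈ s, w k) (∑ k ∈ s, Y k) := by
  classical
  induction s using Finset.induction_on with
  | empty => simpa using WG.zero
  | insert a s ha ih =>
    rw [Finset.sum_insert ha, Finset.sum_insert ha]
    exact WG.add _ _ _ _ (h a (by simp)) (ih fun k hk => h k (by simp [hk]))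

theorem WG.nonneg {T : ι → H →L[ℂ] H} {i : ι} {w : ℝ}
    {Y : H →L[ℂ] H} (h : WG T i w Y) : 0 ≤ w := by
  induction h with
  | zero => simp
  | base X w hw0 hw => exact hw0
  | add w w' Y Y' h h' ih ih' => linarith

theorem WG.mono {T : ι → H →L[ℂ] H} {i : ι} {w w' : ℝ} (hw : w ≤ w')
    {Y : H →L[ℂ] H} (h : WG T i w Y) : WG T i w' Y := by
  have h0 : WG T i (w' - w) (T i * 0) := WG.base 0 _ (by linarith) (by simp; positivity)
  have := WG.add _ _ _ _ h h0
  simpa using this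

/-- Off-diagonal part -/
def offd (Λ : Finset ι) (T : ι → H →L[ℂ] H) : H →L[ℂ] H :=
  ∑ a ∈ Λ, ∑ b ∈ Λ.erase a, T a * T b

theorem offd_pow (Λ : Finset ι) (T : ι → H →L[ℂ] H) (e : ι → ι → ℝ) (he : ∀ i j, 0 ≤ e i j)
    (hT : ∀ i ∈ Λ, ∀ j ∈ Λ, ‖T i * T j‖ ≤ e i j ^ 2) (m η K : ℝ) (hm : 0 ≤ m) (hη : 0 ≤ η) (hK : 0 ≤ K)
    (hTm : ∀ i ∈ Λ, ‖T i‖ ≤ m ^ 2)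
    (hrow : ∀ i ∈ Λ, ∑ j ∈ Λ.erase i, e i j ≤ η) (hrow' : ∀ i ∈ Λ, ∑ j ∈ Λ, e i j ≤ K) (n : ℕ) :
    ∃ Y : ι → H →L[ℂ] H, offd Λ T ^ (n + 1) = ∑ i ∈ Λ, Y i ∧
      ∀ i ∈ Λ, WG T i (m * η * (η * K) ^ n) (Y i) := by
  induction n with
  | zero =>
    refine ⟨fun a => ∑ b ∈ Λ.erase a, T a * T b, by simp [offd], fun i hi => ?_⟩
    have := WG.sum (T := T) (i := i) (Λ.erase i) (fun b => e i b * m) (fun b => T i * T b)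
      (fun b hb => WG.base _ _ (mul_nonneg (he _ _) hm) (by
        rw [mul_pow]
        exact mul_le_mul (hT i hi b (Finset.mem_of_mem_erase hb)) (hTm b (Finset.mem_of_mem_erase hb))
          (norm_nonneg _) (by positivity)))
    refine this.mono ?_
    rw [← Finset.sum_mul, pow_zero, mul_one, mul_comm]
    exact mul_le_mul_of_nonneg_left (hrow i hi) hm
  | succ n ih =>
    obtain ⟨Y, hY, hG⟩ := ih
    refine ⟨fun a => ∑ b ∈ Λ.erase a, ∑ i ∈ Λ, T a * T b * Y i, ?_, fun a ha => ?_⟩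
    · rw [pow_succ', hY, offd]
      simp only [Finset.sum_mul, Finset.mul_sum]
      rw [Finset.sum_comm]
      exact Finset.sum_congr rfl fun a _ => Finset.sum_comm
    · have := WG.sum (T := T) (i := a) (Λ.erase a)
        (fun b => ∑ i ∈ Λ, e a b * e b i * (m * η * (η * K) ^ n)) _
        (fun b hb => WG.sum (T := T) (i := a) Λ _ (fun i => T a * T b * Y i) (fun i hi =>
          WG.step (he a b) (he b i) (hT a ha b (Finset.mem_of_mem_erase hb))
            (hT b (Finset.mem_of_mem_erase hb) i hi) (hG i hi)))
      refine this.mono ?_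
      simp only [← Finset.sum_mul, ← Finset.mul_sum]
      calc (∑ b ∈ Λ.erase a, e a b * ∑ i ∈ Λ, e b i) * (m * η * (η * K) ^ n)
          ≤ (∑ b ∈ Λ.erase a, e a b * K) * (m * η * (η * K) ^ n) := by
            gcongr with b hb
            · exact he _ _
            · exact hrow' b (Finset.mem_of_mem_erase hb)
        _ ≤ (η * K) * (m * η * (η * K) ^ n) := by
            rw [← Finset.sum_mul]
            gcongr
            exact hrow a ha
        _ = _ := by ring

theorem offd_selfAdjoint (Λ : Finset ι) (T : ι → H →L[ℂ] H) (hT : ∀ i ∈ Λ, IsSelfAdjoint (T i)) :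
    IsSelfAdjoint (offd Λ T) := by
  have e : offd Λ T = (∑ a ∈ Λ, T a) * (∑ a ∈ Λ, T a) - ∑ a ∈ Λ, T a * T a := by
    rw [Finset.sum_mul, ← Finset.sum_sub_distrib, offd]
    refine Finset.sum_congr rfl fun a ha => ?_
    rw [← Finset.add_sum_erase Λ T ha, mul_add, Finset.mul_sum]; abel
  have hA : IsSelfAdjoint (∑ a ∈ Λ, T a) := isSelfAdjoint_sum _ hT
  rw [e]
  refine IsSelfAdjoint.sub ?_ (isSelfAdjoint_sum _ fun i hi => ?_)
  · simpa using hA.pow 2 |> fun h => by simpa [pow_two] using h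
  · simpa [pow_two] using (hT i hi).pow 2

theorem offd_norm (Λ : Finset ι) (T : ι → H →L[ℂ] H) (hS : ∀ i ∈ Λ, IsSelfAdjoint (T i))
    (e : ι → ι → ℝ) (he : ∀ i j, 0 ≤ e i j)
    (hT : ∀ i ∈ Λ, ∀ j ∈ Λ, ‖T i * T j‖ ≤ e i j ^ 2) (m η K : ℝ) (hm : 0 ≤ m) (hη : 0 ≤ η) (hK : 0 ≤ K)
    (hTm : ∀ i ∈ Λ, ‖T i‖ ≤ m ^ 2)
    (hrow : ∀ i ∈ Λ, ∑ j ∈ Λ.erase i, e i j ≤ η) (hrow' : ∀ i ∈ Λ, ∑ j ∈ Λ, e i j ≤ K) :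
    ‖offd Λ T‖ ≤ η * K := by
  have key : ∀ n : ℕ, ‖offd Λ T ^ (n + 1)‖ ≤ (Λ.card * (m * (m * η))) * (η * K) ^ n := by
    intro n
    obtain ⟨Y, hY, hG⟩ := offd_pow Λ T e he hT m η K hm hη hK hTm hrow hrow' n
    rw [hY]
    calc _ ≤ ∑ i ∈ Λ, ‖Y i‖ := norm_sum_le _ _
      _ ≤ ∑ i ∈ Λ, m * (m * η * (η * K) ^ n) :=
        Finset.sum_le_sum fun i hi => (hG i hi).norm_le hm (hTm i hi)
      _ = _ := by simp; ring
  set C := Λ.card * (m * (m * η)) with hC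
  have hC0 : 0 ≤ C := by positivity
  by_contra hcon
  push Not at hcon
  set x := ‖offd Λ T‖
  have hx : 0 < x := lt_of_le_of_lt (by positivity) hcon
  have hq : ∀ k : ℕ, x ≤ C * ((η * K) / x) ^ (2 ^ k - 1) := by
    intro k
    have h1 := (offd_selfAdjoint Λ T hS).nnnorm_pow_two_pow k
    have h2 : ‖offd Λ T ^ 2 ^ k‖ = x ^ 2 ^ k := by
      have := congrArg NNReal.toReal h1; simpa using this
    have h3 := key (2 ^ k - 1)
    have h4 : 2 ^ k - 1 + 1 = 2 ^ k := Nat.sub_add_cancel Nat.one_le_two_pow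
    rw [h4, h2, ← h4, pow_succ] at h3
    simp only [Nat.add_sub_cancel] at h3
    rw [div_pow, ← mul_div_assoc, le_div_iff₀ (by positivity)]
    linarith
  have hlim : Filter.Tendsto (fun k : ℕ => C * ((η * K) / x) ^ (2 ^ k - 1)) Filter.atTop (nhds (C * 0)) := by
    refine Filter.Tendsto.const_mul _ ?_
    refine (tendsto_pow_atTop_nhds_zero_of_lt_one (by positivity) ((div_lt_one hx).2 hcon)).comp ?_
    exact Filter.tendsto_atTop_mono (fun k => Nat.le_sub_one_of_lt Nat.lt_two_pow_self) Filter.tendsto_id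
  have := ge_of_tendsto' hlim hq
  linarith [mul_zero C]

/-- one-sided almost orthogonality -/
theorem schur_col (Λ : Finset ι) (B : ι → H →L[ℂ] H) (b : ι → ι → ℝ) (hb : ∀ j k, b j k = b k j)
    (hB : ∀ j ∈ Λ, ∀ k ∈ Λ, ‖B j * star (B k)‖ ≤ b j k) (β : ℝ) (hβ : 0 ≤ β)
    (hrow : ∀ j ∈ Λ, ∑ k ∈ Λ, b j k ≤ β) (u : H) :
    ∑ j ∈ Λ, ‖B j u‖ ^ 2 ≤ β * ‖u‖ ^ 2 := by
  set S := ∑ j ∈ Λ, ‖B j u‖ ^ 2 with hS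
  have hS0 : 0 ≤ S := Finset.sum_nonneg fun _ _ => by positivity
  set V : H := ∑ j ∈ Λ, star (B j) (B j u) with hV
  have e1 : S = (⟪u, V⟫_ℂ).re := by
    rw [hV, inner_sum, Complex.re_sum, hS]
    refine Finset.sum_congr rfl fun j _ => ?_
    rw [ContinuousLinearMap.star_eq_adjoint, ContinuousLinearMap.adjoint_inner_right]
    exact (inner_self_eq_norm_sq (𝕜 := ℂ) (B j u)).symm
  have e2 : S ≤ ‖u‖ * ‖V‖ := by
    rw [e1]; exact (Complex.re_le_norm _).trans (norm_inner_le_norm _ _)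
  have e3 : ‖V‖ ^ 2 ≤ β * S := by
    have : ‖V‖ ^ 2 = (∑ j ∈ Λ, ∑ k ∈ Λ, ⟪B j u, (B j * star (B k)) (B k u)⟫_ℂ).re := by
      rw [← inner_self_eq_norm_sq (𝕜 := ℂ) V]
      change (⟪V, V⟫_ℂ).re = _
      rw [hV, sum_inner]
      congr 1
      refine Finset.sum_congr rfl fun j _ => ?_
      rw [inner_sum]
      refine Finset.sum_congr rfl fun k _ => ?_
      rw [ContinuousLinearMap.star_eq_adjoint, ContinuousLinearMap.adjoint_inner_left]
      rfl
    rw [this]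
    refine (Complex.re_le_norm _).trans ?_
    calc _ ≤ ∑ j ∈ Λ, ∑ k ∈ Λ, b j k * ((‖B j u‖ ^ 2 + ‖B k u‖ ^ 2) / 2) := by
          refine (norm_sum_le _ _).trans (Finset.sum_le_sum fun j hj => (norm_sum_le _ _).trans (Finset.sum_le_sum fun k hk => ?_))
          have h0 : 0 ≤ b j k := (norm_nonneg _).trans (hB j hj k hk)
          calc _ ≤ ‖B j u‖ * ‖(B j * star (B k)) (B k u)‖ := norm_inner_le_norm _ _
            _ ≤ ‖B j u‖ * (b j k * ‖B k u‖) := by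
              gcongr
              exact (ContinuousLinearMap.le_opNorm _ _).trans (by gcongr; exact hB j hj k hk)
            _ = b j k * (‖B j u‖ * ‖B k u‖) := by ring
            _ ≤ _ := by
              gcongr
              nlinarith [sq_nonneg (‖B j u‖ - ‖B k u‖)]
      _ = ∑ j ∈ Λ, (∑ k ∈ Λ, b j k) * ‖B j u‖ ^ 2 := by
          have h1 : ∀ j k, b j k * ((‖B j u‖ ^ 2 + ‖B k u‖ ^ 2) / 2) = b j k * ‖B j u‖ ^ 2 / 2 + b k j * ‖B k u‖ ^ 2 / 2 := by
            intro j k; rw [hb k j]; ring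
          simp only [h1, Finset.sum_add_distrib]
          rw [Finset.sum_comm (f := fun j k => b k j * ‖B k u‖ ^ 2 / 2)]
          rw [← Finset.sum_add_distrib]
          refine Finset.sum_congr rfl fun j _ => ?_
          rw [← Finset.sum_add_distrib, Finset.sum_mul]
          refine Finset.sum_congr rfl fun k _ => by ring
      _ ≤ ∑ j ∈ Λ, β * ‖B j u‖ ^ 2 := Finset.sum_le_sum fun j hj => by gcongr; exact hrow j hj
      _ = _ := by rw [← Finset.mul_sum]
  rcases hS0.eq_or_lt with h | h
  · rw [← h]; positivity
  · have h5 : S * S ≤ ‖u‖ ^ 2 * (β * S) := by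
      calc S * S ≤ (‖u‖ * ‖V‖) * (‖u‖ * ‖V‖) := by gcongr
        _ = ‖u‖ ^ 2 * ‖V‖ ^ 2 := by ring
        _ ≤ _ := by gcongr
    nlinarith [le_of_mul_le_mul_right (by linarith : S * S ≤ (β * ‖u‖ ^ 2) * S) h]

theorem spec_lemma (T : H →L[ℂ] H) (hT : IsSelfAdjoint T) (c ρ r : ℝ) (hr : 0 < r)
    (hsub : ∀ s ∈ Set.Ioo (c - (ρ + r)) (c + (ρ + r)), ∀ t ∈ Set.Ioo (c - (ρ + r)) (c + (ρ + r)),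
      s ∈ spectrum ℝ T → t ∈ spectrum ℝ T → s = t) :
    ∃ P : H →L[ℂ] H, (∀ μ ∈ Set.Icc (c - ρ) (c + ρ), ∀ x : H, r * ‖x - P x‖ ≤ ‖T x - (μ : ℂ) • x‖) ∧
      (P = 0 ∨ ∃ l ∈ Set.Ioo (c - (ρ + r)) (c + (ρ + r)), l ∈ spectrum ℝ T ∧ ∀ x, T (P x) = (l : ℂ) • P x) := by
  classical
  set I := Set.Ioo (c - (ρ + r)) (c + (ρ + r)) with hI
  have hfin : (I ∩ spectrum ℝ T).Subsingleton := fun s hs t ht => hsub s hs.1 t ht.1 hs.2 ht.2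
  have hcl : IsClosed (I ∩ spectrum ℝ T) := hfin.finite.isClosed
  have hcont : ∀ f : ℝ → ℝ, ContinuousOn f (spectrum ℝ T \ I) →
      ContinuousOn (fun t => if t ∈ I then 0 else f t) (spectrum ℝ T) := by
    intro f hf t ht
    by_cases htI : t ∈ I
    · refine ContinuousAt.continuousWithinAt ?_
      refine (continuousAt_const (y := (0:ℝ))).congr ?_
      filter_upwards [isOpen_Ioo.mem_nhds htI] with s hs
      simp [hs, hI]
    · have h1 : ContinuousWithinAt f (spectrum ℝ T \ I) t := hf t ⟨ht, htI⟩
      have h2 : ContinuousWithinAt f (spectrum ℝ T) t := by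
        refine h1.mono_of_mem_nhdsWithin ?_
        have h3 : (I ∩ spectrum ℝ T)ᶜ ∈ nhds t := hcl.isOpen_compl.mem_nhds (fun h => htI h.1)
        filter_upwards [mem_nhdsWithin_of_mem_nhds h3, self_mem_nhdsWithin] with s hs hs'
        exact ⟨hs', fun h => hs ⟨h, hs'⟩⟩
      refine h2.congr_of_eventuallyEq ?_ (by simp [htI])
      have h3 : (I ∩ spectrum ℝ T)ᶜ ∈ nhds t := hcl.isOpen_compl.mem_nhds (fun h => htI h.1)
      filter_upwards [mem_nhdsWithin_of_mem_nhds h3, self_mem_nhdsWithin] with s hs hs'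
      have : s ∉ I := fun h => hs ⟨h, hs'⟩
      simp [this]
  set p' : ℝ → ℝ := fun t => if t ∈ I then 0 else 1 with hp'
  have hp'c : ContinuousOn p' (spectrum ℝ T) := hcont (fun _ => 1) continuousOn_const
  refine ⟨1 - cfc p' T, ?_, ?_⟩
  · intro μ hμ x
    have hsep : ∀ t, t ∉ I → r ≤ |t - μ| := by
      intro t ht
      rw [hI, Set.mem_Ioo, not_and_or, not_lt, not_lt] at ht
      rw [le_abs]
      rcases ht with h | h
      · right; linarith [hμ.1]
      · left; linarith [hμ.2]
    set q : ℝ → ℝ := fun t => if t ∈ I then 0 else (t - μ)⁻¹ with hq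
    have hqc : ContinuousOn q (spectrum ℝ T) := by
      refine hcont _ (ContinuousOn.inv₀ (by fun_prop) ?_)
      intro t ht h0
      have := hsep t ht.2
      rw [h0] at this; simp at this; linarith
    have e1 : cfc q T * (T - (algebraMap ℝ _ μ)) = cfc p' T := by
      have h1 : T - (algebraMap ℝ (H →L[ℂ] H) μ) = cfc (fun t : ℝ => t - μ) T := by
        rw [cfc_sub (fun t : ℝ => t) (fun _ => μ) T (by fun_prop) (by fun_prop), cfc_id' ℝ T, cfc_const μ T]
      rw [h1, ← cfc_mul q (fun t : ℝ => t - μ) T hqc (by fun_prop)]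
      refine cfc_congr fun t ht => ?_
      simp only [hq, hp']
      split_ifs with h
      · simp
      · have := hsep t h
        have h0 : t - μ ≠ 0 := by intro h0; rw [h0] at this; simp at this; linarith
        exact inv_mul_cancel₀ h0
    have e2 : ‖cfc q T‖ ≤ r⁻¹ := by
      refine norm_cfc_le (by positivity) fun t ht => ?_
      simp only [hq]
      split_ifs with h
      · simp; positivity
      · rw [norm_inv, Real.norm_eq_abs]
        exact inv_anti₀ hr (hsep t h)
    have e3 : x - (1 - cfc p' T) x = cfc q T (T x - (μ : ℂ) • x) := by
      rw [← e1]
      have : (algebraMap ℝ (H →L[ℂ] H) μ) x = (μ : ℂ) • x := by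
        simp [Algebra.algebraMap_eq_smul_one]
      simp [this]
    rw [e3]
    calc _ ≤ r * (r⁻¹ * ‖T x - (μ : ℂ) • x‖) := by
          gcongr
          exact (ContinuousLinearMap.le_opNorm _ _).trans (by gcongr)
      _ = _ := by rw [← mul_assoc, mul_inv_cancel₀ hr.ne', one_mul]
  · by_cases hex : ∃ l ∈ I, l ∈ spectrum ℝ T
    · right
      obtain ⟨l, hl, hls⟩ := hex
      refine ⟨l, hl, hls, fun x => ?_⟩
      have h1 : T - (algebraMap ℝ (H →L[ℂ] H) l) = cfc (fun t : ℝ => t - l) T := by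
        rw [cfc_sub (fun t : ℝ => t) (fun _ => l) T (by fun_prop) (by fun_prop), cfc_id' ℝ T, cfc_const l T]
      have h2 : (1 : H →L[ℂ] H) - cfc p' T = cfc (fun t => 1 - p' t) T := by
        rw [cfc_sub (fun _ : ℝ => (1:ℝ)) p' T (by fun_prop) hp'c, cfc_const_one ℝ T]
      have h3 : (T - (algebraMap ℝ (H →L[ℂ] H) l)) * (1 - cfc p' T) = 0 := by
        rw [h1, h2, ← cfc_mul _ _ T (by fun_prop) (by fun_prop)]
        rw [← cfc_zero ℝ T]
        refine cfc_congr fun t ht => ?_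
        simp only [hp']
        split_ifs with h
        · simp [hsub t h l hl ht hls]
        · simp
      have h4 := congrArg (fun S : H →L[ℂ] H => S x) h3
      have h5 : ∀ y, (algebraMap ℝ (H →L[ℂ] H) l) y = (l : ℂ) • y := by
        intro y; simp [Algebra.algebraMap_eq_smul_one]
      simp only [mul_apply_eq_comp, sub_apply T, h5] at h4
      exact sub_eq_zero.1 h4
    · left
      push Not at hex
      have : cfc p' T = cfc (fun _ : ℝ => (1:ℝ)) T := cfc_congr fun t ht => by
        have : t ∉ I := fun h => hex t h ht
        simp [hp', this]
      rw [this, cfc_const_one ℝ T, sub_self]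

theorem spec_real (T : H →L[ℂ] H) (t : ℝ) : t ∈ spectrum ℝ T ↔ (t : ℂ) ∈ spectrum ℂ T := by
  have := spectrum.algebraMap_mem_iff ℂ (R := ℝ) (a := T) (r := t)
  simpa using this.symm


theorem word4 (A B C D : H →L[ℂ] H) (x y z m : ℝ) (hx : 0 ≤ x) (hy : 0 ≤ y) (hz : 0 ≤ z)
    (h1 : ‖A * B‖ ≤ x ^ 2) (h2 : ‖B * C‖ ≤ y ^ 2) (h3 : ‖C * D‖ ≤ z ^ 2)
    (hA : ‖A‖ ≤ m ^ 2) (hD : ‖D‖ ≤ m ^ 2) : ‖A * B * (C * D)‖ ≤ m ^ 2 * (x * y * z) := by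
  have e1 : ‖A * B * (C * D)‖ ≤ x ^ 2 * z ^ 2 :=
    (norm_mul_le _ _).trans (mul_le_mul h1 h3 (norm_nonneg _) (by positivity))
  have e2 : ‖A * B * (C * D)‖ ≤ m ^ 2 * y ^ 2 * m ^ 2 := by
    have : A * B * (C * D) = A * (B * C) * D := by simp only [mul_assoc]
    rw [this]
    refine (norm_mul_le _ _).trans (mul_le_mul ?_ hD (norm_nonneg _) (by positivity))
    exact (norm_mul_le _ _).trans (mul_le_mul hA h2 (norm_nonneg _) (by positivity))
  refine abs_le_of_sq_le_sq' ?_ (by positivity) |>.2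
  calc _ = ‖A * B * (C * D)‖ * ‖A * B * (C * D)‖ := by ring
    _ ≤ (x ^ 2 * z ^ 2) * (m ^ 2 * y ^ 2 * m ^ 2) := mul_le_mul e1 e2 (norm_nonneg _) (by positivity)
    _ = _ := by ring

theorem Bop_sum (Λ : Finset ι) (T : ι → H →L[ℂ] H) (hS : ∀ i ∈ Λ, IsSelfAdjoint (T i))
    (e : ι → ι → ℝ) (he : ∀ i j, 0 ≤ e i j) (hsymm : ∀ i j, e i j = e j i)
    (hT : ∀ i ∈ Λ, ∀ j ∈ Λ, ‖T i * T j‖ ≤ e i j ^ 2) (m η K : ℝ) (hη : 0 ≤ η) (hK : 0 ≤ K)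
    (hTm : ∀ i ∈ Λ, ‖T i‖ ≤ m ^ 2)
    (hrow : ∀ i ∈ Λ, ∑ j ∈ Λ.erase i, e i j ≤ η) (hrow' : ∀ i ∈ Λ, ∑ j ∈ Λ, e i j ≤ K) (u : H) :
    ∑ j ∈ Λ, ‖(T j * ∑ i ∈ Λ.erase j, T i) u‖ ^ 2 ≤ (m ^ 2 * (η * K * η)) * ‖u‖ ^ 2 := by
  refine schur_col Λ (fun j => T j * ∑ i ∈ Λ.erase j, T i)
    (fun j k => ∑ i ∈ Λ.erase j, ∑ l ∈ Λ.erase k, m ^ 2 * (e j i * e i l * e l k)) ?_ ?_ _ (by positivity) ?_ u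
  · intro j k
    rw [Finset.sum_comm]
    refine Finset.sum_congr rfl fun l _ => Finset.sum_congr rfl fun i _ => ?_
    rw [hsymm j i, hsymm i l, hsymm l k]; ring
  · intro j hj k hk
    have e1 : star (T k * ∑ i ∈ Λ.erase k, T i) = (∑ l ∈ Λ.erase k, T l) * T k := by
      rw [star_mul, (hS k hk).star_eq,
        (isSelfAdjoint_sum _ fun i hi => hS i (Finset.mem_of_mem_erase hi)).star_eq]
    have e2 : (T j * ∑ i ∈ Λ.erase j, T i) * star (T k * ∑ i ∈ Λ.erase k, T i) =
        ∑ i ∈ Λ.erase j, ∑ l ∈ Λ.erase k, T j * T i * (T l * T k) := by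
      rw [e1]
      rw [Finset.mul_sum, Finset.sum_mul]
      refine Finset.sum_congr rfl fun i _ => ?_
      rw [Finset.sum_mul, Finset.mul_sum]
    rw [e2]
    refine (norm_sum_le _ _).trans (Finset.sum_le_sum fun i hi => (norm_sum_le _ _).trans
      (Finset.sum_le_sum fun l hl => ?_))
    have hi' := Finset.mem_of_mem_erase hi
    have hl' := Finset.mem_of_mem_erase hl
    exact word4 _ _ _ _ _ _ _ _ (he _ _) (he _ _) (he _ _) (hT j hj i hi') (hT i hi' l hl') (hT l hl' k hk)
      (hTm j hj) (hTm k hk)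
  · intro j hj
    have hswap : ∀ i, ∑ k ∈ Λ, ∑ l ∈ Λ.erase k, m ^ 2 * (e j i * e i l * e l k) =
        ∑ l ∈ Λ, ∑ k ∈ Λ.erase l, m ^ 2 * (e j i * e i l * e l k) := by
      intro i
      refine Finset.sum_comm' ?_
      intro x y
      simp only [Finset.mem_erase]
      tauto
    rw [Finset.sum_comm]
    simp only [hswap]
    simp only [← Finset.mul_sum]
    refine mul_le_mul_of_nonneg_left ?_ (by positivity)
    calc _ ≤ ∑ i ∈ Λ.erase j, ∑ l ∈ Λ, e j i * e i l * η :=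
          Finset.sum_le_sum fun i hi => Finset.sum_le_sum fun l hl =>
            mul_le_mul_of_nonneg_left (hrow l hl) (mul_nonneg (he _ _) (he _ _))
      _ = ∑ i ∈ Λ.erase j, e j i * (∑ l ∈ Λ, e i l) * η := by
          simp only [← Finset.sum_mul, ← Finset.mul_sum]
      _ ≤ ∑ i ∈ Λ.erase j, e j i * K * η :=
          Finset.sum_le_sum fun i hi => by
            have := hrow' i (Finset.mem_of_mem_erase hi)
            have := he j i
            gcongr
      _ ≤ _ := by
          rw [← Finset.sum_mul, ← Finset.sum_mul]
          have := hrow j hj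
          gcongr

theorem norm_comb_sq (a b : ℂ) (u v : H) (h : ⟪u, v⟫_ℂ = 0) :
    ‖a • u + b • v‖ ^ 2 = ‖a‖ ^ 2 * ‖u‖ ^ 2 + ‖b‖ ^ 2 * ‖v‖ ^ 2 := by
  have h1 : ⟪a • u, b • v⟫_ℂ = 0 := by rw [inner_smul_left, inner_smul_right, h]; simp
  have := norm_add_sq_eq_norm_sq_add_norm_sq_of_inner_eq_zero _ _ h1
  rw [pow_two, this, norm_smul, norm_smul]; ring

theorem norm_sum_sq (Λ : Finset ι) (T : ι → H →L[ℂ] H) (hS : ∀ i ∈ Λ, IsSelfAdjoint (T i)) (z : H) :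
    ‖(∑ j ∈ Λ, T j) z‖ ^ 2 ≤ ∑ j ∈ Λ, ‖T j z‖ ^ 2 + ‖offd Λ T‖ * ‖z‖ ^ 2 := by
  have e0 : ‖(∑ j ∈ Λ, T j) z‖ ^ 2 = (∑ j ∈ Λ, ∑ k ∈ Λ, ⟪T j z, T k z⟫_ℂ).re := by
    rw [← inner_self_eq_norm_sq (𝕜 := ℂ)]
    change (⟪_, _⟫_ℂ).re = _
    rw [sum_apply, sum_inner]
    simp only [inner_sum]
  have e1 : ∑ j ∈ Λ, ∑ k ∈ Λ, ⟪T j z, T k z⟫_ℂ = ∑ j ∈ Λ, ((‖T j z‖ ^ 2 : ℝ) : ℂ) + ⟪z, offd Λ T z⟫_ℂ := by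
    rw [offd, sum_apply, inner_sum, ← Finset.sum_add_distrib]
    refine Finset.sum_congr rfl fun j hj => ?_
    rw [← Finset.add_sum_erase _ _ hj, sum_apply, inner_sum]
    congr 1
    · rw [inner_self_eq_norm_sq_to_K]; simp
    · refine Finset.sum_congr rfl fun k hk => ?_
      have := (ContinuousLinearMap.isSelfAdjoint_iff_isSymmetric.1 (hS j hj)) z (T k z)
      exact this
  rw [e0, e1, Complex.add_re, ← Complex.ofReal_sum, Complex.ofReal_re]
  gcongr
  calc _ ≤ ‖⟪z, offd Λ T z⟫_ℂ‖ := Complex.re_le_norm _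
    _ ≤ ‖z‖ * ‖offd Λ T z‖ := norm_inner_le_norm _ _
    _ ≤ ‖z‖ * (‖offd Λ T‖ * ‖z‖) := by gcongr; exact ContinuousLinearMap.le_opNorm _ _
    _ = _ := by ring

theorem Bop_eig (Λ : Finset ι) (T : ι → H →L[ℂ] H) (j : ι) (hj : j ∈ Λ) (u : H) (μ : ℝ)
    (hu : (∑ j ∈ Λ, T j) u = (μ : ℂ) • u) :
    ‖T j (T j u) - (μ : ℂ) • T j u‖ = ‖(T j * ∑ i ∈ Λ.erase j, T i) u‖ := by
  have h : (∑ i ∈ Λ.erase j, T i) u = (μ : ℂ) • u - T j u := by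
    rw [← hu, ← Finset.add_sum_erase Λ T hj]; simp
  rw [mul_apply_eq_comp, h, map_sub, map_smul, norm_sub_rev]

theorem exists_comb (T : H →L[ℂ] H) (l : ℝ) (p q : H) (hp : T p = (l : ℂ) • p) (hq : T q = (l : ℂ) • q)
    (hs : ∀ u v : H, T u = (l : ℂ) • u → T v = (l : ℂ) • v → u ≠ 0 → v ≠ 0 → ⟪u, v⟫_ℂ = 0 → False) :
    ∃ a b : ℂ, (a ≠ 0 ∨ b ≠ 0) ∧ a • p + b • q = 0 := by
  by_cases hp0 : p = 0
  · exact ⟨1, 0, by simp, by simp [hp0]⟩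
  · have hpp : ⟪p, p⟫_ℂ ≠ 0 := by simpa using hp0
    refine ⟨-(⟪p, q⟫_ℂ / ⟪p, p⟫_ℂ), 1, by simp, ?_⟩
    by_contra hne
    refine hs p _ hp ?_ hp0 hne ?_
    · rw [map_add, map_smul, map_smul, hp, hq, smul_add, smul_comm, smul_comm (l : ℂ) (1 : ℂ)]
    · rw [inner_add_right, inner_smul_right, inner_smul_right]; field_simp; ring

theorem final_step (Λ : Finset ι) (T : ι → H →L[ℂ] H) (hS : ∀ i ∈ Λ, IsSelfAdjoint (T i))
    (b₀ μ₀ δ r εa εb : ℝ) (hb₀ : 0 < b₀) (hμ₀ : b₀ ≤ μ₀) (hδ : δ < b₀ / 2) (hr : 0 < r)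
    (hBa : ∀ u, ∑ j ∈ Λ, ‖(T j * ∑ i ∈ Λ.erase j, T i) u‖ ^ 2 ≤ εa * ‖u‖ ^ 2)
    (hE : ‖offd Λ T‖ ≤ εb) (hnum : 2 * εa / r ^ 2 + εb < b₀ ^ 2 / 4)
    (jstar : ι) (hj : jstar ∈ Λ)
    (h1 : ∀ j ∈ Λ, j ≠ jstar → ∀ μ ∈ Set.Icc (μ₀ - (δ + r)) (μ₀ + (δ + r)), (μ : ℂ) ∉ spectrum ℂ (T j))
    (h2 : ∀ μ₁ ∈ Set.Icc (μ₀ - (δ + r)) (μ₀ + (δ + r)),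
                ∀ μ₂ ∈ Set.Icc (μ₀ - (δ + r)) (μ₀ + (δ + r)),
                  (μ₁ : ℂ) ∈ spectrum ℂ (T jstar) →
                  (μ₂ : ℂ) ∈ spectrum ℂ (T jstar) → μ₁ = μ₂)
    (h3 : ∀ μ ∈ Set.Icc (μ₀ - (δ + r)) (μ₀ + (δ + r)),
                ∀ u v : H, T jstar u = (μ : ℂ) • u → T jstar v = (μ : ℂ) • v →
                  u ≠ 0 → v ≠ 0 → ⟪u, v⟫_ℂ = 0 → False)
    (μ₁ : ℝ) (hμ₁ : μ₁ ∈ Set.Icc (μ₀ - δ) (μ₀ + δ)) (μ₂ : ℝ) (hμ₂ : μ₂ ∈ Set.Icc (μ₀ - δ) (μ₀ + δ))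
    (u v : H) (hu : (∑ j ∈ Λ, T j) u = (μ₁ : ℂ) • u) (hv : (∑ j ∈ Λ, T j) v = (μ₂ : ℂ) • v)
    (hu0 : u ≠ 0) (hv0 : v ≠ 0) (huv : μ₁ ≠ μ₂ ∨ ⟪u, v⟫_ℂ = 0) : False := by
  have horth : ⟪u, v⟫_ℂ = 0 := by
    rcases huv with h | h
    · have hA : IsSelfAdjoint (∑ j ∈ Λ, T j) := isSelfAdjoint_sum _ hS
      have := (ContinuousLinearMap.isSelfAdjoint_iff_isSymmetric.1 hA) u v
      change ⟪(∑ j ∈ Λ, T j) u, v⟫_ℂ = ⟪u, (∑ j ∈ Λ, T j) v⟫_ℂ at this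
      rw [hu, hv, inner_smul_left, inner_smul_right, Complex.conj_ofReal] at this
      have h' : ((μ₁ : ℂ) - μ₂) * ⟪u, v⟫_ℂ = 0 := by rw [sub_mul, this, sub_self]
      rcases mul_eq_zero.1 h' with h'' | h''
      · exact absurd (by exact_mod_cast sub_eq_zero.1 h'') h
      · exact h''
    · exact h
  have hex : ∀ j ∈ Λ, ∃ P : H →L[ℂ] H, (∀ μ ∈ Set.Icc (μ₀ - δ) (μ₀ + δ), ∀ x : H, r * ‖x - P x‖ ≤ ‖T j x - (μ : ℂ) • x‖) ∧
      (P = 0 ∨ ∃ l ∈ Set.Ioo (μ₀ - (δ + r)) (μ₀ + (δ + r)), l ∈ spectrum ℝ (T j) ∧ ∀ x, T j (P x) = (l : ℂ) • P x) := by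
    intro j hjm
    refine spec_lemma (T j) (hS j hjm) μ₀ δ r hr ?_
    intro s hs t ht hss hts
    by_cases hjj : j = jstar
    · subst hjj
      exact h2 s (Set.Ioo_subset_Icc_self hs) t (Set.Ioo_subset_Icc_self ht) ((spec_real _ _).1 hss) ((spec_real _ _).1 hts)
    · exact absurd ((spec_real _ _).1 hss) (h1 j hjm hjj s (Set.Ioo_subset_Icc_self hs))
  choose! P hP hP' using hex
  have hP0 : ∀ j ∈ Λ, j ≠ jstar → P j = 0 := by
    intro j hjm hjj
    rcases hP' j hjm with h | ⟨l, hl, hls, -⟩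
    · exact h
    · exact absurd ((spec_real _ _).1 hls) (h1 j hjm hjj l (Set.Ioo_subset_Icc_self hl))
  obtain ⟨a, b, hab, hcomb⟩ : ∃ a b : ℂ, (a ≠ 0 ∨ b ≠ 0) ∧
      a • P jstar (T jstar u) + b • P jstar (T jstar v) = 0 := by
    rcases hP' jstar hj with h | ⟨l, hl, hls, hlP⟩
    · exact ⟨1, 0, by simp, by simp [h]⟩
    · exact exists_comb (T jstar) l _ _ (hlP _) (hlP _) (h3 l (Set.Ioo_subset_Icc_self hl))
  set z := a • u + b • v with hz
  have hz2 : ‖z‖ ^ 2 = ‖a‖ ^ 2 * ‖u‖ ^ 2 + ‖b‖ ^ 2 * ‖v‖ ^ 2 := norm_comb_sq a b u v horth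
  have hzpos : 0 < ‖z‖ ^ 2 := by
    rw [hz2]
    have := norm_pos_iff.2 hu0
    have := norm_pos_iff.2 hv0
    rcases hab with h | h
    · have := norm_pos_iff.2 h; positivity
    · have := norm_pos_iff.2 h; positivity
  have hPz : ∀ j ∈ Λ, P j (T j z) = 0 := by
    intro j hjm
    by_cases hjj : j = jstar
    · subst hjj
      rw [hz]; simpa using hcomb
    · rw [hP0 j hjm hjj]; simp
  have hTz : ∀ j ∈ Λ, r ^ 2 * ‖T j z‖ ^ 2 ≤ 2 * (‖a‖ ^ 2 * ‖(T j * ∑ i ∈ Λ.erase j, T i) u‖ ^ 2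
      + ‖b‖ ^ 2 * ‖(T j * ∑ i ∈ Λ.erase j, T i) v‖ ^ 2) := by
    intro j hjm
    have k1 := hP j hjm μ₁ hμ₁ (T j u)
    have k2 := hP j hjm μ₂ hμ₂ (T j v)
    rw [Bop_eig Λ T j hjm u μ₁ hu] at k1
    rw [Bop_eig Λ T j hjm v μ₂ hv] at k2
    have k3 : T j z = a • (T j u - P j (T j u)) + b • (T j v - P j (T j v)) := by
      have : T j z = T j z - P j (T j z) := by rw [hPz j hjm, sub_zero]
      rw [this, hz]
      simp only [map_add, map_smul, smul_sub]
      abel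
    have k4 : r * ‖T j z‖ ≤ ‖a‖ * ‖(T j * ∑ i ∈ Λ.erase j, T i) u‖ + ‖b‖ * ‖(T j * ∑ i ∈ Λ.erase j, T i) v‖ := by
      calc r * ‖T j z‖ ≤ r * (‖a‖ * ‖T j u - P j (T j u)‖ + ‖b‖ * ‖T j v - P j (T j v)‖) := by
            rw [k3]
            gcongr
            exact (norm_add_le _ _).trans (by rw [norm_smul, norm_smul])
        _ = ‖a‖ * (r * ‖T j u - P j (T j u)‖) + ‖b‖ * (r * ‖T j v - P j (T j v)‖) := by ring
        _ ≤ _ := by gcongr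
    set x := ‖a‖ * ‖(T j * ∑ i ∈ Λ.erase j, T i) u‖
    set y := ‖b‖ * ‖(T j * ∑ i ∈ Λ.erase j, T i) v‖
    have k5 : (r * ‖T j z‖) ^ 2 ≤ (x + y) ^ 2 := by gcongr
    rw [← mul_pow, ← mul_pow, ← mul_pow]
    nlinarith [sq_nonneg (x - y)]
  have hsum : r ^ 2 * ∑ j ∈ Λ, ‖T j z‖ ^ 2 ≤ 2 * εa * ‖z‖ ^ 2 := by
    rw [Finset.mul_sum]
    refine (Finset.sum_le_sum hTz).trans ?_
    rw [← Finset.mul_sum, Finset.sum_add_distrib, ← Finset.mul_sum, ← Finset.mul_sum, hz2]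
    have := mul_le_mul_of_nonneg_left (hBa u) (sq_nonneg ‖a‖)
    have := mul_le_mul_of_nonneg_left (hBa v) (sq_nonneg ‖b‖)
    linarith
  have hsum' : ∑ j ∈ Λ, ‖T j z‖ ^ 2 ≤ 2 * εa / r ^ 2 * ‖z‖ ^ 2 := by
    rw [div_mul_eq_mul_div, le_div_iff₀ (by positivity)]; linarith
  have hAz : ‖(∑ j ∈ Λ, T j) z‖ ^ 2 = ‖a‖ ^ 2 * μ₁ ^ 2 * ‖u‖ ^ 2 + ‖b‖ ^ 2 * μ₂ ^ 2 * ‖v‖ ^ 2 := by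
    rw [hz, map_add, map_smul, map_smul, hu, hv, smul_smul, smul_smul, norm_comb_sq _ _ _ _ horth]
    simp [mul_pow]
  have hlow : b₀ ^ 2 / 4 * ‖z‖ ^ 2 ≤ ‖(∑ j ∈ Λ, T j) z‖ ^ 2 := by
    rw [hAz, hz2]
    have l1 : b₀ ^ 2 / 4 ≤ μ₁ ^ 2 := by nlinarith [hμ₁.1]
    have l2 : b₀ ^ 2 / 4 ≤ μ₂ ^ 2 := by nlinarith [hμ₂.1]
    have := mul_le_mul_of_nonneg_left l1 (by positivity : 0 ≤ ‖a‖ ^ 2 * ‖u‖ ^ 2)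
    have := mul_le_mul_of_nonneg_left l2 (by positivity : 0 ≤ ‖b‖ ^ 2 * ‖v‖ ^ 2)
    linarith
  have hup := norm_sum_sq Λ T hS z
  have := mul_le_mul_of_nonneg_right hE hzpos.le
  nlinarith

theorem abstract_main (Λ : Finset ι) (T : ι → H →L[ℂ] H) (hS : ∀ i ∈ Λ, IsSelfAdjoint (T i))
    (e : ι → ι → ℝ) (he : ∀ i j, 0 ≤ e i j) (hsymm : ∀ i j, e i j = e j i)
    (hT : ∀ i ∈ Λ, ∀ j ∈ Λ, ‖T i * T j‖ ≤ e i j ^ 2) (m η K : ℝ) (hm : 0 ≤ m) (hη : 0 ≤ η) (hK : 0 ≤ K)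
    (hTm : ∀ i ∈ Λ, ‖T i‖ ≤ m ^ 2)
    (hrow : ∀ i ∈ Λ, ∑ j ∈ Λ.erase i, e i j ≤ η) (hrow' : ∀ i ∈ Λ, ∑ j ∈ Λ, e i j ≤ K)
    (b₀ μ₀ δ r : ℝ) (hb₀ : 0 < b₀) (hμ₀ : b₀ ≤ μ₀) (hδ : δ < b₀ / 2) (hr : 0 < r)
    (hnum : 2 * (m ^ 2 * (η * K * η)) / r ^ 2 + η * K < b₀ ^ 2 / 4 ∨
      2 * m ^ 2 + m ^ 2 * (η * K * η) + η * K + 1 < r)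
    (jstar : ι) (hj : jstar ∈ Λ)
    (h1 : ∀ j ∈ Λ, j ≠ jstar → ∀ μ ∈ Set.Icc (μ₀ - (δ + r)) (μ₀ + (δ + r)), (μ : ℂ) ∉ spectrum ℂ (T j))
    (h2 : ∀ μ₁ ∈ Set.Icc (μ₀ - (δ + r)) (μ₀ + (δ + r)),
                ∀ μ₂ ∈ Set.Icc (μ₀ - (δ + r)) (μ₀ + (δ + r)),
                  (μ₁ : ℂ) ∈ spectrum ℂ (T jstar) →
                  (μ₂ : ℂ) ∈ spectrum ℂ (T jstar) → μ₁ = μ₂)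
    (h3 : ∀ μ ∈ Set.Icc (μ₀ - (δ + r)) (μ₀ + (δ + r)),
                ∀ u v : H, T jstar u = (μ : ℂ) • u → T jstar v = (μ : ℂ) • v →
                  u ≠ 0 → v ≠ 0 → ⟪u, v⟫_ℂ = 0 → False)
    (μ₁ : ℝ) (hμ₁ : μ₁ ∈ Set.Icc (μ₀ - δ) (μ₀ + δ)) (μ₂ : ℝ) (hμ₂ : μ₂ ∈ Set.Icc (μ₀ - δ) (μ₀ + δ))
    (u v : H) (hu : (∑ j ∈ Λ, T j) u = (μ₁ : ℂ) • u) (hv : (∑ j ∈ Λ, T j) v = (μ₂ : ℂ) • v)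
    (hu0 : u ≠ 0) (hv0 : v ≠ 0) (huv : μ₁ ≠ μ₂ ∨ ⟪u, v⟫_ℂ = 0) : False := by
  have hBa := Bop_sum Λ T hS e he hsymm hT m η K hη hK hTm hrow hrow'
  have hE := offd_norm Λ T hS e he hT m η K hm hη hK hTm hrow hrow'
  rcases hnum with hnum | hnum
  · exact final_step Λ T hS b₀ μ₀ δ r _ _ hb₀ hμ₀ hδ hr hBa hE hnum jstar hj h1 h2 h3 μ₁ hμ₁ μ₂ hμ₂ u v hu hv hu0 hv0 huv
  by_cases hsing : Λ = {jstar}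
  · subst hsing
    refine final_step {jstar} T hS b₀ μ₀ δ r 0 0 hb₀ hμ₀ hδ hr ?_ ?_ ?_ jstar hj h1 h2 h3 μ₁ hμ₁ μ₂ hμ₂ u v hu hv hu0 hv0 huv
    · intro u; simp
    · simp [offd]
    · simp; positivity
  · obtain ⟨j, hjm, hjj⟩ : ∃ j ∈ Λ, j ≠ jstar := by
      by_contra hcon
      push Not at hcon
      exact hsing (Finset.eq_singleton_iff_unique_mem.2 ⟨hj, hcon⟩)
    have hgap : ∀ i ∈ Λ, i ≠ jstar → ∀ x, r * ‖x‖ ≤ ‖T i x - (μ₁ : ℂ) • x‖ := by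
      intro i hi hij x
      obtain ⟨P, hP, hP'⟩ := spec_lemma (T i) (hS i hi) μ₀ δ r hr (fun s hs t ht hss hts =>
        absurd ((spec_real _ _).1 hss) (h1 i hi hij s (Set.Ioo_subset_Icc_self hs)))
      have : P = 0 := by
        rcases hP' with h | ⟨l, hl, hls, -⟩
        · exact h
        · exact absurd ((spec_real _ _).1 hls) (h1 i hi hij l (Set.Ioo_subset_Icc_self hl))
      have := hP μ₁ hμ₁ x
      simpa [‹P = 0›] using this
    have hupos := norm_pos_iff.2 hu0
    have hμpos : 0 < μ₁ := by linarith [hμ₁.1]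
    have hr1 : r ≤ m ^ 2 + μ₁ := by
      have := hgap j hjm hjj u
      have h5 : ‖T j u - (μ₁ : ℂ) • u‖ ≤ m ^ 2 * ‖u‖ + μ₁ * ‖u‖ := by
        refine (norm_sub_le _ _).trans ?_
        rw [norm_smul, Complex.norm_real, Real.norm_of_nonneg hμpos.le]
        gcongr
        exact (ContinuousLinearMap.le_opNorm _ _).trans (by gcongr; exact hTm j hjm)
      nlinarith
    have hr2 : 1 ≤ r := by
      have : 0 ≤ 2 * m ^ 2 + m ^ 2 * (η * K * η) + η * K := by positivity
      linarith
    have hup := norm_sum_sq Λ T hS u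
    have hμ2 : ‖(∑ j ∈ Λ, T j) u‖ ^ 2 = μ₁ ^ 2 * ‖u‖ ^ 2 := by
      rw [hu, norm_smul, Complex.norm_real, mul_pow, Real.norm_eq_abs, sq_abs]
    have hsum : ∑ i ∈ Λ, ‖T i u‖ ^ 2 ≤ (m ^ 2 * ‖u‖) ^ 2 + (m ^ 2 * (η * K * η)) * ‖u‖ ^ 2 := by
      rw [← Finset.add_sum_erase _ _ hj]
      refine add_le_add ?_ ?_
      · gcongr
        exact (ContinuousLinearMap.le_opNorm _ _).trans (by gcongr; exact hTm _ hj)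
      · refine le_trans ?_ (hBa u)
        refine le_trans ?_ (Finset.sum_le_sum_of_subset_of_nonneg (Finset.erase_subset jstar Λ) (fun _ _ _ => by positivity))
        refine Finset.sum_le_sum fun i hi => ?_
        have hi' := Finset.mem_of_mem_erase hi
        have := hgap i hi' (Finset.ne_of_mem_erase hi) (T i u)
        rw [Bop_eig Λ T i hi' u μ₁ hu] at this
        gcongr
        nlinarith [norm_nonneg (T i u)]
    have hE' := mul_le_mul_of_nonneg_right hE (sq_nonneg ‖u‖)
    set X := m ^ 2 * (η * K * η)
    set Y := η * K
    have hX : 0 ≤ X := by positivity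
    have hY : 0 ≤ Y := by positivity
    have hfin : μ₁ ^ 2 ≤ m ^ 2 * m ^ 2 + X + Y := by
      have h6 : 0 < ‖u‖ ^ 2 := by positivity
      refine le_of_mul_le_mul_right ?_ h6
      nlinarith
    have hm2 : 0 ≤ m ^ 2 := by positivity
    have : μ₁ > m ^ 2 + X + Y + 1 := by linarith
    nlinarith

end AbstractPart

section SmoothPart

theorem taylor_bound {f : ℝ × ℝ → ℝ} (hf : ContDiff ℝ (⊤ : ℕ∞) f) {M : ℕ → ℝ}
    (hM : ∀ n x, ‖iteratedFDeriv ℝ n f x‖ ≤ M n) {x₀ : ℝ × ℝ} (hx₀ : x₀ ∉ tsupport f) (N : ℕ) :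
    ∀ (i : ℕ) (x : ℝ × ℝ), ‖iteratedFDeriv ℝ i f x‖ ≤ M (i + N) * ‖x - x₀‖ ^ N := by
  induction N with
  | zero => intro i x; simpa using hM i x
  | succ N ih =>
    intro i x
    have h0 : iteratedFDeriv ℝ i f x₀ = 0 := by
      by_contra h
      exact hx₀ (support_iteratedFDeriv_subset i h)
    have hM0 : 0 ≤ M (i + 1 + N) := (norm_nonneg _).trans (hM (i + 1 + N) x)
    have := Convex.norm_image_sub_le_of_norm_fderiv_le (𝕜 := ℝ) (f := iteratedFDeriv ℝ i f)
      (C := M (i + 1 + N) * ‖x - x₀‖ ^ N) (s := Metric.closedBall x₀ ‖x - x₀‖) (x := x₀) (y := x)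
      (fun y _ => (hf.differentiable_iteratedFDeriv (by exact_mod_cast WithTop.coe_lt_top i)).differentiableAt)
      (fun y hy => by
        rw [norm_fderiv_iteratedFDeriv]
        refine (ih (i + 1) y).trans ?_
        have : ‖y - x₀‖ ≤ ‖x - x₀‖ := by simpa [dist_eq_norm] using hy
        gcongr)
      (convex_closedBall _ _) (by simp) (by simp [dist_eq_norm])
    rw [h0, sub_zero] at this
    refine this.trans (le_of_eq ?_)
    rw [show i + 1 + N = i + (N + 1) by ring]; ring

/-- constants -/
def Cst (M : ℕ → ℝ) (n N : ℕ) : ℝ :=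
  (2 * π) ^ n * ∑ l ∈ Finset.range (n + 1), ∑ k ∈ Finset.range (l + 1), (l.choose k : ℝ) * M (k + N) * M (l - k)

/-- the twisted correlation -/
def Gcor (h : ℝ) (a b : ℝ × ℝ → ℝ) (s : ℝ × ℝ) : ℂ :=
  ∫ z : ℝ × ℝ, Complex.exp (Complex.I * ((2 / h * (s.1 * z.2 - s.2 * z.1) : ℝ) : ℂ)) * ((a (z + s) * b z : ℝ) : ℂ)

/-- the symplectic pairing -/
def Lsymp : (ℝ × ℝ) →L[ℝ] (ℝ × ℝ) →L[ℝ] ℝ :=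
  (ContinuousLinearMap.fst ℝ ℝ ℝ).smulRight (ContinuousLinearMap.snd ℝ ℝ ℝ) -
    (ContinuousLinearMap.snd ℝ ℝ ℝ).smulRight (ContinuousLinearMap.fst ℝ ℝ ℝ)

theorem Lsymp_apply (v w : ℝ × ℝ) : Lsymp v w = v.1 * w.2 - v.2 * w.1 := by
  simp [Lsymp]

theorem g_deriv_bound {a b : ℝ × ℝ → ℝ} (ha : ContDiff ℝ (⊤ : ℕ∞) a) (hb : ContDiff ℝ (⊤ : ℕ∞) b)
    {M : ℕ → ℝ} (hMa : ∀ n x, ‖iteratedFDeriv ℝ n a x‖ ≤ M n) (hMb : ∀ n x, ‖iteratedFDeriv ℝ n b x‖ ≤ M n)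
    {Q : Set (ℝ × ℝ)} (hQb : tsupport b ⊆ Q) (hQa : ∀ x ∈ Q, x ∉ tsupport a) (s : ℝ × ℝ) (l N : ℕ) (z : ℝ × ℝ) :
    ‖iteratedFDeriv ℝ l (fun z => ((a (z + s) * b z : ℝ) : ℂ)) z‖ ≤
      Q.indicator (fun _ => (∑ k ∈ Finset.range (l + 1), (l.choose k : ℝ) * M (k + N) * M (l - k)) * ‖s‖ ^ N) z := by
  have ha' : ContDiff ℝ (⊤ : ℕ∞) (fun z => a (z + s)) := ha.comp (contDiff_id.add contDiff_const)
  have e1 : ‖iteratedFDeriv ℝ l (fun z => ((a (z + s) * b z : ℝ) : ℂ)) z‖ =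
      ‖iteratedFDeriv ℝ l (fun z => a (z + s) * b z) z‖ := by
    exact Complex.ofRealLI.norm_iteratedFDeriv_comp_left (f := fun z => a (z + s) * b z)
      ((ha'.mul hb).contDiffAt) (by exact_mod_cast le_top)
  rw [e1]
  refine (norm_iteratedFDeriv_mul_le ha' hb z (n := l) (by exact_mod_cast le_top)).trans ?_
  by_cases hz : z ∈ Q
  · rw [Set.indicator_of_mem hz, Finset.sum_mul]
    refine Finset.sum_le_sum fun k _ => ?_
    have h1 : ‖iteratedFDeriv ℝ k (fun z => a (z + s)) z‖ ≤ M (k + N) * ‖s‖ ^ N := by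
      rw [iteratedFDeriv_comp_add_right]
      simpa using taylor_bound ha hMa (hQa z hz) N k (z + s)
    calc _ ≤ (l.choose k : ℝ) * (M (k + N) * ‖s‖ ^ N) * M (l - k) := by
          gcongr
          · exact mul_nonneg (by positivity) ((norm_nonneg _).trans h1)
          · exact hMb _ _
      _ = _ := by ring
  · rw [Set.indicator_of_notMem hz]
    refine le_of_eq (Finset.sum_eq_zero fun k _ => ?_)
    have : iteratedFDeriv ℝ (l - k) b z = 0 := by
      by_contra h
      exact hz (hQb (support_iteratedFDeriv_subset _ h))
    rw [this]; simp

theorem Gcor_bound {a b : ℝ × ℝ → ℝ} (ha : ContDiff ℝ (⊤ : ℕ∞) a) (hb : ContDiff ℝ (⊤ : ℕ∞) b)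
    (hbc : HasCompactSupport b)
    {M : ℕ → ℝ} (hMa : ∀ n x, ‖iteratedFDeriv ℝ n a x‖ ≤ M n) (hMb : ∀ n x, ‖iteratedFDeriv ℝ n b x‖ ≤ M n)
    {Q : Set (ℝ × ℝ)} (hQm : MeasurableSet Q) (hQv : volume Q ≤ 1)
    (hQb : tsupport b ⊆ Q) (hQa : ∀ x ∈ Q, x ∉ tsupport a) (h : ℝ) (hh : 0 < h) (s : ℝ × ℝ) (n N : ℕ) :
    ‖s‖ ^ n * ‖Gcor h a b s‖ ≤ h ^ n * Cst M n N * ‖s‖ ^ N := by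
  set f : ℝ × ℝ → ℂ := fun z => ((a (z + s) * b z : ℝ) : ℂ) with hf
  have ha' : ContDiff ℝ (⊤ : ℕ∞) (fun z => a (z + s)) := ha.comp (contDiff_id.add contDiff_const)
  have hfc : ContDiff ℝ (⊤ : ℕ∞) f := Complex.ofRealCLM.contDiff.comp (ha'.mul hb)
  have hfs : HasCompactSupport f := by
    have : HasCompactSupport (fun z => a (z + s) * b z) := hbc.mul_left
    exact this.comp_left (g := fun x : ℝ => (x : ℂ)) (by simp)
  have hint : ∀ l : ℕ, Integrable (fun v => ‖iteratedFDeriv ℝ l f v‖) (volume : Measure (ℝ × ℝ)) := by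
    intro l
    refine Continuous.integrable_of_hasCompactSupport ?_ ?_
    · exact (hfc.continuous_iteratedFDeriv (by exact_mod_cast le_top)).norm
    · exact (hfs.iteratedFDeriv l).norm
  set w : ℝ × ℝ := (s.1 / (π * h), s.2 / (π * h)) with hw
  have hG : VectorFourier.fourierIntegral Real.fourierChar volume Lsymp.toLinearMap₁₂ f w = Gcor h a b s := by
    rw [VectorFourier.fourierIntegral, Gcor]
    congr 1
    ext z
    rw [Circle.smul_def, Real.fourierChar_apply, smul_eq_mul]
    congr 2
    have hL : Lsymp.toLinearMap₁₂ z w = z.1 * w.2 - z.2 * w.1 := Lsymp_apply z w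
    rw [hL]
    simp only [hw]
    rw [mul_comm]
    congr 2
    field_simp
    ring
  obtain ⟨v, hv1, hv2⟩ : ∃ v : ℝ × ℝ, ‖v‖ = 1 ∧ |Lsymp v w| = ‖s‖ / (π * h) := by
    have hpos : 0 < π * h := by positivity
    by_cases hc : |s.1| ≤ |s.2|
    · refine ⟨(1, 0), by simp [Prod.norm_def], ?_⟩
      rw [Lsymp_apply, Prod.norm_def]
      simp only [hw, Real.norm_eq_abs, max_eq_right hc]
      rw [one_mul, zero_mul, sub_zero, abs_div, abs_of_pos hpos]
    · refine ⟨(0, 1), by simp [Prod.norm_def], ?_⟩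
      push Not at hc
      rw [Lsymp_apply, Prod.norm_def]
      simp only [hw, Real.norm_eq_abs, max_eq_left hc.le]
      rw [one_mul, zero_mul, zero_sub, abs_neg, abs_div, abs_of_pos hpos]
  have key := VectorFourier.pow_mul_norm_iteratedFDeriv_fourierIntegral_le Lsymp (f := f)
    (μ := (volume : Measure (ℝ × ℝ))) (K := 0) (N := ⊤) hfc (by
      intro k l hk _
      have : k = 0 := by simpa using hk
      subst this
      simpa using hint l) (k := 0) (n := n) (by simp) le_top v w
  rw [norm_iteratedFDeriv_zero, hG, hv1, hv2] at key
  simp only [one_pow, pow_zero, mul_one, one_mul, Nat.cast_zero, mul_zero, zero_add] at key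
  have hsum : ∑ p ∈ Finset.range 1 ×ˢ Finset.range (n + 1), ∫ (v : ℝ × ℝ), ‖v‖ ^ p.1 * ‖iteratedFDeriv ℝ p.2 f v‖ ≤
      (∑ l ∈ Finset.range (n + 1), ∑ k ∈ Finset.range (l + 1), (l.choose k : ℝ) * M (k + N) * M (l - k)) * ‖s‖ ^ N := by
    rw [Finset.sum_product]
    simp only [Finset.range_one, Finset.sum_singleton, pow_zero, one_mul]
    rw [Finset.sum_mul]
    refine Finset.sum_le_sum fun l _ => ?_
    set c := (∑ k ∈ Finset.range (l + 1), (l.choose k : ℝ) * M (k + N) * M (l - k)) * ‖s‖ ^ N with hc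
    have hM0 : ∀ n, 0 ≤ M n := fun n => (norm_nonneg _).trans (hMa n 0)
    have hc0 : 0 ≤ c := by
      refine mul_nonneg (Finset.sum_nonneg fun k _ => ?_) (by positivity)
      exact mul_nonneg (mul_nonneg (by positivity) (hM0 _)) (hM0 _)
    calc _ ≤ ∫ z, Q.indicator (fun _ => c) z := by
          refine integral_mono (hint l) ?_ fun z => g_deriv_bound ha hb hMa hMb hQb hQa s l N z
          exact (integrable_indicator_iff hQm).2 (integrableOn_const (hQv.trans_lt (by simp)).ne)
      _ = (volume Q).toReal * c := by
          rw [integral_indicator hQm, setIntegral_const, smul_eq_mul]; rfl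
      _ ≤ 1 * c := by
          gcongr
          exact ENNReal.toReal_le_of_le_ofReal (by norm_num) (by simpa using hQv)
      _ = c := one_mul _
  have key2 := key.trans (mul_le_mul_of_nonneg_left hsum (by positivity))
  rw [div_pow, div_mul_eq_mul_div, div_le_iff₀ (by positivity)] at key2
  refine key2.trans (le_of_eq ?_)
  rw [Cst]
  ring

end SmoothPart

section WeylPart

/-- unimodular exponential -/
def ph (t : ℝ) : ℂ := Complex.exp (Complex.I * (t : ℂ))

theorem ph_norm (t : ℝ) : ‖ph t‖ = 1 := by
  rw [ph, mul_comm]; exact Complex.norm_exp_ofReal_mul_I t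

theorem ph_add (s t : ℝ) : ph (s + t) = ph s * ph t := by
  rw [ph, ph, ph, ← Complex.exp_add]; congr 1; push_cast; ring

theorem ph_conj (t : ℝ) : (starRingEnd ℂ) (ph t) = ph (-t) := by
  rw [ph, ph, ← Complex.exp_conj]; congr 1; simp

theorem ph_cont : Continuous ph := by unfold ph; fun_prop

theorem ph_meas : Measurable ph := ph_cont.measurable

/-- the phase-space reflection, as a function -/
def reflFun (h : ℝ) (z : ℝ × ℝ) (u : ℝ → ℂ) : ℝ → ℂ :=
  fun y => ph (2 / h * (y - z.1) * z.2) * u (2 * z.1 - y)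

theorem reflFun_memLp (h : ℝ) (z : ℝ × ℝ) (u : L2R) : MemLp (reflFun h z u) 2 volume := by
  have h1 : MemLp (fun y => u (2 * z.1 - y)) 2 volume :=
    (Lp.memLp u).comp_measurePreserving (Measure.measurePreserving_sub_left volume (2 * z.1))
  refine h1.congr_norm ?_ (Filter.Eventually.of_forall fun y => ?_)
  · exact (ph_meas.comp (by fun_prop)).aestronglyMeasurable.mul h1.1
  · simp [reflFun, ph_norm]

/-- the phase-space reflection on `L²` -/
def Rop (h : ℝ) (z : ℝ × ℝ) (u : L2R) : L2R := (reflFun_memLp h z u).toLp _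

theorem Rop_coe (h : ℝ) (z : ℝ × ℝ) (u : L2R) : (Rop h z u : ℝ → ℂ) =ᵐ[volume] reflFun h z u :=
  MemLp.coeFn_toLp _

theorem Rop_norm (h : ℝ) (z : ℝ × ℝ) (u : L2R) : ‖Rop h z u‖ = ‖u‖ := by
  rw [Rop, Lp.norm_toLp, Lp.norm_def]
  congr 1
  have h1 : eLpNorm (fun y => u (2 * z.1 - y)) 2 volume = eLpNorm u 2 volume :=
    eLpNorm_comp_measurePreserving (Lp.aestronglyMeasurable u)
      (Measure.measurePreserving_sub_left volume (2 * z.1))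
  rw [← h1]
  exact eLpNorm_congr_norm_ae (Filter.Eventually.of_forall fun y => by simp [reflFun, ph_norm])

theorem inner_eq (v w : L2R) : ⟪v, w⟫_ℂ = ∫ y, (starRingEnd ℂ) (v y) * w y := by
  rw [L2.inner_def]
  refine integral_congr_ae (Filter.Eventually.of_forall fun y => ?_)
  simp [mul_comm]

theorem inner_Rop (h : ℝ) (z : ℝ × ℝ) (v u : L2R) :
    ⟪v, Rop h z u⟫_ℂ = ∫ y, (starRingEnd ℂ) (v y) * reflFun h z u y := by
  rw [inner_eq]
  refine integral_congr_ae ?_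
  filter_upwards [Rop_coe h z u] with y hy
  rw [hy]

theorem Rop_symm (h : ℝ) (z : ℝ × ℝ) (v u : L2R) : ⟪Rop h z v, u⟫_ℂ = ⟪v, Rop h z u⟫_ℂ := by
  rw [inner_Rop, inner_eq]
  have : (fun y => (starRingEnd ℂ) ((Rop h z v : ℝ → ℂ) y) * u y) =ᵐ[volume]
      fun y => (starRingEnd ℂ) (reflFun h z v y) * u y := by
    filter_upwards [Rop_coe h z v] with y hy
    rw [hy]
  rw [integral_congr_ae this, ← integral_sub_left_eq_self _ volume (2 * z.1)]
  congr 1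
  ext y
  simp only [reflFun, map_mul, ph_conj]
  rw [show 2 * z.1 - (2 * z.1 - y) = y by ring,
    show -(2 / h * (2 * z.1 - y - z.1) * z.2) = 2 / h * (y - z.1) * z.2 by ring]
  ring

theorem opNorm_of_inner (T : L2R →L[ℂ] L2R) (C : ℝ) (hC : 0 ≤ C)
    (hT : ∀ v u : L2R, ‖⟪v, T u⟫_ℂ‖ ≤ C * (‖v‖ * ‖u‖)) : ‖T‖ ≤ C := by
  refine ContinuousLinearMap.opNorm_le_bound _ hC fun u => ?_
  have h1 := hT (T u) u
  rw [inner_self_eq_norm_sq_to_K] at h1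
  have h2 : ‖((‖T u‖ : ℝ) : ℂ) ^ 2‖ = ‖T u‖ ^ 2 := by simp
  have h1' : ‖T u‖ ^ 2 ≤ C * (‖T u‖ * ‖u‖) := by rw [← h2]; exact h1
  rcases (norm_nonneg (T u)).eq_or_lt with h0 | h0
  · rw [← h0]; positivity
  · refine le_of_mul_le_mul_left ?_ h0
    nlinarith

/-- the integrand of the weak Weyl formula -/
theorem weyl_integrable (h : ℝ) {a : ℝ × ℝ → ℝ} (hac : Continuous a) (has : HasCompactSupport a) (v u : L2R) :
    Integrable (fun p : (ℝ × ℝ) × ℝ => (a p.1 : ℂ) * ((starRingEnd ℂ) (v p.2) * reflFun h p.1 u p.2))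
      (volume.prod volume) := by
  have hu := (Lp.stronglyMeasurable u).measurable
  have hv := (Lp.stronglyMeasurable v).measurable
  have hmeas : Measurable (fun p : (ℝ × ℝ) × ℝ => (a p.1 : ℂ) * ((starRingEnd ℂ) (v p.2) * reflFun h p.1 u p.2)) := by
    refine Measurable.mul ?_ (Measurable.mul ?_ (Measurable.mul ?_ ?_))
    · exact Complex.measurable_ofReal.comp (hac.measurable.comp measurable_fst)
    · exact (Complex.continuous_conj.measurable).comp (hv.comp measurable_snd)
    · exact ph_meas.comp (by fun_prop)
    · exact hu.comp (by fun_prop)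
  have hslice : ∀ z : ℝ × ℝ, Integrable (fun y => (starRingEnd ℂ) (v y) * reflFun h z u y) := by
    intro z
    have := L2.integrable_inner (𝕜 := ℂ) v (Rop h z u)
    refine this.congr ?_
    filter_upwards [Rop_coe h z u] with y hy
    simp [hy, mul_comm]
  rw [integrable_prod_iff hmeas.aestronglyMeasurable]
  refine ⟨Filter.Eventually.of_forall fun z => (hslice z).const_mul (a z : ℂ), ?_⟩
  have hai : Integrable (fun z => |a z| * (‖v‖ * ‖u‖)) :=
    ((hac.integrable_of_hasCompactSupport has).abs).mul_const _
  refine hai.mono' (hmeas.norm.stronglyMeasurable.integral_prod_right').aestronglyMeasurable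
    (Filter.Eventually.of_forall fun z => ?_)
  have hnn : 0 ≤ ∫ y, ‖(a z : ℂ) * ((starRingEnd ℂ) (v y) * reflFun h z u y)‖ :=
    integral_nonneg fun _ => norm_nonneg _
  rw [Real.norm_of_nonneg hnn]
  simp only [norm_mul, Complex.norm_real, Real.norm_eq_abs]
  rw [integral_const_mul]
  gcongr
  -- Cauchy–Schwarz for the norms
  have h1 : MemLp (fun y => ‖v y‖) 2 volume := (Lp.memLp v).norm
  have h2 : MemLp (fun y => ‖reflFun h z u y‖) 2 volume := (reflFun_memLp h z u).norm
  have h3 := real_inner_le_norm (h1.toLp _) (h2.toLp _)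
  rw [L2.inner_def] at h3
  have e1 : ‖h1.toLp _‖ = ‖v‖ := by
    rw [Lp.norm_toLp, Lp.norm_def, eLpNorm_norm]
  have e2 : ‖h2.toLp _‖ = ‖u‖ := by
    rw [Lp.norm_toLp, eLpNorm_norm, ← Rop_norm h z u, Rop, Lp.norm_toLp]
  rw [e1, e2] at h3
  refine le_trans (le_of_eq ?_) h3
  refine integral_congr_ae ?_
  filter_upwards [h1.coeFn_toLp, h2.coeFn_toLp] with y hy1 hy2
  rw [hy1, hy2]
  simp [mul_comm, reflFun]

theorem weyl_weak {h : ℝ} (hh : 0 < h) {a : ℝ × ℝ → ℝ} (hac : Continuous a) (has : HasCompactSupport a)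
    {T : L2R →L[ℂ] L2R} (hT : IsWeylQuant h a T) (v u : L2R) :
    ⟪v, T u⟫_ℂ = ((1 / (π * h) : ℝ) : ℂ) * ∫ z : ℝ × ℝ, (a z : ℂ) * ⟪v, Rop h z u⟫_ℂ := by
  have hint := weyl_integrable h hac has v u
  have e1 : ∫ z : ℝ × ℝ, (a z : ℂ) * ⟪v, Rop h z u⟫_ℂ =
      ∫ y, ∫ z : ℝ × ℝ, (a z : ℂ) * ((starRingEnd ℂ) (v y) * reflFun h z u y) := by
    rw [← integral_integral_swap hint]
    refine integral_congr_ae (Filter.Eventually.of_forall fun z => ?_)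
    simp only
    rw [inner_Rop, integral_const_mul]
  rw [e1, ← integral_const_mul, inner_eq]
  refine integral_congr_ae ?_
  have hint2 := hint.swap.prod_right_ae
  filter_upwards [hT u, hint2] with y hy hy2
  rw [hy]
  have e2 : ∫ z : ℝ × ℝ, (a z : ℂ) * ((starRingEnd ℂ) (v y) * reflFun h z u y) =
      ∫ x, ∫ ξ, (a (x, ξ) : ℂ) * ((starRingEnd ℂ) (v y) * reflFun h (x, ξ) u y) := by
    exact integral_prod _ hy2
  have e3 : ∀ x, ∫ ξ, (a (x, ξ) : ℂ) * ((starRingEnd ℂ) (v y) * reflFun h (x, ξ) u y) =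
      (starRingEnd ℂ) (v y) * ((2 * π * h : ℝ) : ℂ) * (weylKernel h a y (2 * x - y) * u (2 * x - y)) := by
    intro x
    rw [weylKernel]
    have h0 : ((2 * π * h : ℝ) : ℂ) * ((1 / (2 * π * h) : ℝ) : ℂ) = 1 := by
      rw [← Complex.ofReal_mul]
      rw [mul_one_div_cancel (by positivity)]; simp
    have h1 : ∀ J : ℂ, (starRingEnd ℂ) (v y) * ((2 * π * h : ℝ) : ℂ) * (((1 / (2 * π * h) : ℝ) : ℂ) * J * u (2 * x - y)) =
        (starRingEnd ℂ) (v y) * u (2 * x - y) * J := by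
      intro J
      linear_combination ((starRingEnd ℂ) (v y) * u (2 * x - y) * J) * h0
    rw [h1, ← integral_const_mul]
    congr 1
    ext ξ
    rw [reflFun, ph]
    rw [show (y + (2 * x - y)) / 2 = x by ring, show (y - (2 * x - y)) * ξ / h = 2 / h * (y - x) * ξ by ring]
    ring
  rw [e2]
  simp only [e3]
  rw [integral_const_mul]
  have e4 : ∫ x, weylKernel h a y (2 * x - y) * u (2 * x - y) = ((1 / 2 : ℝ) : ℂ) * ∫ y', weylKernel h a y y' * u y' := by
    rw [Measure.integral_comp_mul_left (fun x => weylKernel h a y (x - y) * u (x - y)) 2]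
    rw [integral_sub_right_eq_self (fun x => weylKernel h a y x * u x) y]
    simp
  rw [e4]
  have h0 : ((1 / (π * h) : ℝ) : ℂ) * ((2 * π * h : ℝ) : ℂ) * ((1 / 2 : ℝ) : ℂ) = 1 := by
    rw [← Complex.ofReal_mul, ← Complex.ofReal_mul]
    have : 1 / (π * h) * (2 * π * h) * (1 / 2) = 1 := by field_simp
    rw [this]; simp
  linear_combination (-((starRingEnd ℂ) (v y) * ∫ y', weylKernel h a y y' * u y')) * h0

theorem weyl_selfAdjoint {h : ℝ} (hh : 0 < h) {a : ℝ × ℝ → ℝ} (hac : Continuous a) (has : HasCompactSupport a)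
    {T : L2R →L[ℂ] L2R} (hT : IsWeylQuant h a T) : IsSelfAdjoint T := by
  rw [ContinuousLinearMap.isSelfAdjoint_iff_isSymmetric]
  intro u v
  change ⟪T u, v⟫_ℂ = ⟪u, T v⟫_ℂ
  rw [← inner_conj_symm, weyl_weak hh hac has hT, weyl_weak hh hac has hT, map_mul, ← integral_conj, Complex.conj_ofReal]
  congr 2
  ext z
  rw [map_mul, Complex.conj_ofReal, inner_conj_symm, Rop_symm]

theorem weyl_norm {h : ℝ} (hh : 0 < h) {a : ℝ × ℝ → ℝ} (hac : Continuous a) (has : HasCompactSupport a)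
    {T : L2R →L[ℂ] L2R} (hT : IsWeylQuant h a T) {Q : Set (ℝ × ℝ)} (hQm : MeasurableSet Q) (hQv : volume Q ≤ 1)
    (hQ : ∀ z ∉ Q, a z = 0) {C : ℝ} (hC : ∀ z, |a z| ≤ C) : ‖T‖ ≤ 1 / (π * h) * C := by
  have hC0 : 0 ≤ C := (abs_nonneg _).trans (hC 0)
  refine opNorm_of_inner T _ (by positivity) fun v u => ?_
  rw [weyl_weak hh hac has hT, norm_mul, Complex.norm_real, Real.norm_of_nonneg (by positivity), mul_assoc]
  gcongr
  have hi : Integrable (Q.indicator (fun _ => C * (‖v‖ * ‖u‖))) :=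
    (integrable_indicator_iff hQm).2 (integrableOn_const (hQv.trans_lt (by simp)).ne)
  refine (norm_integral_le_of_norm_le hi (Filter.Eventually.of_forall fun z => ?_)).trans ?_
  · by_cases hz : z ∈ Q
    · rw [Set.indicator_of_mem hz, norm_mul, Complex.norm_real, Real.norm_eq_abs]
      gcongr
      · exact hC z
      · exact (norm_inner_le_norm _ _).trans (by rw [Rop_norm])
    · rw [Set.indicator_of_notMem hz, hQ z hz]; simp
  · rw [integral_indicator hQm, setIntegral_const, smul_eq_mul]
    have : (volume Q).toReal ≤ 1 := ENNReal.toReal_le_of_le_ofReal (by norm_num) (by simpa using hQv)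
    calc _ ≤ 1 * (C * (‖v‖ * ‖u‖)) := by gcongr; exact this
      _ = _ := one_mul _

/-- translation pairing -/
def Wp (h : ℝ) (v u : L2R) (s : ℝ × ℝ) : ℂ :=
  ∫ y, (starRingEnd ℂ) (v y) * (ph (2 / h * (y - s.1) * s.2) * u (y - 2 * s.1))

theorem Wp_meas (h : ℝ) (v u : L2R) : StronglyMeasurable (Wp h v u) := by
  have hu := (Lp.stronglyMeasurable u).measurable
  have hv := (Lp.stronglyMeasurable v).measurable
  have hmeas : Measurable (fun p : (ℝ × ℝ) × ℝ => (starRingEnd ℂ) (v p.2) *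
      (ph (2 / h * (p.2 - p.1.1) * p.1.2) * u (p.2 - 2 * p.1.1))) := by
    refine Measurable.mul ?_ (Measurable.mul ?_ ?_)
    · exact (Complex.continuous_conj.measurable).comp (hv.comp measurable_snd)
    · exact ph_meas.comp (by fun_prop)
    · exact hu.comp (by fun_prop)
  exact hmeas.stronglyMeasurable.integral_prod_right'

theorem RR_eq (h : ℝ) (v u : L2R) (z z' : ℝ × ℝ) :
    ⟪Rop h z v, Rop h z' u⟫_ℂ = ph (2 / h * ((z - z').1 * z'.2 - (z - z').2 * z'.1)) * Wp h v u (z - z') := by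
  rw [inner_eq, Wp, ← integral_const_mul, ← integral_sub_left_eq_self _ volume (2 * z.1)]
  have hmp := (Measure.measurePreserving_sub_left (volume : Measure ℝ) (2 * z.1)).quasiMeasurePreserving
  refine integral_congr_ae ?_
  filter_upwards [hmp.ae_eq_comp (Rop_coe h z v), hmp.ae_eq_comp (Rop_coe h z' u)] with y hy hy'
  simp only [Function.comp_apply] at hy hy'
  rw [hy, hy']
  simp only [reflFun, map_mul, ph_conj, Prod.fst_sub, Prod.snd_sub]
  rw [show 2 * z.1 - (2 * z.1 - y) = y by ring, show 2 * z'.1 - (2 * z.1 - y) = y - 2 * (z.1 - z'.1) by ring]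
  have : ph (-(2 / h * (2 * z.1 - y - z.1) * z.2)) * ph (2 / h * (2 * z.1 - y - z'.1) * z'.2) =
      ph (2 / h * ((z.1 - z'.1) * z'.2 - (z.2 - z'.2) * z'.1)) * ph (2 / h * (y - (z.1 - z'.1)) * (z.2 - z'.2)) := by
    rw [← ph_add, ← ph_add]; congr 1; ring
  linear_combination ((starRingEnd ℂ) (v y) * u (y - 2 * (z.1 - z'.1))) * this

theorem Wp_bound (h : ℝ) (v u : L2R) (s : ℝ × ℝ) : ‖Wp h v u s‖ ≤ ‖v‖ * ‖u‖ := by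
  have := RR_eq h v u s 0
  have h1 : ‖Wp h v u s‖ = ‖⟪Rop h s v, Rop h 0 u⟫_ℂ‖ := by
    rw [this, norm_mul, ph_norm]; simp
  rw [h1]
  exact (norm_inner_le_norm _ _).trans (by rw [Rop_norm, Rop_norm])

theorem weyl_prod {h : ℝ} (hh : 0 < h) {a b : ℝ × ℝ → ℝ} (hac : Continuous a) (has : HasCompactSupport a)
    (hbc : Continuous b) (hbs : HasCompactSupport b)
    {S T : L2R →L[ℂ] L2R} (hS : IsWeylQuant h a S) (hT : IsWeylQuant h b T) (v u : L2R) :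
    ⟪v, S (T u)⟫_ℂ = ((1 / (π * h) : ℝ) : ℂ) ^ 2 * ∫ s : ℝ × ℝ, Wp h v u s * Gcor h a b s := by
  set Φ : (ℝ × ℝ) → (ℝ × ℝ) → ℂ := fun s z' =>
    ph (2 / h * (s.1 * z'.2 - s.2 * z'.1)) * Wp h v u s * ((a (z' + s) * b z' : ℝ) : ℂ) with hΦ
  have hai := hac.integrable_of_hasCompactSupport has (μ := volume)
  have hbi := hbc.integrable_of_hasCompactSupport hbs (μ := volume)
  have hWm := (Wp_meas h v u).measurable
  have hΦm : Measurable (Function.uncurry Φ) := by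
    refine Measurable.mul (Measurable.mul ?_ ?_) ?_
    · exact ph_meas.comp (by fun_prop)
    · exact hWm.comp measurable_fst
    · refine Complex.measurable_ofReal.comp (Measurable.mul ?_ ?_)
      · exact hac.measurable.comp (by fun_prop)
      · exact hbc.measurable.comp measurable_snd
  have hΦb : ∀ s z', ‖Φ s z'‖ ≤ (‖v‖ * ‖u‖) * (|a (z' + s)| * |b z'|) := by
    intro s z'
    simp only [hΦ, norm_mul, ph_norm, one_mul, Complex.norm_real, Real.norm_eq_abs, abs_mul]
    gcongr
    exact Wp_bound h v u s
  have hI1 : Integrable (Function.uncurry fun z z' => Φ (z - z') z') (volume.prod volume) := by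
    have hd : Integrable (fun p : (ℝ × ℝ) × (ℝ × ℝ) => (‖v‖ * ‖u‖) * (|a p.1| * |b p.2|)) (volume.prod volume) :=
      (hai.abs.mul_prod hbi.abs).const_mul _
    refine hd.mono' ?_ (Filter.Eventually.of_forall fun p => ?_)
    · exact (hΦm.comp (f := fun p : (ℝ × ℝ) × (ℝ × ℝ) => (p.1 - p.2, p.2)) (by fun_prop)).aestronglyMeasurable
    · have := hΦb (p.1 - p.2) p.2
      simpa [Function.uncurry] using this
  have hI2 : Integrable (Function.uncurry Φ) (volume.prod volume) := by
    rw [integrable_prod_iff' hΦm.aestronglyMeasurable]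
    have hs : ∀ z', Integrable (fun s => (‖v‖ * ‖u‖) * (|a (z' + s)| * |b z'|)) := fun z' =>
      ((hai.abs.comp_add_left z').mul_const _).const_mul _
    refine ⟨Filter.Eventually.of_forall fun z' => (hs z').mono'
      (hΦm.comp (f := fun s => (s, z')) (by fun_prop)).aestronglyMeasurable
      (Filter.Eventually.of_forall fun s => hΦb s z'), ?_⟩
    have hd : Integrable (fun z' => (‖v‖ * ‖u‖) * ((∫ s, |a s|) * |b z'|)) := (hbi.abs.const_mul _).const_mul _
    refine hd.mono' ?_ (Filter.Eventually.of_forall fun z' => ?_)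
    · exact (hΦm.comp measurable_swap).norm.stronglyMeasurable.integral_prod_right'.aestronglyMeasurable
    · rw [Real.norm_of_nonneg (integral_nonneg fun _ => norm_nonneg _)]
      calc _ ≤ ∫ s, (‖v‖ * ‖u‖) * (|a (z' + s)| * |b z'|) := by
            refine integral_mono_of_nonneg (Filter.Eventually.of_forall fun _ => norm_nonneg _) (hs z')
              (Filter.Eventually.of_forall fun s => hΦb s z')
        _ = _ := by
            rw [integral_const_mul, integral_mul_const, integral_add_left_eq_self (fun s => |a s|) z']
  have e1 : ⟪v, S (T u)⟫_ℂ = ((1 / (π * h) : ℝ) : ℂ) ^ 2 * ∫ z, ∫ z', Φ (z - z') z' := by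
    rw [weyl_weak hh hac has hS, pow_two, mul_assoc]
    congr 1
    rw [← integral_const_mul]
    congr 1
    ext z
    rw [← Rop_symm, weyl_weak hh hbc hbs hT, mul_left_comm]
    congr 1
    rw [← integral_const_mul]
    congr 1
    ext z'
    rw [RR_eq]
    simp only [hΦ]
    rw [show z' + (z - z') = z by abel]
    push_cast
    ring
  rw [e1, integral_integral_swap hI1]
  congr 1
  have e2 : ∀ z', ∫ z, Φ (z - z') z' = ∫ s, Φ s z' := fun z' => integral_sub_right_eq_self (fun s => Φ s z') z'
  simp only [e2]
  rw [← integral_integral_swap hI2]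
  congr 1
  ext s
  rw [Gcor, ← integral_const_mul]
  congr 1
  ext z'
  simp only [hΦ, ph]
  ring

theorem weyl_prod_norm {h : ℝ} (hh : 0 < h) {a b : ℝ × ℝ → ℝ} (hac : Continuous a) (has : HasCompactSupport a)
    (hbc : Continuous b) (hbs : HasCompactSupport b)
    {S T : L2R →L[ℂ] L2R} (hS : IsWeylQuant h a S) (hT : IsWeylQuant h b T) {Q : Set (ℝ × ℝ)}
    (hQm : MeasurableSet Q) (hQv : volume Q ≤ 4) (hQ : ∀ s ∉ Q, Gcor h a b s = 0) {D : ℝ}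
    (hD : ∀ s, ‖Gcor h a b s‖ ≤ D) : ‖S * T‖ ≤ (1 / (π * h)) ^ 2 * (4 * D) := by
  have hD0 : 0 ≤ D := (norm_nonneg _).trans (hD 0)
  refine opNorm_of_inner _ _ (by positivity) fun v u => ?_
  rw [mul_apply_eq_comp, weyl_prod hh hac has hbc hbs hS hT, norm_mul, norm_pow, Complex.norm_real,
    Real.norm_of_nonneg (by positivity), mul_assoc]
  gcongr
  have hi : Integrable (Q.indicator (fun _ => D * (‖v‖ * ‖u‖))) :=
    (integrable_indicator_iff hQm).2 (integrableOn_const (hQv.trans_lt (by simp)).ne)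
  refine (norm_integral_le_of_norm_le hi (Filter.Eventually.of_forall fun z => ?_)).trans ?_
  · by_cases hz : z ∈ Q
    · rw [Set.indicator_of_mem hz, norm_mul, mul_comm]
      gcongr
      · exact hD z
      · exact Wp_bound _ _ _ _
    · rw [Set.indicator_of_notMem hz, hQ z hz]; simp
  · rw [integral_indicator hQm, setIntegral_const, smul_eq_mul]
    have : (volume Q).toReal ≤ 4 := ENNReal.toReal_le_of_le_ofReal (by norm_num) (by simpa using hQv)
    calc _ ≤ 4 * (D * (‖v‖ * ‖u‖)) := by gcongr; exact this
      _ = _ := by ring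

end WeylPart

section AssemblyPart

/-- the lattice point as a real vector -/
def cvec (j : ℤ × ℤ) : ℝ × ℝ := ((j.1 : ℝ), (j.2 : ℝ))

/-- the unit cell -/
def Qs (j : ℤ × ℤ) : Set (ℝ × ℝ) :=
  Set.Ioo ((j.1 : ℝ) - 1 / 2) (j.1 + 1 / 2) ×ˢ Set.Ioo ((j.2 : ℝ) - 1 / 2) (j.2 + 1 / 2)

theorem Qs_meas (j : ℤ × ℤ) : MeasurableSet (Qs j) := measurableSet_Ioo.prod measurableSet_Ioo

theorem Qs_vol (j : ℤ × ℤ) : volume (Qs j) ≤ 1 := by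
  rw [Qs, Measure.volume_eq_prod, Measure.prod_prod, Real.volume_Ioo, Real.volume_Ioo]
  ring_nf
  simp

theorem Qs_disj {i j : ℤ × ℤ} (hij : i ≠ j) {x : ℝ × ℝ} (hx : x ∈ Qs j) (hx' : x ∈ Qs i) : False := by
  obtain ⟨⟨h1, h2⟩, ⟨h3, h4⟩⟩ := hx
  obtain ⟨⟨k1, k2⟩, ⟨k3, k4⟩⟩ := hx'
  apply hij
  have a1 : (i.1 : ℝ) < j.1 + 1 := by linarith
  have a2 : (j.1 : ℝ) < i.1 + 1 := by linarith
  have a3 : (i.2 : ℝ) < j.2 + 1 := by linarith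
  have a4 : (j.2 : ℝ) < i.2 + 1 := by linarith
  norm_cast at a1 a2 a3 a4
  ext <;> omega

theorem shift_eq (f : ℝ × ℝ → ℝ) (j : ℤ × ℤ) : shiftSymbol f j = fun p => f (p - cvec j) := rfl

theorem shift_contDiff {f : ℝ × ℝ → ℝ} (hf : ContDiff ℝ (⊤ : ℕ∞) f) (j : ℤ × ℤ) :
    ContDiff ℝ (⊤ : ℕ∞) (shiftSymbol f j) := by
  rw [shift_eq]
  exact hf.comp (contDiff_id.sub contDiff_const)

theorem shift_compact {f : ℝ × ℝ → ℝ} (hf : HasCompactSupport f) (j : ℤ × ℤ) :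
    HasCompactSupport (shiftSymbol f j) :=
  hf.comp_homeomorph (Homeomorph.subRight (cvec j))

theorem shift_bound {f : ℝ × ℝ → ℝ} {M : ℕ → ℝ} (hf : ∀ n x, ‖iteratedFDeriv ℝ n f x‖ ≤ M n) (j : ℤ × ℤ)
    (n : ℕ) (x : ℝ × ℝ) : ‖iteratedFDeriv ℝ n (shiftSymbol f j) x‖ ≤ M n := by
  rw [shift_eq, iteratedFDeriv_comp_sub]
  exact hf _ _

theorem shift_tsupport {f : ℝ × ℝ → ℝ}
    (hf : tsupport f ⊆ Set.Ioo (-(1/2) : ℝ) (1/2) ×ˢ Set.Ioo (-(1/2) : ℝ) (1/2)) (j : ℤ × ℤ) :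
    tsupport (shiftSymbol f j) ⊆ Qs j := by
  have h := tsupport_comp_subset_preimage f (f := fun p : ℝ × ℝ => p - cvec j) (by fun_prop)
  intro x hx
  have h1 : x - cvec j ∈ tsupport f := h hx
  obtain ⟨⟨h1, h2⟩, ⟨h3, h4⟩⟩ := hf h1
  simp only [cvec, Prod.fst_sub, Prod.snd_sub] at h1 h2 h3 h4
  refine ⟨⟨?_, ?_⟩, ⟨?_, ?_⟩⟩ <;> linarith

/-- decay weight -/
def kap (k : ℤ × ℤ) : ℝ := (1 / (1 + (k.1 : ℝ) ^ 2)) * (1 / (1 + (k.2 : ℝ) ^ 2))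

theorem kap_pos (k : ℤ × ℤ) : 0 < kap k := by unfold kap; positivity

theorem kap_neg (k : ℤ × ℤ) : kap (-k) = kap k := by simp [kap]

theorem kap1_summable : Summable (fun k : ℤ => 1 / (1 + (k : ℝ) ^ 2)) := by
  have h1 := (Real.summable_one_div_int_pow (p := 2)).2 (by norm_num)
  have h2 : Summable (fun k : ℤ => if k = 0 then (1 : ℝ) else 0) := (hasSum_ite_eq 0 1).summable
  refine Summable.of_nonneg_of_le (fun k => by positivity) (fun k => ?_) (h1.add h2)
  by_cases hk : k = 0
  · simp [hk]
  · simp only [hk, if_false, add_zero]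
    have : (k : ℝ) ≠ 0 := by exact_mod_cast hk
    gcongr
    linarith

theorem kap_summable : Summable kap :=
  kap1_summable.mul_of_nonneg kap1_summable (fun _ => by positivity) (fun _ => by positivity)

theorem kap_sum (s : Finset (ℤ × ℤ)) (i : ℤ × ℤ) : ∑ j ∈ s, kap (i - j) ≤ ∑' k, kap k := by
  have h1 : Summable (fun j => kap (i - j)) := (Equiv.subLeft i).summable_iff.2 kap_summable
  rw [← (Equiv.subLeft i).tsum_eq kap]
  exact h1.sum_le_tsum s (fun j _ => (kap_pos _).le)

/-- constants -/
def Dst (M : ℕ → ℝ) (n : ℕ) : ℝ := 648 * (Cst M n n + Cst M n (n - 8))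

theorem Cst_nonneg {M : ℕ → ℝ} (hM : ∀ n, 0 < M n) (n N : ℕ) : 0 ≤ Cst M n N := by
  unfold Cst
  refine mul_nonneg (by positivity) (Finset.sum_nonneg fun l _ => Finset.sum_nonneg fun k _ => ?_)
  have := hM (k + N)
  have := hM (l - k)
  positivity

theorem Dst_nonneg {M : ℕ → ℝ} (hM : ∀ n, 0 < M n) (n : ℕ) : 0 ≤ Dst M n := by
  have := Cst_nonneg hM n n
  have := Cst_nonneg hM n (n - 8)
  unfold Dst
  positivity

theorem weight_bound (k1 k2 t : ℝ) (ht : 0 ≤ t) (h1 : |k1| ≤ 1 + t) (h2 : |k2| ≤ 1 + t) :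
    ((1 + k1 ^ 2) * (1 + k2 ^ 2)) ^ 2 ≤ 648 * (1 + t ^ 8) := by
  have a1 : 1 + k1 ^ 2 ≤ 3 * (1 + t ^ 2) := by
    have : k1 ^ 2 ≤ (1 + t) ^ 2 := by rw [← sq_abs]; gcongr
    nlinarith [sq_nonneg (t - 1)]
  have a2 : 1 + k2 ^ 2 ≤ 3 * (1 + t ^ 2) := by
    have : k2 ^ 2 ≤ (1 + t) ^ 2 := by rw [← sq_abs]; gcongr
    nlinarith [sq_nonneg (t - 1)]
  have b1 : (1 + t ^ 2) ^ 2 ≤ 2 * (1 + t ^ 4) := by nlinarith [sq_nonneg (t ^ 2 - 1)]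
  have b2 : (1 + t ^ 4) ^ 2 ≤ 2 * (1 + t ^ 8) := by nlinarith [sq_nonneg (t ^ 4 - 1)]
  calc ((1 + k1 ^ 2) * (1 + k2 ^ 2)) ^ 2 ≤ ((3 * (1 + t ^ 2)) * (3 * (1 + t ^ 2))) ^ 2 := by gcongr
    _ = 81 * ((1 + t ^ 2) ^ 2) ^ 2 := by ring
    _ ≤ 81 * (2 * (1 + t ^ 4)) ^ 2 := by gcongr
    _ = 324 * (1 + t ^ 4) ^ 2 := by ring
    _ ≤ 324 * (2 * (1 + t ^ 8)) := by gcongr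
    _ = _ := by ring

theorem Gcor_site {f g : ℝ × ℝ → ℝ} (hf : ContDiff ℝ (⊤ : ℕ∞) f) (hg : ContDiff ℝ (⊤ : ℕ∞) g)
    (hgc : HasCompactSupport g)
    (hfs : tsupport f ⊆ Set.Ioo (-(1/2) : ℝ) (1/2) ×ˢ Set.Ioo (-(1/2) : ℝ) (1/2))
    (hgs : tsupport g ⊆ Set.Ioo (-(1/2) : ℝ) (1/2) ×ˢ Set.Ioo (-(1/2) : ℝ) (1/2))
    {M : ℕ → ℝ} (hM : ∀ n, 0 < M n) (hMf : ∀ n x, ‖iteratedFDeriv ℝ n f x‖ ≤ M n)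
    (hMg : ∀ n x, ‖iteratedFDeriv ℝ n g x‖ ≤ M n) {i j : ℤ × ℤ} (hij : i ≠ j) {h : ℝ} (hh : 0 < h)
    {n : ℕ} (hn : 8 ≤ n) (s : ℝ × ℝ)
    (hs : |s.1 - (i - j).1| ≤ 1) (hs' : |s.2 - (i - j).2| ≤ 1) :
    ‖Gcor h (shiftSymbol f i) (shiftSymbol g j) s‖ ≤ Dst M n * h ^ n * kap (i - j) ^ 2 := by
  set G := ‖Gcor h (shiftSymbol f i) (shiftSymbol g j) s‖ with hG
  have hG0 : 0 ≤ G := norm_nonneg _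
  have key := Gcor_bound (shift_contDiff hf i) (shift_contDiff hg j) (shift_compact hgc j)
    (shift_bound hMf i) (shift_bound hMg j) (Qs_meas j) (Qs_vol j) (shift_tsupport hgs j)
    (fun x hx hx' => Qs_disj hij hx (shift_tsupport hfs i hx')) h hh s
  rw [← hG] at key
  have hD := Dst_nonneg hM n
  have hk := kap_pos (i - j)
  rcases (norm_nonneg s).eq_or_lt with h0 | h0
  · have := key 0 1
    rw [← h0] at this
    have : G ≤ 0 := by simpa using this
    exact this.trans (by positivity)
  · set t := ‖s‖ with ht
    have k1 : G ≤ h ^ n * Cst M n n := by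
      have := key n n
      have hp : 0 < t ^ n := by positivity
      refine le_of_mul_le_mul_left ?_ hp
      linarith
    have k2 : t ^ 8 * G ≤ h ^ n * Cst M n (n - 8) := by
      have := key n (n - 8)
      have hp : 0 < t ^ (n - 8) := by positivity
      refine le_of_mul_le_mul_left ?_ hp
      have e : t ^ n = t ^ (n - 8) * t ^ 8 := by rw [← pow_add]; congr 1; omega
      rw [e] at this
      linarith
    have c1 : |(((i - j).1 : ℤ) : ℝ)| ≤ 1 + t := by
      have : |s.1| ≤ t := norm_fst_le s
      have h3 := abs_sub_abs_le_abs_sub (((i - j).1 : ℤ) : ℝ) s.1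
      rw [abs_sub_comm] at h3
      linarith
    have c2 : |(((i - j).2 : ℤ) : ℝ)| ≤ 1 + t := by
      have : |s.2| ≤ t := norm_snd_le s
      have h3 := abs_sub_abs_le_abs_sub (((i - j).2 : ℤ) : ℝ) s.2
      rw [abs_sub_comm] at h3
      linarith
    have w := weight_bound _ _ t h0.le c1 c2
    set W := (1 + (((i - j).1 : ℤ) : ℝ) ^ 2) * (1 + (((i - j).2 : ℤ) : ℝ) ^ 2) with hW
    have hWp : 0 < W := by positivity
    have hkW : kap (i - j) = 1 / W := by rw [kap, hW]; field_simp
    rw [hkW, div_pow, one_pow, mul_one_div, le_div_iff₀ (by positivity)]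
    calc G * W ^ 2 ≤ G * (648 * (1 + t ^ 8)) := by gcongr
      _ = 648 * (G + t ^ 8 * G) := by ring
      _ ≤ 648 * (h ^ n * Cst M n n + h ^ n * Cst M n (n - 8)) := by gcongr
      _ = _ := by rw [Dst]; ring

theorem Gcor_zero {f g : ℝ × ℝ → ℝ}
    (hfs : tsupport f ⊆ Set.Ioo (-(1/2) : ℝ) (1/2) ×ˢ Set.Ioo (-(1/2) : ℝ) (1/2))
    (hgs : tsupport g ⊆ Set.Ioo (-(1/2) : ℝ) (1/2) ×ˢ Set.Ioo (-(1/2) : ℝ) (1/2))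
    (i j : ℤ × ℤ) (h : ℝ) (s : ℝ × ℝ)
    (hs : ¬ (|s.1 - (i - j).1| < 1 ∧ |s.2 - (i - j).2| < 1)) :
    Gcor h (shiftSymbol f i) (shiftSymbol g j) s = 0 := by
  rw [Gcor]
  convert integral_zero (ℝ × ℝ) ℂ with z
  by_contra hne
  have h1 : shiftSymbol f i (z + s) ≠ 0 := fun h => hne (by simp [h])
  have h2 : shiftSymbol g j z ≠ 0 := fun h => hne (by simp [h])
  obtain ⟨⟨a1, a2⟩, ⟨a3, a4⟩⟩ := shift_tsupport hfs i (subset_tsupport _ h1)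
  obtain ⟨⟨b1, b2⟩, ⟨b3, b4⟩⟩ := shift_tsupport hgs j (subset_tsupport _ h2)
  simp only [Prod.fst_add, Prod.snd_add] at a1 a2 a3 a4
  apply hs
  simp only [Prod.fst_sub, Prod.snd_sub, Int.cast_sub]
  constructor <;> rw [abs_lt] <;> constructor <;> linarith

theorem site_prod {f g : ℝ × ℝ → ℝ} (hf : ContDiff ℝ (⊤ : ℕ∞) f) (hg : ContDiff ℝ (⊤ : ℕ∞) g)
    (hfc : HasCompactSupport f) (hgc : HasCompactSupport g)
    (hfs : tsupport f ⊆ Set.Ioo (-(1/2) : ℝ) (1/2) ×ˢ Set.Ioo (-(1/2) : ℝ) (1/2))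
    (hgs : tsupport g ⊆ Set.Ioo (-(1/2) : ℝ) (1/2) ×ˢ Set.Ioo (-(1/2) : ℝ) (1/2))
    {M : ℕ → ℝ} (hM : ∀ n, 0 < M n) (hMf : ∀ n x, ‖iteratedFDeriv ℝ n f x‖ ≤ M n)
    (hMg : ∀ n x, ‖iteratedFDeriv ℝ n g x‖ ≤ M n) {i j : ℤ × ℤ} (hij : i ≠ j) {h : ℝ} (hh : 0 < h) (hh1 : h < 1)
    {S T : L2R →L[ℂ] L2R} (hS : IsWeylQuant h (shiftSymbol f i) S) (hT : IsWeylQuant h (shiftSymbol g j) T)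
    (N : ℕ) : ‖S * T‖ ≤ ((4 * Dst M (2 * N + 8) + 1) * h ^ N * kap (i - j)) ^ 2 := by
  set n := 2 * N + 8 with hn
  have hD := Dst_nonneg hM n
  have hk := kap_pos (i - j)
  let Q : Set (ℝ × ℝ) := Set.Ioo (((i - j).1 : ℝ) - 1) ((i - j).1 + 1) ×ˢ Set.Ioo (((i - j).2 : ℝ) - 1) ((i - j).2 + 1)
  have hQm : MeasurableSet Q := measurableSet_Ioo.prod measurableSet_Ioo
  have hQv : volume Q ≤ 4 := by
    simp only [Q]
    rw [Measure.volume_eq_prod, Measure.prod_prod, Real.volume_Ioo, Real.volume_Ioo]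
    rw [← ENNReal.ofReal_mul (by linarith)]
    ring_nf
    simp
  have hQ : ∀ s ∉ Q, Gcor h (shiftSymbol f i) (shiftSymbol g j) s = 0 := by
    intro s hs
    refine Gcor_zero hfs hgs i j h s fun hs' => hs ?_
    obtain ⟨h1, h2⟩ := hs'
    rw [abs_lt] at h1 h2
    refine ⟨⟨?_, ?_⟩, ⟨?_, ?_⟩⟩ <;> linarith
  have hDb : ∀ s, ‖Gcor h (shiftSymbol f i) (shiftSymbol g j) s‖ ≤ Dst M n * h ^ n * kap (i - j) ^ 2 := by
    intro s
    by_cases hs : |s.1 - (i - j).1| < 1 ∧ |s.2 - (i - j).2| < 1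
    · exact Gcor_site hf hg hgc hfs hgs hM hMf hMg hij hh (by omega) s hs.1.le hs.2.le
    · rw [Gcor_zero hfs hgs i j h s hs, norm_zero]
      positivity
  refine (weyl_prod_norm hh (shift_contDiff hf i).continuous (shift_compact hfc i)
    (shift_contDiff hg j).continuous (shift_compact hgc j) hS hT hQm hQv hQ hDb).trans ?_
  have e1 : (1 / (π * h)) ^ 2 * h ^ n ≤ h ^ (2 * N) := by
    have hp : 1 ≤ π := by linarith [Real.pi_gt_three]
    have h1 : 1 / (π * h) ≤ 1 / h := by
      gcongr
      nlinarith
    calc (1 / (π * h)) ^ 2 * h ^ n ≤ (1 / h) ^ 2 * h ^ n := by gcongr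
      _ = h ^ (2 * N) * h ^ 6 := by rw [hn]; field_simp; ring
      _ ≤ h ^ (2 * N) * 1 := by gcongr; exact pow_le_one₀ hh.le hh1.le
      _ = _ := mul_one _
  have e2 : 4 * Dst M n ≤ (4 * Dst M n + 1) ^ 2 := by nlinarith
  calc _ = ((1 / (π * h)) ^ 2 * h ^ n) * (4 * Dst M n) * kap (i - j) ^ 2 := by ring
    _ ≤ h ^ (2 * N) * (4 * Dst M n + 1) ^ 2 * kap (i - j) ^ 2 := by gcongr
    _ = _ := by rw [pow_mul']; ring

/-- the small quantity -/
def etap (M : ℕ → ℝ) (h : ℝ) : ℝ := ⨅ N : ℕ, (4 * Dst M (2 * N + 8) + 1) * h ^ N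

theorem etap_bdd {M : ℕ → ℝ} (hM : ∀ n, 0 < M n) {h : ℝ} (hh : 0 < h) :
    BddBelow (Set.range fun N : ℕ => (4 * Dst M (2 * N + 8) + 1) * h ^ N) := by
  refine ⟨0, ?_⟩
  rintro _ ⟨N, rfl⟩
  have := Dst_nonneg hM (2 * N + 8)
  positivity

theorem etap_nonneg {M : ℕ → ℝ} (hM : ∀ n, 0 < M n) {h : ℝ} (hh : 0 < h) : 0 ≤ etap M h := by
  refine le_ciInf fun N => ?_
  have := Dst_nonneg hM (2 * N + 8)
  positivity

theorem etap_le {M : ℕ → ℝ} (hM : ∀ n, 0 < M n) {h : ℝ} (hh : 0 < h) (N : ℕ) :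
    etap M h ≤ (4 * Dst M (2 * N + 8) + 1) * h ^ N := ciInf_le (etap_bdd hM hh) N

theorem le_etap {M : ℕ → ℝ} (hM : ∀ n, 0 < M n) {h x k : ℝ} (hh : 0 < h) (hx : 0 ≤ x) (hk : 0 < k)
    (hb : ∀ N : ℕ, x ≤ ((4 * Dst M (2 * N + 8) + 1) * h ^ N * k) ^ 2) : x ≤ (etap M h * k) ^ 2 := by
  have h1 : √x / k ≤ etap M h := by
    refine le_ciInf fun N => ?_
    have := Dst_nonneg hM (2 * N + 8)
    rw [div_le_iff₀ hk]
    exact (Real.sqrt_le_left (by positivity)).2 (hb N)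
  rw [div_le_iff₀ hk] at h1
  calc x = √x ^ 2 := (Real.sq_sqrt hx).symm
    _ ≤ _ := by gcongr

/-- negligible -/
def Negl (g : ℝ → ℝ) : Prop := ∀ N : ℕ, ∃ C : ℝ, ∀ h : ℝ, 0 < h → h < 1 → g h ≤ C * h ^ N

/-- moderate -/
def Mode (g : ℝ → ℝ) : Prop := ∃ C : ℝ, ∃ p : ℕ, ∀ h : ℝ, 0 < h → h < 1 → 0 ≤ g h ∧ g h * h ^ p ≤ C

theorem Mode.add {g k : ℝ → ℝ} (hg : Mode g) (hk : Mode k) : Mode (fun h => g h + k h) := by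
  obtain ⟨C, p, hC⟩ := hg
  obtain ⟨D, q, hD⟩ := hk
  refine ⟨C + D, p + q, fun h h0 h1 => ?_⟩
  obtain ⟨a, b⟩ := hC h h0 h1
  obtain ⟨c, d⟩ := hD h h0 h1
  refine ⟨by positivity, ?_⟩
  have e1 : h ^ p ≤ 1 := pow_le_one₀ h0.le h1.le
  have e2 : h ^ q ≤ 1 := pow_le_one₀ h0.le h1.le
  have e3 : 0 ≤ g h * h ^ p := by positivity
  have e4 : 0 ≤ k h * h ^ q := by positivity
  calc _ = g h * h ^ p * h ^ q + k h * h ^ q * h ^ p := by ring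
    _ ≤ g h * h ^ p * 1 + k h * h ^ q * 1 := by gcongr
    _ ≤ _ := by linarith

theorem Mode.mul {g k : ℝ → ℝ} (hg : Mode g) (hk : Mode k) : Mode (fun h => g h * k h) := by
  obtain ⟨C, p, hC⟩ := hg
  obtain ⟨D, q, hD⟩ := hk
  refine ⟨C * D, p + q, fun h h0 h1 => ?_⟩
  obtain ⟨a, b⟩ := hC h h0 h1
  obtain ⟨c, d⟩ := hD h h0 h1
  refine ⟨by positivity, ?_⟩
  have e3 : 0 ≤ g h * h ^ p := by positivity
  have e4 : 0 ≤ k h * h ^ q := by positivity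
  calc _ = (g h * h ^ p) * (k h * h ^ q) := by ring
    _ ≤ C * D := by gcongr; linarith

theorem Mode.const {c : ℝ} (hc : 0 ≤ c) : Mode (fun _ => c) := ⟨c, 0, fun h _ _ => ⟨hc, by simp⟩⟩

theorem Mode.inv {c : ℝ} (hc : 0 ≤ c) : Mode (fun h => c / h) :=
  ⟨c, 1, fun h h0 _ => ⟨by positivity, by rw [pow_one, div_mul_cancel₀ _ h0.ne']⟩⟩

theorem Negl.mode {g : ℝ → ℝ} (hg : Negl g) (h0 : ∀ h, 0 < h → 0 ≤ g h) : Mode g := by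
  obtain ⟨C, hC⟩ := hg 0
  exact ⟨C, 0, fun h hh h1 => ⟨h0 h hh, by simpa using hC h hh h1⟩⟩

theorem Negl.mul_mode {g k : ℝ → ℝ} (hg : Negl g) (hk : Mode k) : Negl (fun h => g h * k h) := by
  intro N
  obtain ⟨D, p, hD⟩ := hk
  obtain ⟨C, hC⟩ := hg (N + p)
  refine ⟨|C| * D, fun h h0 h1 => ?_⟩
  obtain ⟨a, b⟩ := hD h h0 h1
  have e : g h ≤ |C| * h ^ (N + p) := (hC h h0 h1).trans (by gcongr; exact le_abs_self C)
  calc g h * k h ≤ |C| * h ^ (N + p) * k h := by gcongr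
    _ = |C| * h ^ N * (k h * h ^ p) := by ring
    _ ≤ |C| * h ^ N * D := by gcongr
    _ = _ := by ring

theorem Negl.add {g k : ℝ → ℝ} (hg : Negl g) (hk : Negl k) : Negl (fun h => g h + k h) := by
  intro N
  obtain ⟨C, hC⟩ := hg N
  obtain ⟨D, hD⟩ := hk N
  exact ⟨C + D, fun h h0 h1 => by linarith [hC h h0 h1, hD h h0 h1]⟩

theorem Negl.exp : Negl (fun h => Real.exp (-(1 / h))) := by
  intro N
  refine ⟨N.factorial, fun h h0 _ => ?_⟩
  have := Real.pow_div_factorial_le_exp (1 / h) (by positivity) N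
  beta_reduce
  rw [Real.exp_neg]
  have hf : (0 : ℝ) < N.factorial := by exact_mod_cast N.factorial_pos
  calc (Real.exp (1 / h))⁻¹ ≤ ((1 / h) ^ N / N.factorial)⁻¹ := by gcongr
    _ = _ := by rw [one_div, inv_pow]; field_simp

theorem Negl.real {g : ℝ → ℝ} (hg : Negl g) (N : ℝ) : ∃ C : ℝ, ∀ h : ℝ, 0 < h → h < 1 → g h ≤ C * h ^ N := by
  obtain ⟨C, hC⟩ := hg ⌈N⌉₊
  refine ⟨|C|, fun h h0 h1 => (hC h h0 h1).trans ?_⟩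
  have : h ^ ⌈N⌉₊ ≤ h ^ N := by
    rw [← Real.rpow_natCast]
    exact Real.rpow_le_rpow_of_exponent_ge h0 h1.le (Nat.le_ceil N)
  calc C * h ^ ⌈N⌉₊ ≤ |C| * h ^ ⌈N⌉₊ := by gcongr; exact le_abs_self C
    _ ≤ _ := by gcongr

/-- the off-diagonal row bound -/
def etaq (M : ℕ → ℝ) (h : ℝ) : ℝ := (etap M h + Real.exp (-(1 / h))) * ((∑' k, kap k) + 1)

theorem kap_tsum_nonneg : 0 ≤ ∑' k, kap k := tsum_nonneg fun k => (kap_pos k).le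

theorem etaq_pos {M : ℕ → ℝ} (hM : ∀ n, 0 < M n) {h : ℝ} (hh : 0 < h) : 0 < etaq M h := by
  have := etap_nonneg hM hh
  have := kap_tsum_nonneg
  unfold etaq
  positivity

theorem etaq_neg {M : ℕ → ℝ} (hM : ∀ n, 0 < M n) : Negl (etaq M) := by
  have h1 : Negl (etap M) := fun N => ⟨_, fun h h0 _ => etap_le hM h0 N⟩
  have := kap_tsum_nonneg
  exact (h1.add Negl.exp).mul_mode (Mode.const (c := (∑' k, kap k) + 1) (by positivity))

/-- the full row bound -/
def Kq (M : ℕ → ℝ) (h : ℝ) : ℝ := M 0 / h + etaq M h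

/-- the remainder function -/
def rq (b₀ : ℝ) (M : ℕ → ℝ) (h : ℝ) : ℝ :=
  etaq M h * ((4 / b₀) * (M 0 / h * Kq M h + 1) +
    (2 * (M 0 / h) + M 0 / h * (etaq M h * Kq M h * etaq M h) + etaq M h * Kq M h + 2) * ((8 / b₀ ^ 2) * Kq M h))

theorem Kq_pos {M : ℕ → ℝ} (hM : ∀ n, 0 < M n) {h : ℝ} (hh : 0 < h) : 0 < Kq M h := by
  have := hM 0
  have := etaq_pos hM hh
  unfold Kq
  positivity

theorem rq_pos {b₀ : ℝ} (hb : 0 < b₀) {M : ℕ → ℝ} (hM : ∀ n, 0 < M n) {h : ℝ} (hh : 0 < h) : 0 < rq b₀ M h := by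
  have := hM 0
  have := etaq_pos hM hh
  have := Kq_pos hM hh
  unfold rq
  positivity

theorem rq_neg {b₀ : ℝ} (hb : 0 < b₀) {M : ℕ → ℝ} (hM : ∀ n, 0 < M n) : Negl (rq b₀ M) := by
  have h1 := Mode.inv (hM 0).le
  have h2 : Mode (etaq M) := (etaq_neg hM).mode fun h hh => (etaq_pos hM hh).le
  have h3 : Mode (Kq M) := h1.add h2
  have c1 : Mode (fun _ => 4 / b₀) := Mode.const (by positivity)
  have c2 : Mode (fun _ => 8 / b₀ ^ 2) := Mode.const (by positivity)
  have c3 : Mode (fun _ => (2 : ℝ)) := Mode.const (by positivity)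
  have c4 : Mode (fun _ => (1 : ℝ)) := Mode.const (by positivity)
  exact (etaq_neg hM).mul_mode ((c1.mul ((h1.mul h3).add c4)).add
    (((((c3.mul h1).add (h1.mul ((h2.mul h3).mul h2))).add (h2.mul h3)).add c3).mul (c2.mul h3)))

theorem num_cond {b m2 η K : ℝ} (hb : 0 < b) (hm : 0 < m2) (hη : 0 < η) (hK : 0 < K) :
    2 * (m2 * (η * K * η)) / (η * ((4 / b) * (m2 * K + 1) +
      (2 * m2 + m2 * (η * K * η) + η * K + 2) * ((8 / b ^ 2) * K))) ^ 2 + η * K < b ^ 2 / 4 ∨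
    2 * m2 + m2 * (η * K * η) + η * K + 1 < η * ((4 / b) * (m2 * K + 1) +
      (2 * m2 + m2 * (η * K * η) + η * K + 2) * ((8 / b ^ 2) * K)) := by
  set X := 2 * m2 + m2 * (η * K * η) + η * K + 2 with hX
  have hX0 : 0 < X := by positivity
  set r := η * ((4 / b) * (m2 * K + 1) + X * ((8 / b ^ 2) * K)) with hr
  rcases lt_or_ge (η * K) (b ^ 2 / 8) with hs | hs
  · left
    have h1 : η * ((4 / b) * (m2 * K + 1)) ≤ r := by
      rw [hr]
      gcongr
      have : 0 < X * ((8 / b ^ 2) * K) := by positivity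
      linarith
    have h2 : (η * ((4 / b) * (m2 * K + 1))) ^ 2 ≤ r ^ 2 := by gcongr
    have h3 : 2 * (m2 * (η * K * η)) / r ^ 2 ≤ b ^ 2 / 8 := by
      have hrp : 0 < r := by positivity
      rw [div_le_iff₀ (by positivity)]
      calc 2 * (m2 * (η * K * η)) ≤ b ^ 2 / 8 * (η * ((4 / b) * (m2 * K + 1))) ^ 2 := by
            have : b ^ 2 / 8 * (η * ((4 / b) * (m2 * K + 1))) ^ 2 = 2 * η ^ 2 * (m2 * K + 1) ^ 2 := by
              field_simp; ring
            rw [this]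
            have h5 : m2 * K ≤ (m2 * K + 1) ^ 2 := by nlinarith [mul_pos hm hK]
            calc 2 * (m2 * (η * K * η)) = 2 * η ^ 2 * (m2 * K) := by ring
              _ ≤ _ := by gcongr
        _ ≤ _ := by gcongr
    linarith
  · right
    have h1 : 1 ≤ (8 / b ^ 2) * (η * K) := by
      calc (1 : ℝ) = (8 / b ^ 2) * (b ^ 2 / 8) := by field_simp
        _ ≤ _ := by gcongr
    have h2 : X * 1 ≤ X * ((8 / b ^ 2) * (η * K)) := by gcongr
    have h3 : r = η * ((4 / b) * (m2 * K + 1)) + X * ((8 / b ^ 2) * (η * K)) := by rw [hr]; ring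
    have h4 : 0 < η * ((4 / b) * (m2 * K + 1)) := by positivity
    linarith

end AssemblyPart

theorem weyl_sum_at_most_one_eigenvalue
    (b₀ : ℝ) (hb₀ : 0 < b₀) (M : ℕ → ℝ) (hM : ∀ N, 0 < M N) :
    ∃ r : ℝ → ℝ,
      (∀ h : ℝ, 0 < h → h < 1 → 0 ≤ r h) ∧
      (∀ N : ℝ, 0 < N → ∃ C : ℝ, ∀ h : ℝ, 0 < h → h < 1 → r h ≤ C * h ^ N) ∧
      ∀ (Λ : Finset (ℤ × ℤ)) (f : ℤ × ℤ → (ℝ × ℝ → ℝ)),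
        (∀ j ∈ Λ, ContDiff ℝ (⊤ : ℕ∞) (f j)) →
        (∀ j ∈ Λ, HasCompactSupport (f j)) →
        (∀ j ∈ Λ, tsupport (f j) ⊆
          Set.Ioo (-(1/2) : ℝ) (1/2) ×ˢ Set.Ioo (-(1/2) : ℝ) (1/2)) →
        (∀ j ∈ Λ, ∀ (n : ℕ) (x : ℝ × ℝ), ‖iteratedFDeriv ℝ n (f j) x‖ ≤ M n) →
        ∀ (μ₀ δ h : ℝ),
          b₀ ≤ μ₀ → 0 < δ → δ < b₀ / 2 → 0 < h → h < 1 →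
          ∀ T : ℤ × ℤ → (L2R →L[ℂ] L2R),
            (∀ j ∈ Λ, IsWeylQuant h (shiftSymbol (f j) j) (T j)) →
            ∀ jstar ∈ Λ,
              -- the spectra of the other site operators avoid the enlarged interval
              (∀ j ∈ Λ, j ≠ jstar →
                ∀ μ ∈ Set.Icc (μ₀ - (δ + r h)) (μ₀ + (δ + r h)),
                  (μ : ℂ) ∉ spectrum ℂ (T j)) →
              -- the exceptional site has at most one spectral point in the interval
              (∀ μ₁ ∈ Set.Icc (μ₀ - (δ + r h)) (μ₀ + (δ + r h)),
                ∀ μ₂ ∈ Set.Icc (μ₀ - (δ + r h)) (μ₀ + (δ + r h)),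
                  (μ₁ : ℂ) ∈ spectrum ℂ (T jstar) →
                  (μ₂ : ℂ) ∈ spectrum ℂ (T jstar) → μ₁ = μ₂) →
              -- and that spectral point is an eigenvalue of multiplicity one
              (∀ μ ∈ Set.Icc (μ₀ - (δ + r h)) (μ₀ + (δ + r h)),
                ∀ u v : L2R, T jstar u = (μ : ℂ) • u → T jstar v = (μ : ℂ) • v →
                  u ≠ 0 → v ≠ 0 → ⟪u, v⟫_ℂ = 0 → False) →
              -- conclusion: total eigenvalue multiplicity of A in [μ₀ ± δ] is ≤ 1
              ∀ μ₁ ∈ Set.Icc (μ₀ - δ) (μ₀ + δ), ∀ μ₂ ∈ Set.Icc (μ₀ - δ) (μ₀ + δ),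
                ∀ u v : L2R,
                  (∑ j ∈ Λ, T j) u = (μ₁ : ℂ) • u →
                  (∑ j ∈ Λ, T j) v = (μ₂ : ℂ) • v →
                  u ≠ 0 → v ≠ 0 → (μ₁ ≠ μ₂ ∨ ⟪u, v⟫_ℂ = 0) → False := by
  refine ⟨rq b₀ M, fun h hh _ => (rq_pos hb₀ hM hh).le, fun N _ => (rq_neg hb₀ hM).real N, ?_⟩
  intro Λ f hf hfc hfs hfM μ₀ δ h hμ₀ _ hδ hh hh1 T hT jstar hj h1 h2 h3 μ₁ hμ₁ μ₂ hμ₂ u v hu hv hu0 hv0 huv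
  have hM0 := hM 0
  have hηp := etaq_pos hM hh
  have hKp := Kq_pos hM hh
  have hηp0 := etap_nonneg hM hh
  have hm2 : √(M 0 / h) ^ 2 = M 0 / h := Real.sq_sqrt (by positivity)
  have hTn : ∀ i ∈ Λ, ‖T i‖ ≤ M 0 / h := by
    intro i hi
    have hb := weyl_norm hh (shift_contDiff (hf i hi) i).continuous (shift_compact (hfc i hi) i) (hT i hi)
      (Qs_meas i) (Qs_vol i)
      (fun z hz => image_eq_zero_of_notMem_tsupport fun hz' => hz (shift_tsupport (hfs i hi) i hz'))
      (C := M 0) (fun z => by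
        have := shift_bound (hfM i hi) i 0 z
        rwa [norm_iteratedFDeriv_zero, Real.norm_eq_abs] at this)
    refine hb.trans ?_
    rw [one_div_mul_eq_div]
    have : h ≤ π * h := by nlinarith [Real.pi_gt_three]
    gcongr
  let e : ℤ × ℤ → ℤ × ℤ → ℝ := fun i j =>
    if i = j then M 0 / h else (etap M h + Real.exp (-(1 / h))) * kap (i - j)
  have hrow : ∀ i ∈ Λ, ∑ j ∈ Λ.erase i, e i j ≤ etaq M h := by
    intro i _
    have e1 : ∑ j ∈ Λ.erase i, e i j = ∑ j ∈ Λ.erase i, (etap M h + Real.exp (-(1 / h))) * kap (i - j) := by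
      refine Finset.sum_congr rfl fun j hj => ?_
      simp only [e, if_neg (Finset.ne_of_mem_erase hj).symm]
    rw [e1, ← Finset.mul_sum, etaq]
    have := kap_sum (Λ.erase i) i
    gcongr
    linarith
  refine abstract_main Λ T
    (fun i hi => weyl_selfAdjoint hh (shift_contDiff (hf i hi) i).continuous (shift_compact (hfc i hi) i) (hT i hi))
    e ?_ ?_ ?_ (√(M 0 / h)) (etaq M h) (Kq M h) (Real.sqrt_nonneg _) hηp.le hKp.le ?_ hrow ?_
    b₀ μ₀ δ (rq b₀ M h) hb₀ hμ₀ hδ (rq_pos hb₀ hM hh) ?_ jstar hj h1 h2 h3 μ₁ hμ₁ μ₂ hμ₂ u v hu hv hu0 hv0 huv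
  · intro i j
    have := kap_pos (i - j)
    simp only [e]
    split_ifs <;> positivity
  · intro i j
    simp only [e]
    by_cases hij : i = j
    · simp [hij]
    · rw [if_neg hij, if_neg (Ne.symm hij), ← kap_neg, neg_sub]
  · intro i hi j hj
    by_cases hij : i = j
    · subst hij
      simp only [e, if_true]
      calc ‖T i * T i‖ ≤ ‖T i‖ * ‖T i‖ := norm_mul_le _ _
        _ ≤ (M 0 / h) * (M 0 / h) := by gcongr <;> exact hTn i hi
        _ = _ := by ring
    · simp only [e, if_neg hij]
      have hk := kap_pos (i - j)
      refine (le_etap hM hh (norm_nonneg (T i * T j)) hk fun N => site_prod (hf i hi) (hf j hj) (hfc i hi) (hfc j hj)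
        (hfs i hi) (hfs j hj) hM (hfM i hi) (hfM j hj) hij hh hh1 (hT i hi) (hT j hj) N).trans ?_
      have := Real.exp_pos (-(1 / h))
      gcongr
      linarith
  · intro i hi
    rw [hm2]
    exact hTn i hi
  · intro i hi
    rw [← Finset.add_sum_erase _ _ hi, Kq]
    have := hrow i hi
    have e2 : e i i = M 0 / h := by simp [e]
    linarith
  · rw [hm2]
    exact num_cond hb₀ (by positivity) hηp hKp
end
end
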